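/- Let Ω ⊆ ℝ² be a C² domain and let u ∈ C²(cl Ω) be non-constant with M[u] + H₀ = 0 in Ω for some constant H₀ ∈ ℝ, such that u and ⟨∇u, η⟩ are constant on each connected component of ∂Ω, and inf_Ω u > −∞. If ∂Ω is connected and there is a unit vector v ∈ ℝ² such that ⟨η, v⟩ does not change sign on ∂Ω (i.e. ⟨η, v⟩ ≥ 0 everywhere on ∂Ω or ⟨η, v⟩ ≤ 0 everywhere on ∂Ω), then H₀ = 0 and there exist a unit vector e ∈ ℝ², c ∈ ℝ, and α, β ∈ ℝ with α ≠ 0 such that Ω = {x ∈ ℝ² : ⟨x, e⟩ > c} and u(x) = α·⟨x, e⟩ + β for all x ∈ Ω; that is, Ω is a half-plane and the graph of u is a half-plane. -/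

import Mathlib

open MeasureTheory Set Metric Filter
open scoped RealInnerProductSpace Topology ENNReal

noncomputable section

variable {n : ℕ}

/-- The quasilinear operator matrix `A(p)` applied to a vector `v`:
`A(p)v = a(|p|) v + (a'(|p|)/|p|) ⟨p,v⟩ p` (with the second term vanishing at `p = 0`). -/
def Aop (a : ℝ → ℝ) (p v : EuclideanSpace ℝ (Fin n)) : EuclideanSpace ℝ (Fin n) :=
  a ‖p‖ • v + ((deriv a ‖p‖ / ‖p‖) * ⟪p, v⟫) • p

/-- `λ₁(t) = a(t) + t·a'(t) = (t a(t))'`. -/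
def lam1 (a : ℝ → ℝ) (t : ℝ) : ℝ := a t + t * deriv a t

/-- `λ₂(t) = a(t)`. -/
def lam2 (a : ℝ → ℝ) (t : ℝ) : ℝ := a t

/-- `λmax(t) = max{λ₁(t), λ₂(t)}`. -/
def lamMax (a : ℝ → ℝ) (t : ℝ) : ℝ := max (lam1 a t) (lam2 a t)

/-- A Lipschitz test function with compact support contained in `Ω`. -/
def IsTestOn (Ω : Set (EuclideanSpace ℝ (Fin n))) (φ : EuclideanSpace ℝ (Fin n) → ℝ) : Prop :=
  (∃ K, LipschitzWith K φ) ∧ HasCompactSupport φ ∧ tsupport φ ⊆ Ω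

/-- `u` is a weak solution of `div(a(|∇u|)∇u) + f(u) = 0` in `Ω`. -/
def IsWeakSolution (a f : ℝ → ℝ) (Ω : Set (EuclideanSpace ℝ (Fin n)))
    (u : EuclideanSpace ℝ (Fin n) → ℝ) : Prop :=
  ∀ φ : EuclideanSpace ℝ (Fin n) → ℝ, IsTestOn Ω φ →
    ∫ x in Ω, a ‖gradient u x‖ * ⟪gradient u x, gradient φ x⟫
      = ∫ x in Ω, f (u x) * φ x

/-- The stability inequality for a solution `u`. -/
def IsStable (a f : ℝ → ℝ) (Ω : Set (EuclideanSpace ℝ (Fin n)))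
    (u : EuclideanSpace ℝ (Fin n) → ℝ) : Prop :=
  ∀ φ : EuclideanSpace ℝ (Fin n) → ℝ, IsTestOn Ω φ →
    ∫ x in Ω, deriv f (u x) * φ x ^ 2
      ≤ ∫ x in Ω, ⟪Aop a (gradient u x) (gradient φ x), gradient φ x⟫

/-- `u` has moderate energy growth in `Ω₀`. -/
def ModerateEnergyGrowth (a : ℝ → ℝ) (u : EuclideanSpace ℝ (Fin n) → ℝ)
    (Ω₀ : Set (EuclideanSpace ℝ (Fin n))) : Prop :=
  ∃ φ : ℕ → EuclideanSpace ℝ (Fin n) → ℝ,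
    (∀ j, ∃ K, LipschitzWith K (φ j)) ∧
    (∀ j, HasCompactSupport (φ j)) ∧
    (∀ j x, 0 ≤ φ j x) ∧
    (∀ K : Set (EuclideanSpace ℝ (Fin n)), IsCompact K → K ⊆ closure Ω₀ →
      TendstoUniformlyOn (fun j => φ j) (fun _ => (1 : ℝ)) atTop K) ∧
    Tendsto (fun j => ∫ x in Ω₀, ‖gradient u x‖ ^ 2 *
        ⟪Aop a (gradient u x) (gradient (φ j) x), gradient (φ j) x⟫)
      atTop (nhds 0)

/-- A `C^k` domain: nonempty, open, connected, with boundary locally given by a regular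
`C^k` defining function. -/
def IsCkDomain (k : ℕ∞) (Ω : Set (EuclideanSpace ℝ (Fin n))) : Prop :=
  Ω.Nonempty ∧ IsOpen Ω ∧ IsConnected Ω ∧
    ∀ p ∈ frontier Ω, ∃ V : Set (EuclideanSpace ℝ (Fin n)),
      ∃ g : EuclideanSpace ℝ (Fin n) → ℝ,
        IsOpen V ∧ p ∈ V ∧ ContDiffOn ℝ k g V ∧ (∀ x ∈ V, gradient g x ≠ 0) ∧
        Ω ∩ V = {x ∈ V | g x < 0}

/-- A `C^k` domain together with its interior unit normal field `η`. -/
def IsCkDomainWithNormal (k : ℕ∞) (Ω : Set (EuclideanSpace ℝ (Fin n)))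
    (η : EuclideanSpace ℝ (Fin n) → EuclideanSpace ℝ (Fin n)) : Prop :=
  Ω.Nonempty ∧ IsOpen Ω ∧ IsConnected Ω ∧
    ∀ p ∈ frontier Ω, ∃ V : Set (EuclideanSpace ℝ (Fin n)),
      ∃ g : EuclideanSpace ℝ (Fin n) → ℝ,
        IsOpen V ∧ p ∈ V ∧ ContDiffOn ℝ k g V ∧ (∀ x ∈ V, gradient g x ≠ 0) ∧
        Ω ∩ V = {x ∈ V | g x < 0} ∧
        η p = -(‖gradient g p‖⁻¹ • gradient g p)

/-- `a ∈ C^{1,1}_loc([0,∞))`: `C¹` on `[0,∞)` with locally Lipschitz derivative. -/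
def C11Loc (a : ℝ → ℝ) : Prop :=
  ContDiffOn ℝ 1 a (Ici 0) ∧
    ∀ t ∈ Ici (0 : ℝ), ∃ V ∈ 𝓝[Ici (0 : ℝ)] t, ∃ K, LipschitzOnWith K (deriv a) V

/-- The mean curvature operator `M[u] = div(∇u/√(1+|∇u|²))`, written as the trace of the
derivative of the vector field `x ↦ (1+|∇u|²)^{-1/2} ∇u`. -/
def meanCurv (u : EuclideanSpace ℝ (Fin n) → ℝ) (x : EuclideanSpace ℝ (Fin n)) : ℝ :=
  ∑ i : Fin n,
    ⟪(fderiv ℝ (fun y => (Real.sqrt (1 + ‖gradient u y‖ ^ 2))⁻¹ • gradient u y) x)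
        (EuclideanSpace.single i (1 : ℝ)),
      EuclideanSpace.single i (1 : ℝ)⟫

/-! ### Part 1: integration by parts for compactly supported `C¹` functions -/

/-- partial derivative in the first variable -/
def dS (f : ℝ × ℝ → ℝ) (x : ℝ × ℝ) : ℝ := fderiv ℝ f x (1, 0)

/-- partial derivative in the second variable -/
def dT (f : ℝ × ℝ → ℝ) (x : ℝ × ℝ) : ℝ := fderiv ℝ f x (0, 1)

section IBP

variable {D K : Set (ℝ × ℝ)} {f g ψ : ℝ × ℝ → ℝ}

lemma ext_contDiff (hD : IsOpen D) (hK : IsCompact K) (hKD : K ⊆ D)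
    (hf : ContDiffOn ℝ 1 f D) (h0 : ∀ x ∈ D, x ∉ K → f x = 0) :
    ContDiff ℝ 1 (D.indicator f) := by
  rw [contDiff_iff_contDiffAt]
  intro x
  by_cases hx : x ∈ D
  · have h1 := hf.contDiffAt (hD.mem_nhds hx)
    refine h1.congr_of_eventuallyEq ?_
    filter_upwards [hD.mem_nhds hx] with y hy
    simp [hy]
  · have hxK : x ∈ Kᶜ := fun h => hx (hKD h)
    refine (contDiffAt_const (c := (0 : ℝ))).congr_of_eventuallyEq ?_
    filter_upwards [hK.isClosed.isOpen_compl.mem_nhds hxK] with y hy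
    by_cases hyD : y ∈ D
    · simp [hyD, h0 y hyD hy]
    · simp [hyD]

lemma ext_hcs (hK : IsCompact K) (h0 : ∀ x ∈ D, x ∉ K → f x = 0) :
    HasCompactSupport (D.indicator f) := by
  refine HasCompactSupport.intro hK fun x hx => ?_
  by_cases hyD : x ∈ D
  · simp [hyD, h0 x hyD hx]
  · simp [hyD]

lemma ext_fderiv (hD : IsOpen D) {x : ℝ × ℝ} (hx : x ∈ D) :
    fderiv ℝ (D.indicator f) x = fderiv ℝ f x := by
  apply Filter.EventuallyEq.fderiv_eq
  filter_upwards [hD.mem_nhds hx] with y hy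
  simp [hy]

lemma ext_fderiv_not (hK : IsCompact K) (hKD : K ⊆ D)
    (h0 : ∀ x ∈ D, x ∉ K → f x = 0) {x : ℝ × ℝ} (hx : x ∉ D) :
    fderiv ℝ (D.indicator f) x = 0 := by
  have hxK : x ∈ Kᶜ := fun h => hx (hKD h)
  have : D.indicator f =ᶠ[𝓝 x] fun _ => (0 : ℝ) := by
    filter_upwards [hK.isClosed.isOpen_compl.mem_nhds hxK] with y hy
    by_cases hyD : y ∈ D
    · simp [hyD, h0 y hyD hy]
    · simp [hyD]
  rw [this.fderiv_eq]; simp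

lemma cs_integrable {h : ℝ × ℝ → ℝ} (hD : IsOpen D) (hK : IsCompact K) (hKD : K ⊆ D)
    (hf : ContinuousOn h D) (h0 : ∀ x ∈ D, x ∉ K → h x = 0) : IntegrableOn h D := by
  have h1 : IntegrableOn h K := (hf.mono hKD).integrableOn_compact hK
  have h2 : IntegrableOn h (D \ K) := by
    refine IntegrableOn.congr_fun (f := fun _ => (0 : ℝ)) integrableOn_zero ?_
      (hD.measurableSet.diff hK.measurableSet)
    intro x hx
    exact (h0 x hx.1 hx.2).symm
  have := h1.union h2
  exact this.mono_set (fun x hx => by by_cases h : x ∈ K <;> simp [h, hx])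

lemma int_fderiv_zero_global (hf : ContDiff ℝ 1 f) (hc : HasCompactSupport f) (v : ℝ × ℝ) :
    ∫ x, fderiv ℝ f x v = 0 := by
  have c1 : Continuous fun x => fderiv ℝ f x v :=
    (hf.continuous_fderiv (by simp)).clm_apply continuous_const
  have i1 : Integrable fun x => fderiv ℝ f x v :=
    c1.integrable_of_hasCompactSupport (hc.fderiv_apply (𝕜 := ℝ) v)
  have i2 : Integrable f := hf.continuous.integrable_of_hasCompactSupport hc
  have := integral_mul_fderiv_eq_neg_fderiv_mul_of_integrable (μ := (volume : Measure (ℝ × ℝ)))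
    (f := fun _ => (1 : ℝ)) (g := f) (v := v) (by simp) (by simpa using i1) (by simpa using i2)
    (fun _ _ => differentiableAt_const _) (fun x _ => hf.differentiable (by simp) x)
  simpa using this

lemma int_fderiv_zero (hD : IsOpen D) (hK : IsCompact K) (hKD : K ⊆ D)
    (hf : ContDiffOn ℝ 1 f D) (h0 : ∀ x ∈ D, x ∉ K → f x = 0) (v : ℝ × ℝ) :
    ∫ x in D, fderiv ℝ f x v = 0 := by
  have h1 := int_fderiv_zero_global (ext_contDiff hD hK hKD hf h0) (ext_hcs hK h0) v
  have h2 : ∫ x in D, fderiv ℝ (D.indicator f) x v = ∫ x, fderiv ℝ (D.indicator f) x v := by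
    refine setIntegral_eq_integral_of_forall_compl_eq_zero fun x hx => ?_
    simp [ext_fderiv_not hK hKD h0 hx]
  rw [← h1, ← h2]
  · refine setIntegral_congr_fun hD.measurableSet ?_
    intro x hx
    simp [ext_fderiv hD hx]

lemma jac_zero_global (hf : ContDiff ℝ 1 f) (hfc : HasCompactSupport f)
    (hg : ContDiff ℝ 1 g) (hgc : HasCompactSupport g) :
    ∫ x, dS f x * dT g x = ∫ x, dS g x * dT f x := by
  obtain ⟨Cf, hCf⟩ := hf.lipschitzWith_of_hasCompactSupport hfc (by simp)
  obtain ⟨Cg, hCg⟩ := hg.lipschitzWith_of_hasCompactSupport hgc (by simp)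
  have cd : ∀ (h : ℝ × ℝ → ℝ) (_ : ContDiff ℝ 1 h) (v : ℝ × ℝ),
      Continuous fun x => fderiv ℝ h x v := fun h hh v =>
    (hh.continuous_fderiv (by simp)).clm_apply continuous_const
  have ii : ∀ (h : ℝ × ℝ → ℝ) (_ : ContDiff ℝ 1 h) (_ : HasCompactSupport h) (v : ℝ × ℝ),
      Integrable fun x => fderiv ℝ h x v := fun h hh hc v =>
    (cd h hh v).integrable_of_hasCompactSupport (hc.fderiv_apply (𝕜 := ℝ) v)
  have ld : ∀ (h : ℝ × ℝ → ℝ) (_ : ContDiff ℝ 1 h) (v x : ℝ × ℝ),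
      lineDeriv ℝ h x v = fderiv ℝ h x v := fun h hh v x =>
    ((hh.differentiable (by simp)) x).lineDeriv_eq_fderiv
  -- left side limit
  have L1 := hCg.integral_inv_smul_sub_mul_tendsto_integral_lineDeriv_mul
    (μ := (volume : Measure (ℝ × ℝ))) (ii f hf hfc (1, 0)) (0, 1)
  have L2 := hCf.integral_inv_smul_sub_mul_tendsto_integral_lineDeriv_mul
    (μ := (volume : Measure (ℝ × ℝ))) (ii g hg hgc (1, 0)) (-(0, 1))
  simp only [ld g hg, ld f hf] at L1 L2
  have key : ∀ t : ℝ, ∫ x, (t⁻¹ • (g (x + t • (0, 1)) - g x)) * fderiv ℝ f x (1, 0)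
      = -∫ x, (t⁻¹ • (f (x + t • (-(0, 1))) - f x)) * fderiv ℝ g x (1, 0) := by
    intro t
    set a : ℝ × ℝ := t • (0, 1) with ha
    have ha' : t • (-(0, 1) : ℝ × ℝ) = -a := by rw [ha, smul_neg]
    rw [ha']
    have hga : ContDiff ℝ 1 fun x => g (x + a) := by fun_prop
    have ibp : ∀ (h : ℝ × ℝ → ℝ) (hh : ContDiff ℝ 1 h),
        ∫ x, h x * fderiv ℝ f x (1, 0) = -∫ x, fderiv ℝ h x (1, 0) * f x := by
      intro h hh
      apply integral_mul_fderiv_eq_neg_fderiv_mul_of_integrable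
      · refine Continuous.integrable_of_hasCompactSupport ((cd h hh _).mul hf.continuous) ?_
        exact hfc.mul_left
      · refine Continuous.integrable_of_hasCompactSupport (hh.continuous.mul (cd f hf _)) ?_
        exact (hfc.fderiv_apply (𝕜 := ℝ) (1, 0)).mul_left
      · refine Continuous.integrable_of_hasCompactSupport (hh.continuous.mul hf.continuous) ?_
        exact hfc.mul_left
      · intro x _; exact hh.differentiable (by simp) x
      · intro x _; exact hf.differentiable (by simp) x
    have e1 := ibp _ hga
    have e2 := ibp g hg
    have hfd : ∀ x, fderiv ℝ (fun x => g (x + a)) x (1, 0) = fderiv ℝ g (x + a) (1, 0) := by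
      intro x; rw [fderiv_comp_add_right]
    simp only [hfd] at e1
    have e3 : ∫ x, fderiv ℝ g (x + a) (1, 0) * f x = ∫ x, fderiv ℝ g x (1, 0) * f (x - a) := by
      have := integral_add_right_eq_self (μ := (volume : Measure (ℝ × ℝ)))
        (fun x => fderiv ℝ g x (1, 0) * f (x - a)) a
      simpa using this
    have i1 : Integrable fun x => g (x + a) * fderiv ℝ f x (1, 0) := by
      refine Continuous.integrable_of_hasCompactSupport (hga.continuous.mul (cd f hf _)) ?_
      exact (hfc.fderiv_apply (𝕜 := ℝ) (1, 0)).mul_left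
    have i2 : Integrable fun x => g x * fderiv ℝ f x (1, 0) := by
      refine Continuous.integrable_of_hasCompactSupport (hg.continuous.mul (cd f hf _)) ?_
      exact (hfc.fderiv_apply (𝕜 := ℝ) (1, 0)).mul_left
    have hfa : Continuous fun x => f (x - a) := hf.continuous.comp (by fun_prop)
    have i3 : Integrable fun x => fderiv ℝ g x (1, 0) * f (x - a) := by
      refine Continuous.integrable_of_hasCompactSupport ((cd g hg _).mul hfa) ?_
      exact (hgc.fderiv_apply (𝕜 := ℝ) (1, 0)).mul_right
    have i4 : Integrable fun x => fderiv ℝ g x (1, 0) * f x := by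
      refine Continuous.integrable_of_hasCompactSupport ((cd g hg _).mul hf.continuous) ?_
      exact (hgc.fderiv_apply (𝕜 := ℝ) (1, 0)).mul_right
    have s1 : ∫ x, (t⁻¹ • (g (x + a) - g x)) * fderiv ℝ f x (1, 0)
        = t⁻¹ * ((∫ x, g (x + a) * fderiv ℝ f x (1, 0)) - ∫ x, g x * fderiv ℝ f x (1, 0)) := by
      rw [← integral_sub i1 i2, ← integral_const_mul]
      congr 1; ext x; simp only [smul_eq_mul]; ring
    have s2 : ∫ x, (t⁻¹ • (f (x + -a) - f x)) * fderiv ℝ g x (1, 0)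
        = t⁻¹ * ((∫ x, fderiv ℝ g x (1, 0) * f (x - a)) - ∫ x, fderiv ℝ g x (1, 0) * f x) := by
      rw [← integral_sub i3 i4, ← integral_const_mul]
      congr 1; ext x; simp only [smul_eq_mul, ← sub_eq_add_neg]; ring
    rw [s1, s2, e1, e2, e3]; ring
  have L1' : Tendsto (fun t : ℝ => ∫ x, (t⁻¹ • (g (x + t • (0, 1)) - g x)) * fderiv ℝ f x (1, 0))
      (𝓝[>] 0) (𝓝 (-∫ x, fderiv ℝ f x (-(0, 1)) * fderiv ℝ g x (1, 0))) := by
    simp only [key]; exact L2.neg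
  have := tendsto_nhds_unique L1 L1'
  simp only [dS, dT]
  simp only [map_neg, neg_mul, integral_neg, neg_neg] at this
  calc _ = ∫ x, fderiv ℝ g x (0, 1) * fderiv ℝ f x (1, 0) := by congr 1; ext x; ring
    _ = _ := this
    _ = _ := by congr 1; ext x; ring

/-- The integral of a Jacobian vanishes if one function has compact support. -/
lemma jac_zero (hD : IsOpen D) (hK : IsCompact K) (hKD : K ⊆ D)
    (hf : ContDiffOn ℝ 1 f D) (hψ : ContDiffOn ℝ 1 ψ D) (h0 : ∀ x ∈ D, x ∉ K → ψ x = 0) :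
    ∫ x in D, (dS f x * dT ψ x - dT f x * dS ψ x) = 0 := by
  obtain ⟨K', hK', hKK', hK'D⟩ := exists_compact_between hK hD hKD
  obtain ⟨χ, h1, h2, -⟩ := exists_contMDiffMap_one_nhds_of_subset_interior
    (modelWithCornersSelf ℝ (ℝ × ℝ)) (n := 1) hK.isClosed hKK'
  have hχ : ContDiff ℝ 1 χ := χ.contMDiff.contDiff
  set F : ℝ × ℝ → ℝ := fun x => χ x * f x with hF
  have hFc : ContDiffOn ℝ 1 F D := hχ.contDiffOn.mul hf
  have hF0 : ∀ x ∈ D, x ∉ K' → F x = 0 := fun x _ hx => by simp [hF, h2 x hx]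
  have cF := ext_contDiff hD hK' hK'D hFc hF0
  have sF := ext_hcs hK' hF0
  have cψ := ext_contDiff hD hK hKD hψ h0
  have sψ := ext_hcs hK h0
  have main := jac_zero_global cF sF cψ sψ
  have cd : ∀ (h : ℝ × ℝ → ℝ) (_ : ContDiff ℝ 1 h) (v : ℝ × ℝ),
      Continuous fun x => fderiv ℝ h x v := fun h hh v =>
    (hh.continuous_fderiv (by simp)).clm_apply continuous_const
  have i1 : Integrable fun x => dS (D.indicator F) x * dT (D.indicator ψ) x := by
    refine Continuous.integrable_of_hasCompactSupport ((cd _ cF _).mul (cd _ cψ _)) ?_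
    exact (sψ.fderiv_apply (𝕜 := ℝ) (0, 1)).mul_left
  have i2 : Integrable fun x => dS (D.indicator ψ) x * dT (D.indicator F) x := by
    refine Continuous.integrable_of_hasCompactSupport ((cd _ cψ _).mul (cd _ cF _)) ?_
    exact (sψ.fderiv_apply (𝕜 := ℝ) (1, 0)).mul_right
  have e0 : ∫ x, (dS (D.indicator F) x * dT (D.indicator ψ) x
      - dS (D.indicator ψ) x * dT (D.indicator F) x) = 0 := by
    rw [integral_sub i1 i2, main, sub_self]
  have e1 : ∫ x in D, (dS (D.indicator F) x * dT (D.indicator ψ) x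
      - dS (D.indicator ψ) x * dT (D.indicator F) x) = ∫ x, (dS (D.indicator F) x
      * dT (D.indicator ψ) x - dS (D.indicator ψ) x * dT (D.indicator F) x) := by
    refine setIntegral_eq_integral_of_forall_compl_eq_zero fun x hx => ?_
    simp [dS, dT, ext_fderiv_not hK hKD h0 hx]
  rw [← e0, ← e1]
  · refine setIntegral_congr_fun hD.measurableSet ?_
    intro x hx
    simp only [dS, dT, ext_fderiv hD hx]
    by_cases hxK : x ∈ K
    · have : F =ᶠ[𝓝 x] f := by
        have := (eventually_nhdsSet_iff_forall.1 h1) x hxK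
        filter_upwards [this] with y hy
        simp [hF, hy]
      rw [this.fderiv_eq]; ring
    · have : ψ =ᶠ[𝓝 x] fun _ => (0 : ℝ) := by
        filter_upwards [hK.isClosed.isOpen_compl.mem_nhds hxK, hD.mem_nhds hx] with y hy hyD
        exact h0 y hyD hy
      rw [this.fderiv_eq]; simp

end IBP

/-- Variant of `jac_zero` where outside `K` one of the functions vanishes locally. -/
lemma jac_zero' {D K : Set (ℝ × ℝ)} {f ψ : ℝ × ℝ → ℝ}
    (hD : IsOpen D) (hK : IsCompact K) (hKD : K ⊆ D)
    (hf : ContDiffOn ℝ 1 f D) (hψ : ContDiffOn ℝ 1 ψ D)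
    (h0 : ∀ x ∈ D, x ∉ K → f =ᶠ[𝓝 x] (fun _ => 0) ∨ ψ =ᶠ[𝓝 x] fun _ => 0) :
    ∫ x in D, (dS f x * dT ψ x - dT f x * dS ψ x) = 0 := by
  obtain ⟨K', hK', hKK', hK'D⟩ := exists_compact_between hK hD hKD
  obtain ⟨χ, h1, h2, -⟩ := exists_contMDiffMap_one_nhds_of_subset_interior
    (modelWithCornersSelf ℝ (ℝ × ℝ)) (n := 1) hK.isClosed hKK'
  have hχ : ContDiff ℝ 1 χ := χ.contMDiff.contDiff
  have hF0 : ∀ x ∈ D, x ∉ K' → χ x * ψ x = 0 := fun x _ hx => by simp [h2 x hx]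
  rw [← jac_zero hD hK' hK'D hf (hχ.contDiffOn.mul hψ) hF0]
  refine setIntegral_congr_fun hD.measurableSet ?_
  intro x hx
  simp only [dS, dT]
  by_cases hxK : x ∈ K
  · have : (fun x => χ x * ψ x) =ᶠ[𝓝 x] ψ := by
      have := (eventually_nhdsSet_iff_forall.1 h1) x hxK
      filter_upwards [this] with y hy
      simp [hy]
    rw [this.fderiv_eq]
  · rcases h0 x hx hxK with h | h
    · rw [h.fderiv_eq]; simp
    · have : (fun x => χ x * ψ x) =ᶠ[𝓝 x] fun _ => 0 := by
        filter_upwards [h] with y hy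
        simp [hy]
      rw [this.fderiv_eq, h.fderiv_eq]



/-! ### Part 2: the one-variable auxiliary function and cutoffs -/

/-- `C¹` regularization of the positive part -/
def spos (y : ℝ) : ℝ := if y ≤ 0 then 0 else y ^ 2 / (1 + y)

/-- derivative of `spos` -/
def spos' (y : ℝ) : ℝ := if y ≤ 0 then 0 else (y ^ 2 + 2 * y) / (1 + y) ^ 2

lemma spos_of_nonpos {y : ℝ} (h : y ≤ 0) : spos y = 0 := by simp [spos, h]
lemma spos'_of_nonpos {y : ℝ} (h : y ≤ 0) : spos' y = 0 := by simp [spos', h]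
lemma spos'_nonneg (y : ℝ) : 0 ≤ spos' y := by
  unfold spos'; split_ifs with h
  · rfl
  · push Not at h; positivity
lemma spos'_pos {y : ℝ} (h : 0 < y) : 0 < spos' y := by
  rw [spos', if_neg (not_le.2 h)]; positivity
lemma spos'_le_one (y : ℝ) : spos' y ≤ 1 := by
  unfold spos'; split_ifs with h
  · norm_num
  · push Not at h
    rw [div_le_one (by positivity)]; nlinarith
lemma spos_nonneg (y : ℝ) : 0 ≤ spos y := by
  unfold spos; split_ifs with h
  · rfl
  · push Not at h; positivity
lemma spos_le {y : ℝ} (h : 0 ≤ y) : spos y ≤ y := by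
  unfold spos; split_ifs with h'
  · exact h
  · push Not at h'
    rw [div_le_iff₀ (by positivity)]; nlinarith
lemma spos_sq_le (y : ℝ) : spos y ^ 2 ≤ y ^ 2 * spos' y := by
  unfold spos spos'; split_ifs with h
  · simp
  · push Not at h
    rw [div_pow, ← mul_div_assoc]
    gcongr
    nlinarith [pow_pos h 3]

lemma hasDerivAt_spos (y : ℝ) : HasDerivAt spos (spos' y) y := by
  rcases lt_trichotomy y 0 with h | h | h
  · rw [spos'_of_nonpos h.le]
    refine (hasDerivAt_const y (0 : ℝ)).congr_of_eventuallyEq ?_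
    filter_upwards [Iio_mem_nhds h] with z hz
    exact spos_of_nonpos (le_of_lt hz)
  · subst h
    rw [spos'_of_nonpos le_rfl, hasDerivAt_iff_isLittleO]
    simp only [spos_of_nonpos le_rfl, sub_zero, smul_zero]
    have : spos =O[𝓝 0] fun y : ℝ => y ^ 2 := by
      refine Asymptotics.IsBigO.of_bound 1 (Eventually.of_forall fun y => ?_)
      rw [Real.norm_eq_abs, Real.norm_eq_abs, abs_of_nonneg (spos_nonneg y),
        abs_of_nonneg (sq_nonneg y), one_mul]
      unfold spos; split_ifs with h'
      · positivity
      · push Not at h'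
        rw [div_le_iff₀ (by positivity)]; nlinarith [pow_pos h' 3]
    refine this.trans_isLittleO ?_
    simpa using (Asymptotics.isLittleO_pow_id (𝕜 := ℝ) (n := 2) (by norm_num))
  · have : HasDerivAt (fun y : ℝ => y ^ 2 / (1 + y))
        ((2 * y * (1 + y) - y ^ 2 * 1) / (1 + y) ^ 2) y := by
      have := (hasDerivAt_pow 2 y).fun_div ((hasDerivAt_id y).const_add 1) (by simp; positivity)
      simpa using this
    have h2 : spos' y = (2 * y * (1 + y) - y ^ 2 * 1) / (1 + y) ^ 2 := by
      rw [spos', if_neg (not_le.2 h)]; congr 1; ring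
    rw [h2]
    refine this.congr_of_eventuallyEq ?_
    filter_upwards [Ioi_mem_nhds h] with z hz
    rw [spos, if_neg (not_le.2 hz)]

lemma continuous_spos' : Continuous spos' := by
  have : spos' = fun y => (max y 0 ^ 2 + 2 * max y 0) / (1 + max y 0) ^ 2 := by
    ext y; unfold spos'; split_ifs with h
    · rw [max_eq_right h]; simp
    · rw [max_eq_left (le_of_not_ge h)]
  rw [this]
  refine Continuous.div (by fun_prop) (by fun_prop) fun y => ?_
  have := le_max_right y 0
  positivity

lemma deriv_spos : deriv spos = spos' := funext fun y => (hasDerivAt_spos y).deriv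

lemma contDiff_spos : ContDiff ℝ 1 spos := by
  rw [contDiff_one_iff_deriv]
  exact ⟨fun y => (hasDerivAt_spos y).differentiableAt, deriv_spos ▸ continuous_spos'⟩

/-- smooth transition derivative bound -/
lemma exists_smT_bound : ∃ M : ℝ, 0 < M ∧ ∀ y, |deriv Real.smoothTransition y| ≤ M := by
  have hc : Continuous (deriv Real.smoothTransition) :=
    (Real.smoothTransition.contDiff (n := 1)).continuous_deriv (by simp)
  obtain ⟨M, hM⟩ := (isCompact_Icc (a := (0 : ℝ)) (b := 1)).exists_bound_of_continuousOn
    hc.continuousOn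
  refine ⟨max M 1, by positivity, fun y => ?_⟩
  by_cases hy : y ∈ Icc (0 : ℝ) 1
  · exact (hM y hy).trans (le_max_left _ _)
  · have : deriv Real.smoothTransition y = 0 := by
      by_cases h0 : 0 ≤ y
      · have h1 : 1 < y := by by_contra h; exact hy ⟨h0, not_lt.1 h⟩
        have : Real.smoothTransition =ᶠ[𝓝 y] fun _ => 1 := by
          filter_upwards [Ioi_mem_nhds h1] with z hz
          exact Real.smoothTransition.one_of_one_le (le_of_lt hz)
        rw [this.deriv_eq]; simp
      · push Not at h0
        have : Real.smoothTransition =ᶠ[𝓝 y] fun _ => 0 := by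
          filter_upwards [Iio_mem_nhds h0] with z hz
          exact Real.smoothTransition.zero_of_nonpos (le_of_lt hz)
        rw [this.deriv_eq]; simp
    rw [this]; simp

lemma smT_deriv_zero {y : ℝ} (hy : y < 0 ∨ 1 < y) : deriv Real.smoothTransition y = 0 := by
  rcases hy with h0 | h1
  · have : Real.smoothTransition =ᶠ[𝓝 y] fun _ => 0 := by
      filter_upwards [Iio_mem_nhds h0] with z hz
      exact Real.smoothTransition.zero_of_nonpos (le_of_lt hz)
    rw [this.deriv_eq]; simp
  · have : Real.smoothTransition =ᶠ[𝓝 y] fun _ => 1 := by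
      filter_upwards [Ioi_mem_nhds h1] with z hz
      exact Real.smoothTransition.one_of_one_le (le_of_lt hz)
    rw [this.deriv_eq]; simp

/-- planar bump -/
def bmp (c : ℝ × ℝ) (r : ℝ) (x : ℝ × ℝ) : ℝ :=
  Real.smoothTransition (2 - ((x.1 - c.1) ^ 2 + (x.2 - c.2) ^ 2) / r ^ 2)

lemma bmp_contDiff (c : ℝ × ℝ) (r : ℝ) : ContDiff ℝ 1 (bmp c r) := by
  unfold bmp
  exact Real.smoothTransition.contDiff.comp (by fun_prop)

lemma bmp_nonneg (c : ℝ × ℝ) (r : ℝ) (x) : 0 ≤ bmp c r x := Real.smoothTransition.nonneg _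
lemma bmp_le_one (c : ℝ × ℝ) (r : ℝ) (x) : bmp c r x ≤ 1 := Real.smoothTransition.le_one _

lemma bmp_one {c : ℝ × ℝ} {r : ℝ} (hr : 0 < r) {x : ℝ × ℝ}
    (h : (x.1 - c.1) ^ 2 + (x.2 - c.2) ^ 2 ≤ r ^ 2) : bmp c r x = 1 := by
  apply Real.smoothTransition.one_of_one_le
  have : ((x.1 - c.1) ^ 2 + (x.2 - c.2) ^ 2) / r ^ 2 ≤ 1 := by rw [div_le_one (by positivity)]; exact h
  linarith

lemma bmp_zero {c : ℝ × ℝ} {r : ℝ} (hr : 0 < r) {x : ℝ × ℝ}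
    (h : 2 * r ^ 2 ≤ (x.1 - c.1) ^ 2 + (x.2 - c.2) ^ 2) : bmp c r x = 0 := by
  apply Real.smoothTransition.zero_of_nonpos
  have : 2 ≤ ((x.1 - c.1) ^ 2 + (x.2 - c.2) ^ 2) / r ^ 2 := by
    rw [le_div_iff₀ (by positivity)]; exact h
  linarith

lemma bmp_fderiv (c : ℝ × ℝ) (r : ℝ) (x e : ℝ × ℝ) : fderiv ℝ (bmp c r) x e =
    deriv Real.smoothTransition (2 - ((x.1 - c.1) ^ 2 + (x.2 - c.2) ^ 2) / r ^ 2) *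
      (-(2 * ((x.1 - c.1) * e.1 + (x.2 - c.2) * e.2) / r ^ 2)) := by
  have h1 : HasFDerivAt (fun x : ℝ × ℝ => x.1) (ContinuousLinearMap.fst ℝ ℝ ℝ) x :=
    hasFDerivAt_fst
  have h2 : HasFDerivAt (fun x : ℝ × ℝ => x.2) (ContinuousLinearMap.snd ℝ ℝ ℝ) x :=
    hasFDerivAt_snd
  have h3 := (((h1.sub_const c.1).pow 2).fun_add ((h2.sub_const c.2).pow 2)).mul_const ((r ^ 2)⁻¹)
  have h4 := h3.const_sub 2
  have h5 := ((Real.smoothTransition.contDiff (n := 1)).differentiable (by simp)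
    (2 - ((x.1 - c.1) ^ 2 + (x.2 - c.2) ^ 2) * (r ^ 2)⁻¹)).hasDerivAt
  have h6 := (h5.comp_hasFDerivAt x h4).fderiv
  have : bmp c r = (Real.smoothTransition ∘ fun x =>
    2 - ((x.1 - c.1) ^ 2 + (x.2 - c.2) ^ 2) * (r ^ 2)⁻¹) := by
    ext y; simp [bmp, div_eq_mul_inv]
  rw [this, h6]
  simp [div_eq_mul_inv]
  ring

lemma exists_bmp_bound : ∃ M : ℝ, 0 < M ∧ ∀ (c : ℝ × ℝ) (r : ℝ), 0 < r → ∀ x,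
    |dS (bmp c r) x| ≤ M / r ∧ |dT (bmp c r) x| ≤ M / r := by
  obtain ⟨M, hM, h⟩ := exists_smT_bound
  refine ⟨M * 4, by positivity, fun c r hr x => ?_⟩
  have key : ∀ a b : ℝ, |deriv Real.smoothTransition (2 - (a ^ 2 + b ^ 2) / r ^ 2) *
      (-(2 * a / r ^ 2))| ≤ M * 4 / r := by
    intro a b
    by_cases hab : 2 * r ^ 2 < a ^ 2 + b ^ 2
    · rw [smT_deriv_zero]
      · simp; positivity
      · left
        have : 2 < (a ^ 2 + b ^ 2) / r ^ 2 := by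
          rw [lt_div_iff₀ (by positivity)]; exact hab
        linarith
    · push Not at hab
      have ha : |a| ≤ 2 * r := abs_le_of_sq_le_sq (by nlinarith [sq_nonneg b]) (by positivity)
      rw [abs_mul, abs_neg, abs_div, abs_mul, abs_of_pos (by positivity : (0 : ℝ) < r ^ 2)]
      calc _ ≤ M * (|2| * (2 * r) / r ^ 2) := by gcongr; exact h _
        _ = _ := by rw [abs_of_pos (by norm_num : (0:ℝ) < 2)]; field_simp; ring
  constructor
  · have := key (x.1 - c.1) (x.2 - c.2)
    rw [dS, bmp_fderiv]; simpa using this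
  · have := key (x.2 - c.2) (x.1 - c.1)
    rw [dT, bmp_fderiv, add_comm ((x.1 - c.1) ^ 2)]; simpa using this



/-! ### Part 3: the core data in coordinates -/

/-- the area element -/
def Wf (p q : ℝ × ℝ → ℝ) (x : ℝ × ℝ) : ℝ := √(1 + p x ^ 2 + q x ^ 2)

/-- squared distance to the origin in the graph -/
def rho2 (u : ℝ × ℝ → ℝ) (x : ℝ × ℝ) : ℝ := x.1 ^ 2 + x.2 ^ 2 + u x ^ 2

/-- quadratic form -/
def Qf (P Q a b c d : ℝ) : ℝ :=
  ((1 + Q ^ 2) * (a * c) - P * Q * (a * d + b * c) + (1 + P ^ 2) * (b * d)) /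
    √(1 + P ^ 2 + Q ^ 2) ^ 3

lemma Wf_pos (p q : ℝ × ℝ → ℝ) (x : ℝ × ℝ) : 0 < Wf p q x := by unfold Wf; positivity
lemma Wf_sq (p q : ℝ × ℝ → ℝ) (x : ℝ × ℝ) : Wf p q x ^ 2 = 1 + p x ^ 2 + q x ^ 2 :=
  Real.sq_sqrt (by positivity)
lemma one_le_Wf (p q : ℝ × ℝ → ℝ) (x : ℝ × ℝ) : 1 ≤ Wf p q x := by
  have := Wf_sq p q x
  nlinarith [Wf_pos p q x, sq_nonneg (p x), sq_nonneg (q x)]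

lemma Qf_nonneg (P Q a b : ℝ) : 0 ≤ Qf P Q a b a b := by
  unfold Qf
  apply div_nonneg _ (by positivity)
  nlinarith [sq_nonneg (Q * a - P * b), sq_nonneg a, sq_nonneg b]

lemma Qf_zero {P Q a b : ℝ} (h : Qf P Q a b a b = 0) : a = 0 ∧ b = 0 := by
  unfold Qf at h
  have hw : √(1 + P ^ 2 + Q ^ 2) ^ 3 ≠ 0 := by positivity
  rw [div_eq_zero_iff] at h
  rcases h with h | h
  · have h1 : a ^ 2 + b ^ 2 + (Q * a - P * b) ^ 2 = 0 := by nlinarith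
    constructor <;> nlinarith [sq_nonneg (Q * a - P * b), sq_nonneg a, sq_nonneg b]
  · exact absurd h hw

lemma Qf_cs (P Q a b c d : ℝ) :
    Qf P Q a b c d ^ 2 ≤ Qf P Q a b a b * Qf P Q c d c d := by
  unfold Qf
  rw [div_pow, div_mul_div_comm, ← sq (√(1 + P ^ 2 + Q ^ 2) ^ 3)]
  apply div_le_div_of_nonneg_right _ (by positivity)
  have : ((1 + Q ^ 2) * (a * a) - P * Q * (a * b + b * a) + (1 + P ^ 2) * (b * b)) *
      ((1 + Q ^ 2) * (c * c) - P * Q * (c * d + d * c) + (1 + P ^ 2) * (d * d)) -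
      ((1 + Q ^ 2) * (a * c) - P * Q * (a * d + b * c) + (1 + P ^ 2) * (b * d)) ^ 2
      = (1 + P ^ 2 + Q ^ 2) * (a * d - b * c) ^ 2 := by ring
  have h2 : 0 ≤ (1 + P ^ 2 + Q ^ 2) * (a * d - b * c) ^ 2 := by positivity
  linarith

/-- Form of the cutoff gradient -/
lemma Qf_rho (P Q s t u k : ℝ) :
    Qf P Q (k * (2 * (s + u * P))) (k * (2 * (t + u * Q))) (k * (2 * (s + u * P)))
      (k * (2 * (t + u * Q))) ≤ 4 * k ^ 2 * (s ^ 2 + t ^ 2 + u ^ 2) / √(1 + P ^ 2 + Q ^ 2) := by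
  unfold Qf
  have hw : 0 < √(1 + P ^ 2 + Q ^ 2) := by positivity
  have hw2 : √(1 + P ^ 2 + Q ^ 2) ^ 2 = 1 + P ^ 2 + Q ^ 2 := Real.sq_sqrt (by positivity)
  rw [div_le_div_iff₀ (by positivity) hw]
  set w := √(1 + P ^ 2 + Q ^ 2)
  rw [show 4 * k ^ 2 * (s ^ 2 + t ^ 2 + u ^ 2) * w ^ 3 =
    (4 * k ^ 2 * (s ^ 2 + t ^ 2 + u ^ 2) * w ^ 2) * w by ring, hw2]
  gcongr
  have : 0 ≤ 4 * k ^ 2 * (s * P + t * Q - u) ^ 2 := by positivity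
  linarith

/-- Core data. -/
structure Core (D : Set (ℝ × ℝ)) (u p q : ℝ × ℝ → ℝ) (H : ℝ) : Prop where
  isOpen : IsOpen D
  conn : IsConnected D
  hu : ContinuousOn u (closure D)
  hp : ContinuousOn p (closure D)
  hq : ContinuousOn q (closure D)
  hud : ∀ x ∈ D, HasFDerivAt u
    (p x • ContinuousLinearMap.fst ℝ ℝ ℝ + q x • ContinuousLinearMap.snd ℝ ℝ ℝ) x
  hp1 : ContDiffOn ℝ 1 p D
  hq1 : ContDiffOn ℝ 1 q D
  cross : ∀ x ∈ D, dT p x = dS q x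
  eq : ∀ x ∈ D, dS (fun y => p y / Wf p q y) x + dT (fun y => q y / Wf p q y) x = -H
  bd : ∀ x ∈ frontier D, u x = 0
  bdc : IsConnected (frontier D)
  bdg : ∃ k, ∀ x ∈ frontier D, p x ^ 2 + q x ^ 2 = k
  up : ∀ x ∈ D, ∀ t : ℝ, 0 ≤ t → x + (0, t) ∈ D

section deriv

variable {p q : ℝ × ℝ → ℝ} {x : ℝ × ℝ}

lemma hasFDerivAt_Wf {p' q' : ℝ × ℝ →L[ℝ] ℝ} (hp : HasFDerivAt p p' x)
    (hq : HasFDerivAt q q' x) :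
    HasFDerivAt (Wf p q) ((Wf p q x)⁻¹ • (p x • p' + q x • q')) x := by
  have h := (((hp.pow 2).const_add 1).fun_add (hq.pow 2)).sqrt (by positivity)
  refine h.congr_fderiv ?_
  ext <;> simp [Wf] <;> field_simp

lemma hasFDerivAt_div {f g : ℝ × ℝ → ℝ} {f' g' : ℝ × ℝ →L[ℝ] ℝ} (hf : HasFDerivAt f f' x)
    (hg : HasFDerivAt g g' x) (h0 : g x ≠ 0) :
    HasFDerivAt (fun y => f y / g y) ((g x)⁻¹ • f' - (f x / g x ^ 2) • g') x := by
  have h1 := (hasDerivAt_inv h0).comp_hasFDerivAt x hg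
  have h2 := hf.fun_mul h1
  refine h2.congr_fderiv ?_
  ext <;> simp <;> field_simp <;> ring

lemma fderiv_F1 {p' q' : ℝ × ℝ →L[ℝ] ℝ} (hp : HasFDerivAt p p' x)
    (hq : HasFDerivAt q q' x) (e : ℝ × ℝ) :
    fderiv ℝ (fun y => p y / Wf p q y) x e =
      ((1 + q x ^ 2) * p' e - p x * q x * q' e) / Wf p q x ^ 3 := by
  have hw := Wf_pos p q x
  rw [(hasFDerivAt_div hp (hasFDerivAt_Wf hp hq) hw.ne').fderiv]
  simp only [sub_apply, smul_apply,
    add_apply, smul_eq_mul]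
  field_simp
  rw [Wf_sq]; ring

lemma fderiv_F2 {p' q' : ℝ × ℝ →L[ℝ] ℝ} (hp : HasFDerivAt p p' x)
    (hq : HasFDerivAt q q' x) (e : ℝ × ℝ) :
    fderiv ℝ (fun y => q y / Wf p q y) x e =
      ((1 + p x ^ 2) * q' e - p x * q x * p' e) / Wf p q x ^ 3 := by
  have hw := Wf_pos p q x
  rw [(hasFDerivAt_div hq (hasFDerivAt_Wf hp hq) hw.ne').fderiv]
  simp only [sub_apply, smul_apply,
    add_apply, smul_eq_mul]
  field_simp
  rw [Wf_sq]; ring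

lemma hasFDerivAt_invW {p' q' : ℝ × ℝ →L[ℝ] ℝ} (hp : HasFDerivAt p p' x)
    (hq : HasFDerivAt q q' x) :
    HasFDerivAt (fun y => 1 / Wf p q y)
      (-((Wf p q x ^ 3)⁻¹ • (p x • p' + q x • q'))) x := by
  have hw := Wf_pos p q x
  refine (hasFDerivAt_div (hasFDerivAt_const (1 : ℝ) x) (hasFDerivAt_Wf hp hq)
    hw.ne').congr_fderiv ?_
  ext <;> simp <;> field_simp

lemma contDiffOn_Wf {D : Set (ℝ × ℝ)} (hp : ContDiffOn ℝ 1 p D) (hq : ContDiffOn ℝ 1 q D) :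
    ContDiffOn ℝ 1 (Wf p q) D := by
  unfold Wf
  refine ContDiffOn.sqrt ((contDiffOn_const.add (hp.pow 2)).add (hq.pow 2)) ?_
  intro y _; positivity

lemma continuousOn_Wf {D : Set (ℝ × ℝ)} (hp : ContinuousOn p D) (hq : ContinuousOn q D) :
    ContinuousOn (Wf p q) D := by
  unfold Wf; fun_prop

end deriv

namespace Core

variable {D : Set (ℝ × ℝ)} {u p q : ℝ × ℝ → ℝ} {H : ℝ}

lemma contDiffOn_fderiv_apply {f : ℝ × ℝ → ℝ} {D : Set (ℝ × ℝ)} (hD : IsOpen D)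
    (hf : ContDiffOn ℝ 1 f D) (e : ℝ × ℝ) : ContinuousOn (fun x => fderiv ℝ f x e) D :=
  (hf.continuousOn_fderiv_of_isOpen hD (by simp)).clm_apply continuousOn_const

lemma pd (C : Core D u p q H) {x} (hx : x ∈ D) : HasFDerivAt p (fderiv ℝ p x) x :=
  ((C.hp1.differentiableOn (by simp)).differentiableAt (C.isOpen.mem_nhds hx)).hasFDerivAt

lemma qd (C : Core D u p q H) {x} (hx : x ∈ D) : HasFDerivAt q (fderiv ℝ q x) x :=
  ((C.hq1.differentiableOn (by simp)).differentiableAt (C.isOpen.mem_nhds hx)).hasFDerivAt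

lemma hu1 (C : Core D u p q H) : ContDiffOn ℝ 1 u D := by
  rw [show (1 : WithTop ℕ∞) = 0 + 1 by simp, contDiffOn_succ_iff_fderiv_of_isOpen C.isOpen]
  refine ⟨fun x hx => (C.hud x hx).differentiableAt.differentiableWithinAt, by simp, ?_⟩
  rw [contDiffOn_zero]
  have : ContinuousOn (fun x => p x • ContinuousLinearMap.fst ℝ ℝ ℝ
      + q x • ContinuousLinearMap.snd ℝ ℝ ℝ) D :=
    ((C.hp.mono subset_closure).smul continuousOn_const).add
      ((C.hq.mono subset_closure).smul continuousOn_const)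
  exact this.congr fun x hx => (C.hud x hx).fderiv

lemma F1d (C : Core D u p q H) : ContDiffOn ℝ 1 (fun y => p y / Wf p q y) D :=
  C.hp1.div (contDiffOn_Wf C.hp1 C.hq1) fun x _ => (Wf_pos p q x).ne'

lemma F2d (C : Core D u p q H) : ContDiffOn ℝ 1 (fun y => q y / Wf p q y) D :=
  C.hq1.div (contDiffOn_Wf C.hp1 C.hq1) fun x _ => (Wf_pos p q x).ne'

/-- pointwise equation -/
lemma eq' (C : Core D u p q H) {x} (hx : x ∈ D) : (1 + q x ^ 2) * dS p x - 2 * (p x * q x * dT p x)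
    + (1 + p x ^ 2) * dT q x = -H * Wf p q x ^ 3 := by
  have h := C.eq x hx
  have hc := C.cross x hx
  rw [dS, dT, fderiv_F1 (C.pd hx) (C.qd hx), fderiv_F2 (C.pd hx) (C.qd hx), ← add_div,
    div_eq_iff (by have := Wf_pos p q x; positivity)] at h
  unfold dS dT at *
  rw [hc] at h ⊢
  linarith

/-- testing the equation -/
lemma weak (C : Core D u p q H) {K : Set (ℝ × ℝ)} {ψ : ℝ × ℝ → ℝ} (hK : IsCompact K) (hKD : K ⊆ D)
    (hψ : ContDiffOn ℝ 1 ψ D) (h0 : ∀ x ∈ D, x ∉ K → ψ x = 0) :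
    ∫ x in D, (p x / Wf p q x * dS ψ x + q x / Wf p q x * dT ψ x - H * ψ x) = 0 := by
  have a1 := int_fderiv_zero C.isOpen hK hKD (C.F1d.mul hψ) (fun x hx hxK => by
    simp [h0 x hx hxK]) (1, 0)
  have a2 := int_fderiv_zero C.isOpen hK hKD (C.F2d.mul hψ) (fun x hx hxK => by
    simp [h0 x hx hxK]) (0, 1)
  have hz : ∀ {f : ℝ × ℝ → ℝ} (e : ℝ × ℝ), (∀ x ∈ D, x ∉ K → f x = 0) →
      ∀ x ∈ D, x ∉ K → fderiv ℝ f x e = 0 := by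
    intro f e hf x hx hxK
    have : f =ᶠ[𝓝 x] fun _ => (0 : ℝ) := by
      filter_upwards [hK.isClosed.isOpen_compl.mem_nhds hxK, C.isOpen.mem_nhds hx] with y hy hyD
      exact hf y hyD hy
    rw [this.fderiv_eq]; simp
  have i1 : IntegrableOn (fun x => fderiv ℝ (fun x => p x / Wf p q x * ψ x) x (1, 0)) D :=
    cs_integrable C.isOpen hK hKD (contDiffOn_fderiv_apply C.isOpen (C.F1d.mul hψ) _)
      (hz _ fun x hx hxK => by simp [h0 x hx hxK])
  have i2 : IntegrableOn (fun x => fderiv ℝ (fun x => q x / Wf p q x * ψ x) x (0, 1)) D :=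
    cs_integrable C.isOpen hK hKD (contDiffOn_fderiv_apply C.isOpen (C.F2d.mul hψ) _)
      (hz _ fun x hx hxK => by simp [h0 x hx hxK])
  have := integral_add i1 i2
  rw [a1, a2] at this
  rw [← add_zero (0 : ℝ), ← this]
  refine setIntegral_congr_fun C.isOpen.measurableSet ?_
  intro x hx
  have d1 := (C.F1d.differentiableOn (by simp)).differentiableAt (C.isOpen.mem_nhds hx)
  have d2 := (C.F2d.differentiableOn (by simp)).differentiableAt (C.isOpen.mem_nhds hx)
  have d3 := (hψ.differentiableOn (by simp)).differentiableAt (C.isOpen.mem_nhds hx)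
  have := C.eq x hx
  simp only
  rw [fderiv_fun_mul d1 d3, fderiv_fun_mul d2 d3]
  unfold dS dT at *
  simp only [add_apply, smul_apply, smul_eq_mul]
  linear_combination - ψ x * this

/-- testing the differentiated equation -/
lemma weakT (C : Core D u p q H) {K : Set (ℝ × ℝ)} {ψ : ℝ × ℝ → ℝ} (hK : IsCompact K) (hKD : K ⊆ D)
    (hψ : ContDiffOn ℝ 1 ψ D) (h0 : ∀ x ∈ D, x ∉ K → ψ x = 0) :
    ∫ x in D, Qf (p x) (q x) (dS q x) (dT q x) (dS ψ x) (dT ψ x) = 0 := by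
  have a1 := jac_zero C.isOpen hK hKD C.F1d hψ h0
  have a2 := int_fderiv_zero C.isOpen hK hKD hψ h0 (0, 1)
  have hz : ∀ {f : ℝ × ℝ → ℝ} (e : ℝ × ℝ), (∀ x ∈ D, x ∉ K → f x = 0) →
      ∀ x ∈ D, x ∉ K → fderiv ℝ f x e = 0 := by
    intro f e hf x hx hxK
    have : f =ᶠ[𝓝 x] fun _ => (0 : ℝ) := by
      filter_upwards [hK.isClosed.isOpen_compl.mem_nhds hxK, C.isOpen.mem_nhds hx] with y hy hyD
      exact hf y hyD hy
    rw [this.fderiv_eq]; simp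
  have cψ := contDiffOn_fderiv_apply C.isOpen hψ
  have cF := contDiffOn_fderiv_apply C.isOpen C.F1d
  have i1 : IntegrableOn (fun x => dS (fun y => p y / Wf p q y) x * dT ψ x
      - dT (fun y => p y / Wf p q y) x * dS ψ x) D := by
    refine cs_integrable C.isOpen hK hKD (((cF _).mul (cψ _)).sub ((cF _).mul (cψ _))) ?_
    intro x hx hxK
    simp [dS, dT, hz _ h0 x hx hxK]
  have i2 : IntegrableOn (fun x => (-H) * fderiv ℝ ψ x (0, 1)) D := by
    refine (cs_integrable C.isOpen hK hKD (cψ _) (hz _ h0)).const_mul _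
  have := integral_sub i2 i1
  rw [a1, integral_const_mul, a2, mul_zero, sub_zero] at this
  rw [← this]
  refine setIntegral_congr_fun C.isOpen.measurableSet ?_
  intro x hx
  have := C.eq x hx
  have hc := C.cross x hx
  simp only
  rw [← this]
  unfold dS dT at *
  rw [fderiv_F1 (C.pd hx) (C.qd hx), fderiv_F1 (C.pd hx) (C.qd hx),
    fderiv_F2 (C.pd hx) (C.qd hx), Qf, hc]
  change _ / Wf p q x ^ 3 = _
  have := Wf_pos p q x
  field_simp
  ring

end Core



/-! ### Part 4: strips and area growth -/

lemma vol_box (a b c d : ℝ) (hab : a ≤ b) (hcd : c ≤ d) :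
    (volume : Measure (ℝ × ℝ)).real (Icc a b ×ˢ Icc c d) = (b - a) * (d - c) := by
  rw [Measure.real, Measure.volume_eq_prod, Measure.prod_prod, Real.volume_Icc, Real.volume_Icc,
    ENNReal.toReal_mul, ENNReal.toReal_ofReal (by linarith), ENNReal.toReal_ofReal (by linarith)]

lemma vol_box_ne_top (a b c d : ℝ) :
    (volume : Measure (ℝ × ℝ)) (Icc a b ×ˢ Icc c d) ≠ ⊤ :=
  (isCompact_Icc.prod isCompact_Icc).measure_lt_top.ne

lemma abs_F1_le (p q : ℝ × ℝ → ℝ) (x) : |p x / Wf p q x| ≤ 1 := by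
  have hw := Wf_pos p q x
  rw [abs_div, abs_of_pos hw, div_le_one hw]
  apply abs_le_of_sq_le_sq _ hw.le
  rw [Wf_sq]; nlinarith [sq_nonneg (q x)]

lemma abs_F2_le (p q : ℝ × ℝ → ℝ) (x) : |q x / Wf p q x| ≤ 1 := by
  have hw := Wf_pos p q x
  rw [abs_div, abs_of_pos hw, div_le_one hw]
  apply abs_le_of_sq_le_sq _ hw.le
  rw [Wf_sq]; nlinarith [sq_nonneg (p x)]

lemma isCompact_disc (c : ℝ × ℝ) (r : ℝ) :
    IsCompact {x : ℝ × ℝ | (x.1 - c.1) ^ 2 + (x.2 - c.2) ^ 2 ≤ r} := by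
  refine Metric.isCompact_of_isClosed_isBounded (isClosed_le (by fun_prop) (by fun_prop)) ?_
  refine (Metric.isBounded_closedBall (x := c) (r := √r)).subset ?_
  intro x hx
  simp only [mem_ofPred_eq] at hx
  rw [mem_closedBall, Prod.dist_eq, max_le_iff, Real.dist_eq, Real.dist_eq]
  constructor
  · exact Real.abs_le_sqrt (by nlinarith [sq_nonneg (x.2 - c.2)])
  · exact Real.abs_le_sqrt (by nlinarith [sq_nonneg (x.1 - c.1)])

lemma disc_sub_box (c : ℝ × ℝ) {r : ℝ} (hr : 0 < r) :
    {x : ℝ × ℝ | (x.1 - c.1) ^ 2 + (x.2 - c.2) ^ 2 ≤ 2 * r ^ 2} ⊆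
      Icc (c.1 - 2 * r) (c.1 + 2 * r) ×ˢ Icc (c.2 - 2 * r) (c.2 + 2 * r) := by
  intro x hx
  simp only [mem_ofPred_eq] at hx
  have h1 : |x.1 - c.1| ≤ 2 * r :=
    abs_le_of_sq_le_sq (by nlinarith [sq_nonneg (x.2 - c.2)]) (by positivity)
  have h2 : |x.2 - c.2| ≤ 2 * r :=
    abs_le_of_sq_le_sq (by nlinarith [sq_nonneg (x.1 - c.1)]) (by positivity)
  rw [abs_le] at h1 h2
  exact ⟨⟨by linarith, by linarith⟩, ⟨by linarith, by linarith⟩⟩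

namespace Core

variable {D : Set (ℝ × ℝ)} {u p q : ℝ × ℝ → ℝ} {H : ℝ}

lemma half_strip (C : Core D u p q H) {x y : ℝ × ℝ} (hx : x ∈ D) (hy : y ∈ D) :
    ∃ T : ℝ, ∀ z : ℝ × ℝ, x.1 ≤ z.1 → z.1 ≤ y.1 → T ≤ z.2 → z ∈ D := by
  have hpc := (C.isOpen.isConnected_iff_isPathConnected).1 C.conn
  obtain ⟨γ, hγ⟩ := hpc.joinedIn x hx y hy
  obtain ⟨T, hT⟩ := (isCompact_range γ.continuous).exists_bound_of_continuousOn
    (f := fun z : ℝ × ℝ => z.2) continuous_snd.continuousOn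
  refine ⟨T, fun z h1 h2 h3 => ?_⟩
  have hiv := intermediate_value_univ (f := fun t => (γ t).1) 0 1
    (continuous_fst.comp γ.continuous)
  obtain ⟨t, ht⟩ := hiv (by simpa using ⟨h1, h2⟩ : z.1 ∈ _)
  have hb := hT (γ t) ⟨t, rfl⟩
  have h4 : (γ t).2 ≤ z.2 := (le_abs_self _).trans (hb.trans h3)
  have := C.up (γ t) (hγ t) (z.2 - (γ t).2) (by linarith)
  convert this using 1
  ext
  · simpa using ht.symm
  · simp

lemma strip (C : Core D u p q H) (hH : H ≠ 0) : ∃ w : ℝ, ∀ x ∈ D, ∀ y ∈ D, y.1 - x.1 ≤ w := by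
  obtain ⟨M, hM, hb⟩ := exists_bmp_bound
  refine ⟨4 * (32 * M / |H|), fun x hx y hy => ?_⟩
  by_contra hcon
  push Not at hcon
  have hHp : 0 < |H| := abs_pos.2 hH
  have hpos : 0 < 32 * M / |H| := by positivity
  set r := (y.1 - x.1) / 4 with hr
  have hrlt : 32 * M / |H| < r := by rw [hr]; linarith
  have hr0 : 0 < r := hpos.trans hrlt
  obtain ⟨T, hT⟩ := C.half_strip hx hy
  set c : ℝ × ℝ := ((x.1 + y.1) / 2, T + 2 * r) with hc
  set K := {z : ℝ × ℝ | (z.1 - c.1) ^ 2 + (z.2 - c.2) ^ 2 ≤ 2 * r ^ 2} with hKdef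
  set B := Icc (c.1 - 2 * r) (c.1 + 2 * r) ×ˢ Icc (c.2 - 2 * r) (c.2 + 2 * r) with hB
  have hK : IsCompact K := isCompact_disc c _
  have hBD : B ⊆ D := by
    rintro z ⟨⟨h1, h2⟩, h3, h4⟩
    simp only [hc] at h1 h2 h3 h4
    exact hT z (by linarith) (by linarith) (by linarith)
  have hKB : K ⊆ B := disc_sub_box c hr0
  have hKD := hKB.trans hBD
  have h0 : ∀ z ∈ D, z ∉ K → bmp c r z = 0 := fun z _ hz => by
    apply bmp_zero hr0
    simp only [hKdef, mem_ofPred_eq, not_le] at hz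
    exact hz.le
  have hw := C.weak hK hKD (bmp_contDiff c r).contDiffOn h0
  have iB : IntegrableOn (B.indicator fun _ => 2 * M / r) D := by
    rw [IntegrableOn, integrable_indicator_iff (measurableSet_Icc.prod measurableSet_Icc)]
    refine integrableOn_const ?_
    exact ne_top_of_le_ne_top (vol_box_ne_top _ _ _ _) (Measure.restrict_apply_le _ _)
  have iψ : IntegrableOn (bmp c r) D :=
    cs_integrable C.isOpen hK hKD (bmp_contDiff c r).continuous.continuousOn h0
  -- lower bound
  set B' := Icc (c.1 - r / 2) (c.1 + r / 2) ×ˢ Icc (c.2 - r / 2) (c.2 + r / 2) with hB'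
  have hB'B : B' ⊆ B := by
    rintro z ⟨⟨h1, h2⟩, h3, h4⟩
    exact ⟨⟨by linarith, by linarith⟩, by linarith, by linarith⟩
  have mB' : MeasurableSet B' := measurableSet_Icc.prod measurableSet_Icc
  have mB : MeasurableSet B := measurableSet_Icc.prod measurableSet_Icc
  have lb : r ^ 2 ≤ ∫ z in D, bmp c r z := by
    calc r ^ 2 = ∫ z in B', (1 : ℝ) := by
          rw [setIntegral_const, smul_eq_mul, mul_one, vol_box _ _ _ _ (by linarith) (by linarith)]
          ring
      _ = ∫ z in B', bmp c r z := by
          refine setIntegral_congr_fun mB' ?_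
          rintro z ⟨⟨h1, h2⟩, h3, h4⟩
          refine (bmp_one hr0 ?_).symm
          nlinarith
      _ ≤ _ := by
          refine setIntegral_mono_set iψ ?_ (Eventually.of_forall (hB'B.trans hBD))
          exact Eventually.of_forall (bmp_nonneg c r)
  -- upper bound
  have hF : ∀ z, |p z / Wf p q z * dS (bmp c r) z + q z / Wf p q z * dT (bmp c r) z|
      ≤ 2 * M / r := by
    intro z
    have e1 := hb c r hr0 z
    calc _ ≤ |p z / Wf p q z| * |dS (bmp c r) z| + |q z / Wf p q z| * |dT (bmp c r) z| := by
          rw [← abs_mul, ← abs_mul]; exact abs_add_le _ _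
      _ ≤ 1 * (M / r) + 1 * (M / r) := by
          gcongr
          · exact abs_F1_le p q z
          · exact e1.1
          · exact abs_F2_le p q z
          · exact e1.2
      _ = _ := by ring
  have hFz : ∀ z ∈ D, z ∉ B →
      p z / Wf p q z * dS (bmp c r) z + q z / Wf p q z * dT (bmp c r) z = 0 := by
    intro z hzD hz
    have hzK : z ∉ K := fun h => hz (hKB h)
    have : bmp c r =ᶠ[𝓝 z] fun _ => (0 : ℝ) := by
      filter_upwards [hK.isClosed.isOpen_compl.mem_nhds hzK, C.isOpen.mem_nhds hzD] with y hy hyD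
      exact h0 y hyD hy
    simp [dS, dT, this.fderiv_eq]
  have iF : IntegrableOn (fun z => p z / Wf p q z * dS (bmp c r) z
      + q z / Wf p q z * dT (bmp c r) z) D := by
    have cb := contDiffOn_fderiv_apply C.isOpen (bmp_contDiff c r).contDiffOn
    refine cs_integrable C.isOpen (isCompact_Icc.prod isCompact_Icc) hBD
      ((C.F1d.continuousOn.mul (cb _)).add (C.F2d.continuousOn.mul (cb _))) hFz
  have ub : |∫ z in D, (p z / Wf p q z * dS (bmp c r) z + q z / Wf p q z * dT (bmp c r) z)|
      ≤ 32 * M * r := by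
    calc _ ≤ ∫ z in D, B.indicator (fun _ => 2 * M / r) z := by
          refine norm_integral_le_of_norm_le (f := fun z => p z / Wf p q z * dS (bmp c r) z
            + q z / Wf p q z * dT (bmp c r) z) iB ?_
          refine (ae_restrict_mem C.isOpen.measurableSet).mono fun z hz => ?_
          by_cases hzB : z ∈ B
          · rw [indicator_of_mem hzB]; exact hF z
          · rw [indicator_of_notMem hzB, hFz z hz hzB]; simp
      _ = ∫ z in B, (2 * M / r) := by
          rw [setIntegral_indicator mB, inter_eq_right.2 hBD]
      _ = 32 * M * r := by
          rw [setIntegral_const, smul_eq_mul, vol_box _ _ _ _ (by linarith) (by linarith)]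
          field_simp; ring
  rw [integral_sub iF (iψ.const_mul H), integral_const_mul, sub_eq_zero] at hw
  rw [hw, abs_mul] at ub
  have h1 : |H| * r ^ 2 ≤ 32 * M * r :=
    le_trans (mul_le_mul_of_nonneg_left (lb.trans (le_abs_self _)) hHp.le) ub
  have h2 : r ≤ 32 * M / |H| := by
    rw [le_div_iff₀ hHp]; nlinarith
  linarith

end Core



/-! ### Part 5: area growth -/

lemma countable_of_isolated {A : Set ℝ} (h : ∀ x ∈ A, ∀ᶠ y in 𝓝[≠] x, y ∉ A) :
    A.Countable := by
  have : DiscreteTopology A := by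
    rw [discreteTopology_subtype_iff]
    intro x hx
    rw [inf_principal_eq_bot]
    filter_upwards [h x hx] with y hy using hy
  exact Set.countable_coe_iff.1 (countable_of_Lindelof_of_discrete)

/-- truncation -/
def kep (ε y : ℝ) : ℝ := ε * (spos (y / ε - 1) - spos (-y / ε - 1))
/-- derivative of `kep` -/
def kep' (ε y : ℝ) : ℝ := spos' (y / ε - 1) + spos' (-y / ε - 1)

lemma hasDerivAt_kep {ε : ℝ} (hε : 0 < ε) (y : ℝ) : HasDerivAt (kep ε) (kep' ε y) y := by
  have h1 := (hasDerivAt_spos (y / ε - 1)).comp y (((hasDerivAt_id y).div_const ε).sub_const 1)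
  have h2 := (hasDerivAt_spos (-y / ε - 1)).comp y
    (((hasDerivAt_id y).neg.div_const ε).sub_const 1)
  have := (h1.sub h2).const_mul ε
  refine this.congr_deriv ?_
  unfold kep'
  field_simp
  ring

lemma contDiff_kep (ε : ℝ) : ContDiff ℝ 1 (kep ε) := by
  unfold kep
  have h1 := contDiff_spos.comp (f := fun y : ℝ => y / ε - 1) (by fun_prop)
  have h2 := contDiff_spos.comp (f := fun y : ℝ => -y / ε - 1) (by fun_prop)
  exact contDiff_const.mul (h1.sub h2)

lemma kep'_nonneg (ε y : ℝ) : 0 ≤ kep' ε y := add_nonneg (spos'_nonneg _) (spos'_nonneg _)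
lemma kep'_le (ε y : ℝ) : kep' ε y ≤ 2 := by
  have := spos'_le_one (y / ε - 1)
  have := spos'_le_one (-y / ε - 1)
  unfold kep'; linarith

lemma kep_zero {ε y : ℝ} (hε : 0 < ε) (h : |y| ≤ ε) : kep ε y = 0 := by
  rw [abs_le] at h
  have h1 : y / ε - 1 ≤ 0 := by rw [sub_nonpos, div_le_one hε]; exact h.2
  have h2 : -y / ε - 1 ≤ 0 := by rw [sub_nonpos, div_le_one hε]; linarith [h.1]
  rw [kep, spos_of_nonpos h1, spos_of_nonpos h2]; simp

lemma kep_abs_le {ε : ℝ} (hε : 0 < ε) (y : ℝ) : |kep ε y| ≤ |y| := by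
  have key : ∀ z : ℝ, ε < z → |ε * spos (z / ε - 1)| ≤ z := by
    intro z hz
    have h1 : 0 ≤ z / ε - 1 := by rw [sub_nonneg, one_le_div hε]; exact hz.le
    rw [abs_mul, abs_of_pos hε, abs_of_nonneg (spos_nonneg _)]
    calc _ ≤ ε * (z / ε - 1) := by gcongr; exact spos_le h1
      _ = z - ε := by field_simp
      _ ≤ z := by linarith
  rcases le_or_gt |y| ε with h | h
  · rw [kep_zero hε h]; simp
  · rcases lt_abs.1 h with h1 | h1
    · have h2 : -y / ε - 1 ≤ 0 := by rw [sub_nonpos, div_le_one hε]; linarith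
      rw [kep, spos_of_nonpos h2, sub_zero, abs_of_pos (show 0 < y by linarith)]
      exact key y h1
    · have h2 : y / ε - 1 ≤ 0 := by rw [sub_nonpos, div_le_one hε]; linarith
      rw [kep, spos_of_nonpos h2, zero_sub, mul_neg, abs_neg, abs_of_neg (show y < 0 by linarith)]
      exact key (-y) h1

lemma kep'_tendsto {y : ℝ} (hy : y ≠ 0) :
    Tendsto (fun n : ℕ => kep' (1 / ((n : ℝ) + 1)) y) atTop (𝓝 1) := by
  have hs : Tendsto spos' atTop (𝓝 1) := by
    have : Tendsto (fun z : ℝ => 1 - 1 / (1 + z) ^ 2) atTop (𝓝 (1 - 0)) := by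
      refine tendsto_const_nhds.sub ?_
      refine tendsto_const_nhds.div_atTop ?_
      exact (tendsto_pow_atTop (by norm_num)).comp (tendsto_atTop_add_const_left _ _ tendsto_id)
    rw [sub_zero] at this
    refine this.congr' ?_
    filter_upwards [Ioi_mem_atTop 0] with z hz
    have hz : 0 < z := hz
    rw [spos', if_neg (not_le.2 hz)]
    field_simp; ring
  have ht : ∀ z : ℝ, 0 < z → Tendsto (fun n : ℕ => z / (1 / ((n : ℝ) + 1)) - 1) atTop atTop := by
    intro z hz
    have : Tendsto (fun n : ℕ => z * ((n : ℝ) + 1) - 1) atTop atTop :=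
      tendsto_atTop_add_const_right _ _ ((tendsto_atTop_add_const_right _ _
        tendsto_natCast_atTop_atTop).const_mul_atTop hz)
    refine this.congr fun n => ?_
    simp
  have hz : ∀ z : ℝ, z < 0 → ∀ n : ℕ, spos' (z / (1 / ((n : ℝ) + 1)) - 1) = 0 := by
    intro z hz n
    apply spos'_of_nonpos
    have : z / (1 / ((n : ℝ) + 1)) ≤ 0 := div_nonpos_of_nonpos_of_nonneg hz.le (by positivity)
    linarith
  rcases lt_or_gt_of_ne hy with h | h
  · have h1 := (hs.comp (ht (-y) (by linarith)))
    refine h1.congr fun n => ?_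
    simp only [kep', hz y h n, Function.comp, zero_add]
  · have h1 := (hs.comp (ht y h))
    refine h1.congr fun n => ?_
    simp only [kep', hz (-y) (by linarith) n, Function.comp, add_zero]

namespace Core

variable {D : Set (ℝ × ℝ)} {u p q : ℝ × ℝ → ℝ} {H : ℝ}

lemma line_s (C : Core D u p q H) {x : ℝ × ℝ} (hx : x ∈ D) :
    HasDerivAt (fun s => u (s, x.2)) (p x) x.1 := by
  have h1 : HasDerivAt (fun s : ℝ => (s, x.2)) ((1 : ℝ), (0 : ℝ)) x.1 :=
    (hasDerivAt_id x.1).prodMk (hasDerivAt_const _ _)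
  exact ((C.hud x hx).comp_hasDerivAt x.1 h1).congr_deriv (by simp)

lemma line_t (C : Core D u p q H) {x : ℝ × ℝ} (hx : x ∈ D) :
    HasDerivAt (fun t => u (x.1, t)) (q x) x.2 := by
  have h1 : HasDerivAt (fun t : ℝ => (x.1, t)) ((0 : ℝ), (1 : ℝ)) x.2 :=
    (hasDerivAt_const _ _).prodMk (hasDerivAt_id x.2)
  exact ((C.hud x hx).comp_hasDerivAt x.2 h1).congr_deriv (by simp)

lemma null_set (C : Core D u p q H) :
    ∀ᵐ x ∂(volume.restrict D), u x = 0 → p x ^ 2 + q x ^ 2 = 0 := by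
  have cu : ContinuousOn u D := C.hu.mono subset_closure
  have cp : ContinuousOn p D := C.hp.mono subset_closure
  have cq : ContinuousOn q D := C.hq.mono subset_closure
  have meas : ∀ f : ℝ × ℝ → ℝ, ContinuousOn f D →
      MeasurableSet (D ∩ u ⁻¹' {0} ∩ (D ∩ f ⁻¹' {0}ᶜ)) := by
    intro f hf
    refine MeasurableSet.inter ?_ (hf.isOpen_inter_preimage C.isOpen
      isOpen_compl_singleton).measurableSet
    have : D ∩ u ⁻¹' {0} = D \ (D ∩ u ⁻¹' {0}ᶜ) := by ext; simp
    rw [this]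
    exact C.isOpen.measurableSet.diff (cu.isOpen_inter_preimage C.isOpen
      isOpen_compl_singleton).measurableSet
  have n1 : volume (D ∩ u ⁻¹' {0} ∩ (D ∩ q ⁻¹' {0}ᶜ)) = 0 := by
    rw [Measure.volume_eq_prod, Measure.measure_prod_null (meas q cq)]
    refine Eventually.of_forall fun s => ?_
    refine Set.Countable.measure_zero (countable_of_isolated ?_) _
    rintro t ⟨⟨h1, h2⟩, -, h3⟩
    have := (C.line_t h1).eventually_ne (c := 0) h3
    filter_upwards [this] with y hy
    rintro ⟨⟨-, h4⟩, -⟩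
    exact hy h4
  have n2 : volume (D ∩ u ⁻¹' {0} ∩ (D ∩ p ⁻¹' {0}ᶜ)) = 0 := by
    rw [Measure.volume_eq_prod, Measure.prod_apply_symm (meas p cp)]
    refine lintegral_eq_zero_of_ae_eq_zero (Eventually.of_forall fun t => ?_)
    refine Set.Countable.measure_zero (countable_of_isolated ?_) _
    rintro s ⟨⟨h1, h2⟩, -, h3⟩
    have := (C.line_s h1).eventually_ne (c := 0) h3
    filter_upwards [this] with y hy
    rintro ⟨⟨-, h4⟩, -⟩
    exact hy h4
  have n3 := measure_union_null n1 n2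
  rw [ae_restrict_iff' C.isOpen.measurableSet]
  rw [← compl_mem_ae_iff] at n3
  filter_upwards [n3] with x hx hxD hux
  simp only [mem_compl_iff, mem_union, not_or, mem_inter_iff, mem_preimage, mem_singleton_iff,
    not_and, not_not] at hx
  have h1 := hx.1 ⟨hxD, hux⟩ hxD
  have h2 := hx.2 ⟨hxD, hux⟩ hxD
  rw [h1, h2]; simp

end Core



/-! ### Part 6: area growth, conclusion -/

namespace Core

variable {D : Set (ℝ × ℝ)} {u p q : ℝ × ℝ → ℝ} {H : ℝ}

lemma cpt {f : ℝ × ℝ → ℝ} {T : Set ℝ} (hf : ContinuousOn f (closure D)) (hT : IsClosed T) (R : ℝ) :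
    IsCompact {x : ℝ × ℝ | x ∈ closure D ∧ x.1 ^ 2 + x.2 ^ 2 ≤ R ∧ f x ∈ T} := by
  have h1 : IsClosed (closure D ∩ f ⁻¹' T) := hf.preimage_isClosed_of_isClosed isClosed_closure hT
  have h2 := isCompact_disc (0, 0) R
  refine (h2.inter_left h1).of_isClosed_subset ?_ ?_
  · have : {x : ℝ × ℝ | x ∈ closure D ∧ x.1 ^ 2 + x.2 ^ 2 ≤ R ∧ f x ∈ T} =
        (closure D ∩ f ⁻¹' T) ∩ {x : ℝ × ℝ | (x.1 - 0) ^ 2 + (x.2 - 0) ^ 2 ≤ R} := by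
      ext x; simp; tauto
    rw [this]; exact h1.inter h2.isClosed
  · rintro x ⟨a, b, c⟩
    exact ⟨⟨a, c⟩, by simpa using b⟩

lemma cpt_sub (C : Core D u p q H) {f : ℝ × ℝ → ℝ} {T : Set ℝ} {R : ℝ}
    (h : ∀ x ∈ frontier D, f x ∉ T) :
    {x : ℝ × ℝ | x ∈ closure D ∧ x.1 ^ 2 + x.2 ^ 2 ≤ R ∧ f x ∈ T} ⊆ D := by
  rintro x ⟨a, b, c⟩
  by_contra hx
  exact h x (by rw [C.isOpen.frontier_eq]; exact ⟨a, hx⟩) c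

lemma crho (C : Core D u p q H) : ContinuousOn (rho2 u) (closure D) := by
  unfold rho2
  have := C.hu
  fun_prop

lemma cW (C : Core D u p q H) : ContinuousOn (Wf p q) (closure D) := continuousOn_Wf C.hp C.hq

/-- functions continuous up to the boundary vanishing outside a graph ball are integrable -/
lemma int_ball (C : Core D u p q H) {f : ℝ × ℝ → ℝ} (hf : ContinuousOn f (closure D)) (R : ℝ) :
    IntegrableOn f (D ∩ {x | rho2 u x ≤ R}) := by
  have h1 := cpt (D := D) C.crho (isClosed_Iic (a := R)) R
  refine ((hf.mono (fun x hx => hx.1)).integrableOn_compact h1).mono_set ?_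
  rintro x ⟨a, b⟩
  have b : rho2 u x ≤ R := b
  refine ⟨subset_closure a, ?_, b⟩
  unfold rho2 at b
  nlinarith [sq_nonneg (u x)]

lemma meas_ball (C : Core D u p q H) (R : ℝ) : MeasurableSet (D ∩ {x | rho2 u x ≤ R}) := by
  have h2 : IsOpen (D ∩ rho2 u ⁻¹' Ioi R) :=
    (C.crho.mono subset_closure).isOpen_inter_preimage C.isOpen isOpen_Ioi
  have : D ∩ {x | rho2 u x ≤ R} = D \ (D ∩ rho2 u ⁻¹' Ioi R) := by ext; simp
  rw [this]
  exact C.isOpen.measurableSet.diff h2.measurableSet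

lemma hvol (C : Core D u p q H) : ∃ A, 0 ≤ A ∧ ∀ R, 1 ≤ R →
    |H| * (volume : Measure (ℝ × ℝ)).real
      (D ∩ {x | (x.1 - 0) ^ 2 + (x.2 - 0) ^ 2 ≤ 2 * R ^ 2}) ≤ A * R := by
  by_cases hH : H = 0
  · exact ⟨0, le_rfl, fun R _ => by simp [hH]⟩
  obtain ⟨w, hw⟩ := C.strip hH
  obtain ⟨x0, hx0⟩ := C.conn.nonempty
  have hw0 : 0 ≤ w := by simpa using hw x0 hx0 x0 hx0
  refine ⟨|H| * (2 * w * 4), by positivity, fun R hR => ?_⟩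
  have hsub : D ∩ {x : ℝ × ℝ | (x.1 - 0) ^ 2 + (x.2 - 0) ^ 2 ≤ 2 * R ^ 2} ⊆
      Icc (x0.1 - w) (x0.1 + w) ×ˢ Icc (-2 * R) (2 * R) := by
    rintro x ⟨hx, h2⟩
    have := disc_sub_box (0, 0) (by linarith : 0 < R) h2
    have h3 := hw x hx x0 hx0
    have h4 := hw x0 hx0 x hx
    obtain ⟨-, h5, h6⟩ := this
    simp only at h5 h6
    exact ⟨⟨by linarith, by linarith⟩, by linarith, by linarith⟩
  have := measureReal_mono (μ := (volume : Measure (ℝ × ℝ))) hsub (vol_box_ne_top _ _ _ _)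
  rw [vol_box _ _ _ _ (by linarith) (by linarith)] at this
  calc _ ≤ |H| * ((x0.1 + w - (x0.1 - w)) * (2 * R - -2 * R)) := by gcongr
    _ = _ := by ring

lemma area_test (C : Core D u p q H) : ∃ A, 0 ≤ A ∧ ∀ R, 1 ≤ R → ∀ ε, 0 < ε →
    ∫ x in D ∩ {x | rho2 u x ≤ R ^ 2},
      kep' ε (R * Real.arctan (u x / R)) * ((p x ^ 2 + q x ^ 2) / Wf p q x) ≤ A * R ^ 2 := by
  obtain ⟨M, hM, hb⟩ := exists_bmp_bound
  obtain ⟨A1, hA1, hv⟩ := C.hvol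
  refine ⟨2 * (4 * M * 16 + 2 * A1), by positivity, fun R hR ε hε => ?_⟩
  have hR0 : 0 < R := by linarith
  set S := {x : ℝ × ℝ | (x.1 - 0) ^ 2 + (x.2 - 0) ^ 2 ≤ 2 * R ^ 2} with hS
  have hSc : IsCompact S := isCompact_disc (0, 0) _
  set a : ℝ → ℝ := fun y => R * Real.arctan (y / R) with ha
  have had : ∀ y, HasDerivAt a (1 / (1 + (y / R) ^ 2)) y := by
    intro y
    have := (((hasDerivAt_id y).div_const R).arctan).const_mul R
    refine this.congr_deriv ?_
    simp; field_simp
  have hac : ContDiff ℝ 1 a := by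
    have : ContDiff ℝ 1 (fun y : ℝ => y / R) := by fun_prop
    exact contDiff_const.mul (Real.contDiff_arctan.comp this)
  set τ : ℝ → ℝ := fun y => kep ε (a y) with hτ
  have hτd : ∀ y, HasDerivAt τ (kep' ε (a y) * (1 / (1 + (y / R) ^ 2))) y := fun y =>
    (hasDerivAt_kep hε (a y)).comp y (had y)
  have hτc : ContDiff ℝ 1 τ := (contDiff_kep ε).comp hac
  have hτb : ∀ y, |τ y| ≤ 2 * R := by
    intro y
    refine (kep_abs_le hε _).trans ?_
    rw [ha, abs_mul, abs_of_pos hR0, mul_comm]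
    gcongr
    rw [abs_le]
    have h1 := Real.neg_pi_div_two_lt_arctan (y / R)
    have h2 := Real.arctan_lt_pi_div_two (y / R)
    have := Real.pi_lt_four
    constructor <;> linarith
  set b := bmp (0, 0) R with hbd
  set ψ : ℝ × ℝ → ℝ := fun x => b x * τ (u x) with hψ
  set K := {x : ℝ × ℝ | x ∈ closure D ∧ x.1 ^ 2 + x.2 ^ 2 ≤ 2 * R ^ 2 ∧ u x ∈ {y | ε ≤ |a y|}}
    with hKdef
  have hK : IsCompact K := cpt C.hu (isClosed_le continuous_const
    (continuous_abs.comp hac.continuous)) _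
  have hKD : K ⊆ D := C.cpt_sub fun x hx h => by
    rw [C.bd x hx] at h
    have : ε ≤ |a 0| := h
    simp [ha] at this; linarith
  have hψc : ContDiffOn ℝ 1 ψ D := (bmp_contDiff _ _).contDiffOn.mul
    (hτc.comp_contDiffOn C.hu1)
  have hS0 : ∀ x, x ∉ S → b x = 0 := fun x hx => by
    apply bmp_zero hR0
    simp only [hS, mem_ofPred_eq, not_le] at hx
    exact hx.le
  have h0 : ∀ x ∈ D, x ∉ K → ψ x = 0 := by
    intro x hx hxK
    by_cases hxS : x ∈ S
    · have : |a (u x)| ≤ ε := by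
        by_contra hc
        exact hxK ⟨subset_closure hx, by simpa [hS] using hxS, (not_le.1 hc).le⟩
      simp [hψ, hτ, kep_zero hε this]
    · simp [hψ, hS0 x hxS]
  have hw := C.weak hK hKD hψc h0
  set J : ℝ × ℝ → ℝ := fun x => p x / Wf p q x * dS ψ x + q x / Wf p q x * dT ψ x - H * ψ x
    with hJ
  have hdz : ∀ x ∈ D, x ∉ K → J x = 0 := by
    intro x hx hxK
    have : ψ =ᶠ[𝓝 x] fun _ => (0 : ℝ) := by
      filter_upwards [hK.isClosed.isOpen_compl.mem_nhds hxK, C.isOpen.mem_nhds hx] with y hy hyD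
      exact h0 y hyD hy
    simp [hJ, dS, dT, this.fderiv_eq, h0 x hx hxK]
  have iJ : IntegrableOn J D := by
    have cb := contDiffOn_fderiv_apply C.isOpen hψc
    refine cs_integrable C.isOpen hK hKD ?_ hdz
    exact ((C.F1d.continuousOn.mul (cb _)).add (C.F2d.continuousOn.mul (cb _))).sub
      (continuousOn_const.mul hψc.continuousOn)
  have hfd : ∀ x ∈ D, ∀ e, fderiv ℝ ψ x e = b x * (kep' ε (a (u x)) *
      (1 / (1 + (u x / R) ^ 2)) * (p x * e.1 + q x * e.2)) + τ (u x) * fderiv ℝ b x e := by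
    intro x hx e
    have h1 := ((bmp_contDiff (0, 0) R).differentiable (by simp) x).hasFDerivAt
    have h2 := (hτd (u x)).comp_hasFDerivAt x (C.hud x hx)
    have h3 := (h1.fun_mul h2).fderiv
    have : ψ = fun y => bmp (0, 0) R y * (τ ∘ u) y := rfl
    rw [this, h3]
    simp [hbd]
    ring
  set E := D ∩ {x | rho2 u x ≤ R ^ 2} with hE
  have mE : MeasurableSet E := C.meas_ball _
  set G : ℝ × ℝ → ℝ := fun x => kep' ε (a (u x)) * ((p x ^ 2 + q x ^ 2) / Wf p q x) with hG
  have hG0 : ∀ x, 0 ≤ G x := fun x =>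
    mul_nonneg (kep'_nonneg _ _) (div_nonneg (by positivity) (Wf_pos p q x).le)
  have cG : ContinuousOn G (closure D) := by
    have c1 : Continuous (kep' ε) := by
      unfold kep'
      exact (continuous_spos'.comp (by fun_prop)).add (continuous_spos'.comp (by fun_prop))
    have c2 : ContinuousOn (fun x => kep' ε (a (u x))) (closure D) :=
      (c1.comp hac.continuous).comp_continuousOn C.hu
    exact c2.mul (((C.hp.pow 2).add (C.hq.pow 2)).div C.cW fun x _ => (Wf_pos p q x).ne')
  have iG : IntegrableOn G E := C.int_ball cG _
  have iG' : IntegrableOn (E.indicator fun x => G x / 2) D := by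
    rw [IntegrableOn, integrable_indicator_iff mE]
    exact (iG.div_const 2).mono_measure (Measure.restrict_mono_measure Measure.restrict_le_self _)
  have iS : IntegrableOn (S.indicator fun _ => 4 * M + 2 * R * |H|) D := by
    rw [IntegrableOn, integrable_indicator_iff hSc.measurableSet]
    refine integrableOn_const ?_
    exact ne_top_of_le_ne_top hSc.measure_lt_top.ne (Measure.restrict_apply_le _ _)
  have pt : ∀ x ∈ D, E.indicator (fun x => G x / 2) x ≤
      J x + S.indicator (fun _ => 4 * M + 2 * R * |H|) x := by
    intro x hx
    have hW := Wf_pos p q x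
    set k' := kep' ε (a (u x)) with hk'
    have hk0 : 0 ≤ k' := kep'_nonneg _ _
    have hb0 : 0 ≤ b x := bmp_nonneg _ _ _
    have hb1 : b x ≤ 1 := bmp_le_one _ _ _
    have hJe : J x = b x * (1 / (1 + (u x / R) ^ 2)) * G x + τ (u x) *
        (p x / Wf p q x * dS b x + q x / Wf p q x * dT b x) - H * ψ x := by
      simp only [hJ, dS, dT, hfd x hx]
      rw [hG, ← hk']
      field_simp
      ring
    by_cases hxS : x ∈ S
    · have e1 := hb (0, 0) R hR0 x
      have e2 : |τ (u x) * (p x / Wf p q x * dS b x + q x / Wf p q x * dT b x)| ≤ 4 * M := by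
        rw [abs_mul]
        calc _ ≤ 2 * R * (|p x / Wf p q x| * |dS b x| + |q x / Wf p q x| * |dT b x|) := by
              rw [← abs_mul (p x / Wf p q x), ← abs_mul (q x / Wf p q x)]
              exact mul_le_mul (hτb _) (abs_add_le _ _) (abs_nonneg _) (by positivity)
          _ ≤ 2 * R * (1 * (M / R) + 1 * (M / R)) := by
              gcongr
              · exact abs_F1_le p q x
              · exact e1.1
              · exact abs_F2_le p q x
              · exact e1.2
          _ = _ := by field_simp; ring
      have e3 : |H * ψ x| ≤ 2 * R * |H| := by
        have h4 : |ψ x| ≤ 1 * (2 * R) := by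
          simp only [hψ]
          rw [abs_mul, abs_of_nonneg hb0]
          exact mul_le_mul hb1 (hτb _) (abs_nonneg _) (by norm_num)
        rw [abs_mul, mul_comm]
        exact mul_le_mul_of_nonneg_right (by linarith) (abs_nonneg _)
      rw [abs_le] at e2 e3
      rw [indicator_of_mem hxS, hJe]
      have e4 : E.indicator (fun x => G x / 2) x ≤ b x * (1 / (1 + (u x / R) ^ 2)) * G x := by
        by_cases hxE : x ∈ E
        · rw [indicator_of_mem hxE]
          have hr : rho2 u x ≤ R ^ 2 := hxE.2
          unfold rho2 at hr
          have : b x = 1 := bmp_one hR0 (by simp; nlinarith [sq_nonneg (u x)])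
          rw [this, one_mul]
          have h5 : (u x / R) ^ 2 ≤ 1 := by
            rw [div_pow, div_le_one (by positivity)]
            nlinarith [sq_nonneg x.1, sq_nonneg x.2]
          have h6 : 1 / 2 ≤ 1 / (1 + (u x / R) ^ 2) := by
            apply one_div_le_one_div_of_le (by positivity); linarith
          nlinarith [hG0 x]
        · rw [indicator_of_notMem hxE]
          have := hG0 x
          positivity
      linarith [e2.1, e3.2]
    · have hxK : x ∉ K := fun h => hxS (by simpa [hS] using h.2.1)
      have hxE : x ∉ E := fun h => hxS (by
        have hr : rho2 u x ≤ R ^ 2 := h.2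
        unfold rho2 at hr
        simp only [hS, mem_ofPred_eq]
        nlinarith [sq_nonneg (u x)])
      rw [indicator_of_notMem hxS, indicator_of_notMem hxE, hdz x hx hxK]; simp
  have hInt := setIntegral_mono_on iG' (iJ.add iS) C.isOpen.measurableSet pt
  have hInt2 : ∫ x in D, (J + S.indicator fun _ => 4 * M + 2 * R * |H|) x =
      (4 * M + 2 * R * |H|) * (volume : Measure (ℝ × ℝ)).real (D ∩ S) := by
    rw [integral_add' iJ iS, hw, zero_add, setIntegral_indicator hSc.measurableSet,
      setIntegral_const, smul_eq_mul, mul_comm]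
  rw [hInt2, setIntegral_indicator mE, inter_eq_right.2 (inter_subset_left : E ⊆ D),
    integral_div] at hInt
  have hvS : (volume : Measure (ℝ × ℝ)).real (D ∩ S) ≤ 16 * R ^ 2 := by
    have h1 : D ∩ S ⊆ Icc (-(2 * R)) (2 * R) ×ˢ Icc (-(2 * R)) (2 * R) :=
      inter_subset_right.trans (by simpa [hS] using disc_sub_box (0, 0) hR0)
    have := measureReal_mono (μ := (volume : Measure (ℝ × ℝ))) h1 (vol_box_ne_top _ _ _ _)
    rw [vol_box _ _ _ _ (by linarith) (by linarith)] at this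
    linarith
  have hv' := hv R hR
  have : (4 * M + 2 * R * |H|) * (volume : Measure (ℝ × ℝ)).real (D ∩ S) ≤
      4 * M * (16 * R ^ 2) + 2 * R * (A1 * R) := by
    rw [add_mul, mul_assoc (2 * R)]
    gcongr
  change ∫ x in E, G x ≤ _
  nlinarith

lemma area (C : Core D u p q H) : ∃ A, 0 ≤ A ∧ ∀ R, 1 ≤ R →
    ∫ x in D ∩ {x | rho2 u x ≤ R ^ 2}, Wf p q x ≤ A * R ^ 2 := by
  obtain ⟨A, hA, h⟩ := C.area_test
  refine ⟨A + 16, by positivity, fun R hR => ?_⟩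
  have hR0 : 0 < R := by linarith
  set E := D ∩ {x | rho2 u x ≤ R ^ 2} with hE
  have mE : MeasurableSet E := C.meas_ball _
  have cg : ContinuousOn (fun x => (p x ^ 2 + q x ^ 2) / Wf p q x) (closure D) :=
    ((C.hp.pow 2).add (C.hq.pow 2)).div C.cW fun x _ => (Wf_pos p q x).ne'
  have ig : IntegrableOn (fun x => (p x ^ 2 + q x ^ 2) / Wf p q x) E := C.int_ball cg _
  have g0 : ∀ x, 0 ≤ (p x ^ 2 + q x ^ 2) / Wf p q x := fun x =>
    div_nonneg (by positivity) (Wf_pos p q x).le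
  have hlim : Tendsto (fun n : ℕ => ∫ x in E, kep' (1 / ((n : ℝ) + 1))
      (R * Real.arctan (u x / R)) * ((p x ^ 2 + q x ^ 2) / Wf p q x)) atTop
      (𝓝 (∫ x in E, (p x ^ 2 + q x ^ 2) / Wf p q x)) := by
    refine tendsto_integral_of_dominated_convergence
      (fun x => 2 * ((p x ^ 2 + q x ^ 2) / Wf p q x)) ?_ (ig.const_mul 2) ?_ ?_
    · intro n
      have c1 : Continuous (kep' (1 / ((n : ℝ) + 1))) := by
        unfold kep'
        exact (continuous_spos'.comp (by fun_prop)).add (continuous_spos'.comp (by fun_prop))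
      have c0 : Continuous fun y : ℝ => R * Real.arctan (y / R) :=
        continuous_const.mul (Real.continuous_arctan.comp (by fun_prop))
      have c2 : ContinuousOn (fun x => kep' (1 / ((n : ℝ) + 1)) (R * Real.arctan (u x / R)))
          (closure D) := (c1.comp c0).comp_continuousOn C.hu
      exact (C.int_ball (c2.mul cg) _).aestronglyMeasurable
    · intro n
      refine Eventually.of_forall fun x => ?_
      rw [Real.norm_eq_abs, abs_of_nonneg (mul_nonneg (kep'_nonneg _ _) (g0 x))]
      exact mul_le_mul_of_nonneg_right (kep'_le _ _) (g0 x)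
    · have hn := ae_restrict_of_ae_restrict_of_subset (inter_subset_left : E ⊆ D) C.null_set
      filter_upwards [hn] with x hx
      by_cases hu : u x = 0
      · simp [hx hu]
      · have : R * Real.arctan (u x / R) ≠ 0 := by
          refine mul_ne_zero hR0.ne' ?_
          rw [Ne, Real.arctan_eq_zero_iff]
          exact div_ne_zero hu hR0.ne'
        simpa using (kep'_tendsto this).mul_const ((p x ^ 2 + q x ^ 2) / Wf p q x)
  have h1 : ∫ x in E, (p x ^ 2 + q x ^ 2) / Wf p q x ≤ A * R ^ 2 :=
    le_of_tendsto hlim (Eventually.of_forall fun n => h R hR _ (by positivity))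
  have iW : IntegrableOn (Wf p q) E := C.int_ball C.cW _
  have i1 : IntegrableOn (fun _ => (1 : ℝ)) E := C.int_ball continuousOn_const _
  have h2 : ∫ x in E, Wf p q x ≤ ∫ x in E, (1 + (p x ^ 2 + q x ^ 2) / Wf p q x) := by
    refine setIntegral_mono iW (i1.add ig) fun x => ?_
    have hw := Wf_pos p q x
    have h3 : (p x ^ 2 + q x ^ 2) / Wf p q x = Wf p q x - 1 / Wf p q x := by
      field_simp; rw [Wf_sq]; ring
    have h4 : 1 / Wf p q x ≤ 1 := by rw [div_le_one hw]; exact one_le_Wf p q x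
    simp only [h3]
    linarith
  rw [integral_add i1 ig, setIntegral_const, smul_eq_mul, mul_one] at h2
  have h1E : E ⊆ Icc (-(2 * R)) (2 * R) ×ˢ Icc (-(2 * R)) (2 * R) := by
    rintro x ⟨-, hx⟩
    have hr : rho2 u x ≤ R ^ 2 := hx
    unfold rho2 at hr
    have := disc_sub_box (0, 0) hR0 (show x ∈ {x : ℝ × ℝ | _} by
      simp only [mem_ofPred_eq, sub_zero]; nlinarith [sq_nonneg (u x)])
    simpa using this
  have := measureReal_mono (μ := (volume : Measure (ℝ × ℝ))) h1E (vol_box_ne_top _ _ _ _)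
  rw [vol_box _ _ _ _ (by linarith) (by linarith)] at this
  linarith

end Core



/-! ### Part 7: logarithmic cutoffs -/

lemma sq_sum_of_disjoint {ι : Type*} (s : Finset ι) (a : ι → ℝ)
    (h : ∀ i ∈ s, ∀ j ∈ s, i ≠ j → a i = 0 ∨ a j = 0) :
    (∑ i ∈ s, a i) ^ 2 = ∑ i ∈ s, a i ^ 2 := by
  by_cases hex : ∃ i ∈ s, a i ≠ 0
  · obtain ⟨i, hi, hai⟩ := hex
    have hz : ∀ j ∈ s, j ≠ i → a j = 0 := fun j hj hji => by
      rcases h i hi j hj hji.symm with h' | h'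
      · exact absurd h' hai
      · exact h'
    rw [Finset.sum_eq_single_of_mem i hi hz,
      Finset.sum_eq_single_of_mem i hi fun j hj hji => by rw [hz j hj hji]; simp]
  · push Not at hex
    rw [Finset.sum_eq_zero hex, Finset.sum_eq_zero fun i hi => by rw [hex i hi]; simp]; simp

/-- the cutoff profile -/
def cutPhi (m k : ℕ) (y : ℝ) : ℝ :=
  (1 / (k : ℝ)) * ∑ j ∈ Finset.range k, Real.smoothTransition (2 - y / 4 ^ (m + j))

/-- summands of the derivative -/
def cutA (m j : ℕ) (y : ℝ) : ℝ :=
  deriv Real.smoothTransition (2 - y / 4 ^ (m + j)) * (-(1 / 4 ^ (m + j)))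

lemma cutPhi_hasDerivAt (m k : ℕ) (y : ℝ) :
    HasDerivAt (cutPhi m k) ((1 / (k : ℝ)) * ∑ j ∈ Finset.range k, cutA m j y) y := by
  refine HasDerivAt.const_mul _ (HasDerivAt.fun_sum fun j _ => ?_)
  have h5 := ((Real.smoothTransition.contDiff (n := 1)).differentiable (by simp)
    (2 - y / 4 ^ (m + j))).hasDerivAt
  exact h5.comp y (((hasDerivAt_id y).div_const _).const_sub 2)

lemma cutPhi_contDiff (m k : ℕ) : ContDiff ℝ 1 (cutPhi m k) := by
  refine contDiff_const.mul (ContDiff.sum fun j _ => ?_)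
  exact Real.smoothTransition.contDiff.comp (by fun_prop)

lemma cutPhi_zero (m k : ℕ) {y : ℝ} (hy : 2 * 4 ^ (m + k) ≤ y) : cutPhi m k y = 0 := by
  unfold cutPhi
  rw [Finset.sum_eq_zero, mul_zero]
  intro j hj
  apply Real.smoothTransition.zero_of_nonpos
  rw [sub_nonpos, le_div_iff₀ (by positivity)]
  refine le_trans ?_ hy
  have : (4 : ℝ) ^ (m + j) ≤ 4 ^ (m + k) :=
    pow_le_pow_right₀ (by norm_num) (by have := Finset.mem_range.1 hj; omega)
  linarith

lemma cutPhi_one (m k : ℕ) (hk : 0 < k) {y : ℝ} (hy : y ≤ 4 ^ m) : cutPhi m k y = 1 := by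
  unfold cutPhi
  rw [Finset.sum_congr rfl (g := fun _ => (1 : ℝ))]
  · simp; field_simp
  intro j hj
  apply Real.smoothTransition.one_of_one_le
  have : y / 4 ^ (m + j) ≤ 1 := by
    rw [div_le_one (by positivity)]
    exact hy.trans (pow_le_pow_right₀ (by norm_num) (by omega))
  linarith

lemma cutA_ne {m j : ℕ} {y : ℝ} (h : cutA m j y ≠ 0) : 4 ^ (m + j) ≤ y ∧ y ≤ 2 * 4 ^ (m + j) := by
  have h1 : deriv Real.smoothTransition (2 - y / 4 ^ (m + j)) ≠ 0 := fun h' => h (by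
    rw [cutA, h', zero_mul])
  have h2 : ¬ (2 - y / 4 ^ (m + j) < 0 ∨ 1 < 2 - y / 4 ^ (m + j)) := fun h' => h1 (smT_deriv_zero h')
  push Not at h2
  constructor
  · have : 1 ≤ y / 4 ^ (m + j) := by linarith [h2.2]
    rwa [one_le_div (by positivity)] at this
  · have : y / 4 ^ (m + j) ≤ 2 := by linarith [h2.1]
    rwa [div_le_iff₀ (by positivity)] at this

lemma cutA_disj {m i j : ℕ} (hij : i ≠ j) (y : ℝ) : cutA m i y = 0 ∨ cutA m j y = 0 := by
  by_contra hc
  push Not at hc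
  have key : ∀ a b : ℕ, a < b → cutA m a y ≠ 0 → cutA m b y ≠ 0 → False := by
    intro a b hab ha hb
    have h1 := (cutA_ne ha).2
    have h2 := (cutA_ne hb).1
    have h3 : (4 : ℝ) ^ (m + a + 1) ≤ 4 ^ (m + b) := pow_le_pow_right₀ (by norm_num) (by omega)
    rw [pow_succ] at h3
    have : (0 : ℝ) < 4 ^ (m + a) := by positivity
    linarith
  rcases lt_or_gt_of_ne hij with h | h
  · exact key i j h hc.1 hc.2
  · exact key j i h hc.2 hc.1

lemma cutPhi_deriv_sq (m k : ℕ) (y : ℝ) :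
    deriv (cutPhi m k) y ^ 2 = (1 / (k : ℝ)) ^ 2 * ∑ j ∈ Finset.range k, cutA m j y ^ 2 := by
  rw [(cutPhi_hasDerivAt m k y).deriv, mul_pow,
    sq_sum_of_disjoint _ _ fun i _ j _ hij => cutA_disj hij y]

namespace Core

variable {D : Set (ℝ × ℝ)} {u p q : ℝ × ℝ → ℝ} {H : ℝ}

lemma cutoff (C : Core D u p q H) (N ε : ℝ) (hε : 0 < ε) : ∃ Φ : ℝ → ℝ, ∃ R : ℝ,
    ContDiff ℝ 1 Φ ∧ (∀ y, R ≤ y → Φ y = 0) ∧ (∀ y, y ≤ N → Φ y = 1) ∧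
    ∫ x in D, Wf p q x * deriv Φ (rho2 u x) ^ 2 * rho2 u x ≤ ε := by
  obtain ⟨A, hA, har⟩ := C.area
  obtain ⟨M, hM, hMb⟩ := exists_smT_bound
  obtain ⟨m, hm⟩ := pow_unbounded_of_one_lt N (by norm_num : (1 : ℝ) < 4)
  obtain ⟨k, hk⟩ := exists_nat_gt (4 * M ^ 2 * A / ε)
  have hk0 : (0 : ℝ) < k := lt_of_le_of_lt (by positivity) hk
  have hk1 : 0 < k := by exact_mod_cast hk0
  refine ⟨cutPhi m k, 2 * 4 ^ (m + k), cutPhi_contDiff m k, fun y => cutPhi_zero m k,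
    fun y hy => cutPhi_one m k hk1 (hy.trans hm.le), ?_⟩
  set E : ℕ → Set (ℝ × ℝ) := fun j => D ∩ {x | rho2 u x ≤ 2 * 4 ^ (m + j)} with hE
  set c : ℕ → ℝ := fun j => (1 / (k : ℝ)) ^ 2 * (2 * M ^ 2 / 4 ^ (m + j)) with hc
  have mE : ∀ j, MeasurableSet (E j) := fun j => C.meas_ball _
  have iE : ∀ j, IntegrableOn ((E j).indicator fun x => c j * Wf p q x) D := fun j => by
    rw [IntegrableOn, integrable_indicator_iff (mE j)]
    exact ((C.int_ball C.cW _).const_mul _).mono_measure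
      (Measure.restrict_mono_measure Measure.restrict_le_self _)
  have pt : ∀ x, x ∈ D → Wf p q x * deriv (cutPhi m k) (rho2 u x) ^ 2 * rho2 u x ≤
      ∑ j ∈ Finset.range k, (E j).indicator (fun x => c j * Wf p q x) x := by
    intro x hx
    have hW := Wf_pos p q x
    rw [cutPhi_deriv_sq, show ∀ s : ℝ, Wf p q x * ((1 / (k : ℝ)) ^ 2 * s) * rho2 u x =
      s * ((1 / (k : ℝ)) ^ 2 * Wf p q x * rho2 u x) from fun s => by ring, Finset.sum_mul]
    refine Finset.sum_le_sum fun j _ => ?_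
    by_cases h0 : cutA m j (rho2 u x) = 0
    · rw [h0]
      simp only [ne_eq, OfNat.ofNat_ne_zero, not_false_eq_true, zero_pow, zero_mul]
      refine indicator_nonneg (fun z _ => ?_) x
      have := Wf_pos p q z
      positivity
    · obtain ⟨h1, h2⟩ := cutA_ne h0
      rw [indicator_of_mem (show x ∈ E j from ⟨hx, h2⟩)]
      have h3 : cutA m j (rho2 u x) ^ 2 ≤ (M * (1 / 4 ^ (m + j))) ^ 2 := by
        rw [sq_le_sq, cutA, abs_mul, abs_neg, abs_of_pos (by positivity : (0:ℝ) < 1 / 4 ^ (m + j)),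
          abs_of_pos (by positivity : (0:ℝ) < M * (1 / 4 ^ (m + j)))]
        gcongr
        exact hMb _
      have h4 : 0 ≤ rho2 u x := le_trans (by positivity) h1
      calc _ ≤ (M * (1 / 4 ^ (m + j))) ^ 2 * ((1 / (k : ℝ)) ^ 2 * Wf p q x * (2 * 4 ^ (m + j))) := by
            gcongr
        _ = _ := by simp only [hc]; field_simp
  have hnn : ∀ x, 0 ≤ Wf p q x * deriv (cutPhi m k) (rho2 u x) ^ 2 * rho2 u x := fun x => by
    have := Wf_pos p q x
    have : 0 ≤ rho2 u x := by unfold rho2; positivity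
    positivity
  calc _ ≤ ∫ x in D, ∑ j ∈ Finset.range k, (E j).indicator (fun x => c j * Wf p q x) x := by
        refine integral_mono_of_nonneg (Eventually.of_forall hnn)
          (integrable_finsetSum _ fun j _ => iE j) ?_
        exact (ae_restrict_mem C.isOpen.measurableSet).mono pt
    _ = ∑ j ∈ Finset.range k, c j * ∫ x in E j, Wf p q x := by
        rw [integral_finsetSum _ fun j _ => iE j]
        refine Finset.sum_congr rfl fun j _ => ?_
        rw [setIntegral_indicator (mE j), inter_eq_right.2 (inter_subset_left : E j ⊆ D),
          integral_const_mul]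
    _ ≤ ∑ j ∈ Finset.range k, (1 / (k : ℝ)) ^ 2 * (4 * M ^ 2 * A) := by
        refine Finset.sum_le_sum fun j _ => ?_
        have hR1 : 1 ≤ √(2 * 4 ^ (m + j) : ℝ) := by
          rw [Real.one_le_sqrt]
          have : (1 : ℝ) ≤ 4 ^ (m + j) := one_le_pow₀ (by norm_num)
          linarith
        have h1 := har _ hR1
        rw [Real.sq_sqrt (by positivity)] at h1
        have hcj : 0 ≤ c j := by positivity
        calc _ ≤ c j * (A * (2 * 4 ^ (m + j))) := mul_le_mul_of_nonneg_left h1 hcj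
          _ = _ := by simp only [hc]; field_simp; ring
    _ = 4 * M ^ 2 * A / k := by
        rw [Finset.sum_const, Finset.card_range, nsmul_eq_mul]; field_simp
    _ ≤ ε := by
        rw [div_lt_iff₀ hε] at hk
        rw [div_le_iff₀ hk0]; linarith

lemma int_cut (C : Core D u p q H) {Φ : ℝ → ℝ} {R : ℝ} (h1 : ContDiff ℝ 1 Φ)
    (h2 : ∀ y, R ≤ y → Φ y = 0) :
    IntegrableOn (fun x => Wf p q x * deriv Φ (rho2 u x) ^ 2 * rho2 u x) D := by
  have hc : ContinuousOn (fun x => Wf p q x * deriv Φ (rho2 u x) ^ 2 * rho2 u x) (closure D) :=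
    (C.cW.mul (((h1.continuous_deriv (by simp)).comp_continuousOn C.crho).pow 2)).mul C.crho
  have h3 := C.int_ball hc R
  have h4 : IntegrableOn (fun x => Wf p q x * deriv Φ (rho2 u x) ^ 2 * rho2 u x)
      (D \ {x | rho2 u x ≤ R}) := by
    have hm : MeasurableSet (D \ {x | rho2 u x ≤ R}) := by
      have := C.isOpen.measurableSet.diff (C.meas_ball R)
      rwa [sdiff_self_inter] at this
    refine IntegrableOn.congr_fun (f := fun _ => (0 : ℝ)) integrableOn_zero ?_ hm
    intro x hx
    have hx2 : R < rho2 u x := not_le.1 hx.2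
    have : Φ =ᶠ[𝓝 (rho2 u x)] fun _ => 0 := by
      filter_upwards [Ioi_mem_nhds hx2] with z hz
      exact h2 z (le_of_lt hz)
    simp [this.deriv_eq]
  have := h3.union h4
  rwa [inter_union_sdiff] at this

/-- the conclusion principle -/
lemma conclude (C : Core D u p q H) {h : ℝ × ℝ → ℝ} (hc : ContinuousOn h D)
    (hnn : ∀ x ∈ D, 0 ≤ h x) (B : ℝ)
    (hyp : ∀ (Φ : ℝ → ℝ) (R : ℝ), ContDiff ℝ 1 Φ → (∀ y, R ≤ y → Φ y = 0) → ∀ ε, 0 < ε →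
      ∃ I : ℝ × ℝ → ℝ, IntegrableOn I D ∧ ∫ x in D, I x ≤ ε ∧ ∀ x ∈ D,
        Φ (rho2 u x) ^ 2 * h x ≤ I x + B * (Wf p q x * deriv Φ (rho2 u x) ^ 2 * rho2 u x)) :
    ∀ x ∈ D, h x = 0 := by
  intro x0 hx0
  by_contra hne
  have hpos : 0 < h x0 := lt_of_le_of_ne (hnn x0 hx0) (Ne.symm hne)
  -- small ball
  have hev : ∀ᶠ x in 𝓝 x0, x ∈ D ∧ h x0 / 2 < h x ∧ rho2 u x < rho2 u x0 + 1 := by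
    have e1 := C.isOpen.mem_nhds hx0
    have e2 := (hc.continuousAt e1).eventually (lt_mem_nhds (show h x0 / 2 < h x0 by linarith))
    have e3 := ((C.crho.mono subset_closure).continuousAt e1).eventually
      (gt_mem_nhds (show rho2 u x0 < rho2 u x0 + 1 by linarith))
    filter_upwards [e1, e2, e3] with x a b c using ⟨a, b, c⟩
  obtain ⟨r, hr, hball⟩ := Metric.eventually_nhds_iff_ball.1 hev
  set U := ball x0 r
  have hUpos : 0 < (volume : Measure (ℝ × ℝ)).real U :=
    ENNReal.toReal_pos (measure_ball_pos _ _ hr).ne' measure_ball_lt_top.ne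
  set δ := h x0 / 2 * (volume : Measure (ℝ × ℝ)).real U with hδ
  have hδ0 : 0 < δ := by positivity
  obtain ⟨Φ, R, g1, g2, g3, g4⟩ := C.cutoff (rho2 u x0 + 1) (δ / (4 * (|B| + 1))) (by positivity)
  obtain ⟨I, iI, hI, hle⟩ := hyp Φ R g1 g2 (δ / 4) (by positivity)
  have ic := C.int_cut g1 g2
  have hUD : U ⊆ D := fun x hx => (hball x hx).1
  have mU : MeasurableSet U := measurableSet_ball
  have iind : IntegrableOn (U.indicator fun _ => h x0 / 2) D := by
    rw [IntegrableOn, integrable_indicator_iff mU]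
    refine integrableOn_const ?_
    have hb : volume U ≠ ⊤ := measure_ball_lt_top.ne
    exact ne_top_of_le_ne_top hb (Measure.restrict_apply_le _ _)
  have key := setIntegral_mono_on iind (iI.add (ic.const_mul |B|)) C.isOpen.measurableSet
    (fun x hx => by
      have hl := hle x hx
      have hW := Wf_pos p q x
      have hr0 : 0 ≤ rho2 u x := by unfold rho2; positivity
      have h5 : B * (Wf p q x * deriv Φ (rho2 u x) ^ 2 * rho2 u x) ≤
        |B| * (Wf p q x * deriv Φ (rho2 u x) ^ 2 * rho2 u x) :=
        mul_le_mul_of_nonneg_right (le_abs_self B) (by positivity)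
      show _ ≤ I x + |B| * (Wf p q x * deriv Φ (rho2 u x) ^ 2 * rho2 u x)
      by_cases hxU : x ∈ U
      · rw [indicator_of_mem hxU]
        obtain ⟨_, h2, h3⟩ := hball x hxU
        rw [g3 _ h3.le] at hl
        linarith
      · rw [indicator_of_notMem hxU]
        have := hnn x hx
        have : 0 ≤ Φ (rho2 u x) ^ 2 * h x := by positivity
        linarith)
  rw [setIntegral_indicator mU, inter_eq_right.2 hUD, setIntegral_const, smul_eq_mul,
    integral_add' iI (ic.const_mul |B|), integral_const_mul, mul_comm] at key
  have h6 : |B| * ∫ x in D, Wf p q x * deriv Φ (rho2 u x) ^ 2 * rho2 u x ≤ δ / 4 := by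
    calc _ ≤ |B| * (δ / (4 * (|B| + 1))) := by gcongr
      _ ≤ (|B| + 1) * (δ / (4 * (|B| + 1))) := by gcongr; linarith
      _ = δ / 4 := by field_simp
  linarith

end Core



/-! ### Part 8: sign of the vertical derivative -/

namespace Core

variable {D : Set (ℝ × ℝ)} {u p q : ℝ × ℝ → ℝ} {H : ℝ}

lemma rho2_hasFDerivAt (C : Core D u p q H) {x} (hx : x ∈ D) :
    HasFDerivAt (rho2 u) ((2 * (x.1 + u x * p x)) • ContinuousLinearMap.fst ℝ ℝ ℝ +
      (2 * (x.2 + u x * q x)) • ContinuousLinearMap.snd ℝ ℝ ℝ) x := by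
  have h1 : HasFDerivAt (fun x : ℝ × ℝ => x.1) (ContinuousLinearMap.fst ℝ ℝ ℝ) x :=
    hasFDerivAt_fst
  have h2 : HasFDerivAt (fun x : ℝ × ℝ => x.2) (ContinuousLinearMap.snd ℝ ℝ ℝ) x :=
    hasFDerivAt_snd
  refine (((h1.pow 2).fun_add (h2.pow 2)).fun_add ((C.hud x hx).pow 2)).congr_fderiv ?_
  ext <;> simp <;> ring

lemma phi_hasFDerivAt (C : Core D u p q H) {x} (hx : x ∈ D) {Φ : ℝ → ℝ} (hΦ : ContDiff ℝ 1 Φ) :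
    HasFDerivAt (fun y => Φ (rho2 u y)) (deriv Φ (rho2 u x) •
      ((2 * (x.1 + u x * p x)) • ContinuousLinearMap.fst ℝ ℝ ℝ +
      (2 * (x.2 + u x * q x)) • ContinuousLinearMap.snd ℝ ℝ ℝ)) x :=
  ((hΦ.differentiable (by simp)) _).hasDerivAt.comp_hasFDerivAt x (C.rho2_hasFDerivAt hx)

lemma phi_contDiffOn (C : Core D u p q H) {Φ : ℝ → ℝ} (hΦ : ContDiff ℝ 1 Φ) :
    ContDiffOn ℝ 1 (fun y => Φ (rho2 u y)) D := by
  refine hΦ.comp_contDiffOn ?_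
  unfold rho2
  have := C.hu1
  fun_prop

lemma phi_Q (C : Core D u p q H) {x} (hx : x ∈ D) {Φ : ℝ → ℝ} (hΦ : ContDiff ℝ 1 Φ) :
    Qf (p x) (q x) (dS (fun y => Φ (rho2 u y)) x) (dT (fun y => Φ (rho2 u y)) x)
      (dS (fun y => Φ (rho2 u y)) x) (dT (fun y => Φ (rho2 u y)) x) * Wf p q x ≤
      4 * deriv Φ (rho2 u x) ^ 2 * rho2 u x := by
  have h := Qf_rho (p x) (q x) x.1 x.2 (u x) (deriv Φ (rho2 u x))
  unfold dS dT
  rw [(C.phi_hasFDerivAt hx hΦ).fderiv, ← le_div_iff₀ (Wf_pos p q x)]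
  simpa [rho2, Wf] using h

/-- a function with vanishing gradient on a superlevel set -/
lemma clopen (C : Core D u p q H) {f : ℝ × ℝ → ℝ} (hf : ContDiffOn ℝ 1 f D) {T : Set ℝ}
    (hT : IsOpen T) (h0 : ∀ x ∈ D, f x ∈ T → fderiv ℝ f x = 0) {x₀} (hx₀ : x₀ ∈ D)
    (hfx : f x₀ ∈ T) : ∀ x ∈ D, f x = f x₀ := by
  have hsub : D ⊆ {x | x ∈ D ∧ f x = f x₀} := by
    have hcl : ∀ y ∈ D, f y ∈ T → ∃ r > 0, ball y r ⊆ D ∧ ∀ z ∈ ball y r, f z = f y := by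
      intro y hy hyT
      have hO : IsOpen (D ∩ f ⁻¹' T) := hf.continuousOn.isOpen_inter_preimage C.isOpen hT
      obtain ⟨r, hr, hb⟩ := Metric.isOpen_iff.1 hO y ⟨hy, hyT⟩
      refine ⟨r, hr, fun z hz => (hb hz).1, fun z hz => ?_⟩
      refine (convex_ball y r).is_const_of_fderivWithin_eq_zero (𝕜 := ℝ) ?_ ?_ hz
        (mem_ball_self hr)
      · exact (hf.differentiableOn (by simp)).mono fun z hz => (hb hz).1
      · intro z hz
        rw [fderivWithin_of_isOpen isOpen_ball hz]
        exact h0 z (hb hz).1 (hb hz).2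
    have hop : IsOpen {x | x ∈ D ∧ f x = f x₀} := by
      rw [Metric.isOpen_iff]
      rintro y ⟨hy, hyf⟩
      obtain ⟨r, hr, h1, h2⟩ := hcl y hy (hyf ▸ hfx)
      exact ⟨r, hr, fun z hz => ⟨h1 hz, (h2 z hz).trans hyf⟩⟩
    have hop2 : IsOpen (D ∩ f ⁻¹' {f x₀}ᶜ) :=
      hf.continuousOn.isOpen_inter_preimage C.isOpen isOpen_compl_singleton
    refine C.conn.isPreconnected.subset_left_of_subset_union hop hop2 ?_ ?_ ⟨x₀, hx₀, hx₀, rfl⟩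
    · rw [Set.disjoint_left]
      rintro y ⟨_, h1⟩ ⟨_, h2⟩
      exact h2 h1
    · intro y hy
      by_cases h : f y = f x₀
      · exact Or.inl ⟨hy, h⟩
      · exact Or.inr ⟨hy, h⟩
  exact fun x hx => (hsub hx).2

lemma amgm_aux {φ s s' y a b c : ℝ} (hs' : 0 ≤ s') (hs : s ^ 2 ≤ y ^ 2 * s') (ha : 0 ≤ a)
    (hb : 0 ≤ b) (hc : c ^ 2 ≤ a * b) :
    2 * (φ * s * c) ≤ φ ^ 2 * s' * a / 2 + 2 * (y ^ 2 * b) := by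
  have h1 : (φ * s * c) ^ 2 ≤ (φ ^ 2 * s' * a) * (y ^ 2 * b) := by
    calc (φ * s * c) ^ 2 = φ ^ 2 * (s ^ 2 * c ^ 2) := by ring
      _ ≤ φ ^ 2 * ((y ^ 2 * s') * (a * b)) := by
        apply mul_le_mul_of_nonneg_left _ (by positivity)
        exact mul_le_mul hs hc (by positivity) (by positivity)
      _ = _ := by ring
  have h2 : 0 ≤ φ ^ 2 * s' * a := by positivity
  have h3 : 0 ≤ y ^ 2 * b := by positivity
  generalize φ ^ 2 * s' * a = A at *
  generalize y ^ 2 * b = B at *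
  generalize φ * s * c = X at *
  have : X ≤ A / 4 + B := by
    apply le_of_sq_le_sq _ (by positivity)
    nlinarith [sq_nonneg (A / 4 - B)]
  linarith

/-- If `q ≥ 0` on the boundary then `q ≥ 0` inside. -/
lemma q_nonneg (C : Core D u p q H) (hq : ∀ x ∈ frontier D, 0 ≤ q x) : ∀ x ∈ D, 0 ≤ q x := by
  intro x₀ hx₀
  by_contra hneg
  push Not at hneg
  obtain ⟨ε, hε, hε2⟩ : ∃ ε, 0 < ε ∧ q x₀ < -ε := ⟨-q x₀ / 2, by linarith, by linarith⟩
  have hcq : ∀ e, ContinuousOn (fun x => fderiv ℝ q x e) D := contDiffOn_fderiv_apply C.isOpen C.hq1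
  have hpc := C.hp.mono subset_closure
  have hqc := C.hq.mono subset_closure
  have key := C.conclude (h := fun x => 1 / 2 * spos' (-q x - ε) *
    Qf (p x) (q x) (dS q x) (dT q x) (dS q x) (dT q x)) ?_ ?_ 8 ?_
  · have hg : ∀ x ∈ D, q x ∈ Iio (-ε) → fderiv ℝ q x = 0 := by
      intro x hx hxq
      have hxq : q x < -ε := hxq
      have h1 := key x hx
      have h2 := spos'_pos (y := -q x - ε) (by linarith)
      have h3 : Qf (p x) (q x) (dS q x) (dT q x) (dS q x) (dT q x) = 0 := by
        rcases mul_eq_zero.1 h1 with h | h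
        · linarith
        · exact h
      obtain ⟨h4, h5⟩ := Qf_zero h3
      ext
      · simpa [dS] using h4
      · simpa [dT] using h5
    have hc := C.clopen C.hq1 isOpen_Iio hg hx₀ hε2
    obtain ⟨z, hz⟩ := C.bdc.nonempty
    have hzc : z ∈ closure D := frontier_subset_closure hz
    have : q z = q x₀ := by
      have hcl : closure D ⊆ closure D ∩ q ⁻¹' {q x₀} := by
        apply closure_minimal
        · exact fun y hy => ⟨subset_closure hy, hc y hy⟩
        · exact C.hq.preimage_isClosed_of_isClosed isClosed_closure isClosed_singleton
      exact (hcl hzc).2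
    linarith [hq z hz]
  · refine ContinuousOn.mul (continuousOn_const.mul (continuous_spos'.comp_continuousOn
      (hqc.neg.sub continuousOn_const))) ?_
    unfold Qf dS dT
    have h1 := hcq (1, 0)
    have h2 := hcq (0, 1)
    refine ContinuousOn.div (by fun_prop) (by fun_prop) fun x _ => by positivity
  · intro x hx
    have := spos'_nonneg (-q x - ε)
    have := Qf_nonneg (p x) (q x) (dS q x) (dT q x)
    positivity
  · intro Φ R hΦ hΦ0 ε' hε'
    set φ := fun y => Φ (rho2 u y) with hφ
    set ψ := fun y => φ y ^ 2 * spos (-q y - ε) with hψ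
    have hφ1 : ContDiffOn ℝ 1 φ D := C.phi_contDiffOn hΦ
    have hψ1 : ContDiffOn ℝ 1 ψ D :=
      (hφ1.pow 2).mul (contDiff_spos.comp_contDiffOn (C.hq1.neg.sub contDiffOn_const))
    have hK := cpt (D := D) C.hq (isClosed_Iic (a := -ε)) R
    have hKD := C.cpt_sub (f := q) (T := Iic (-ε)) (R := R) fun x hx hxT => by
      have := hq x hx
      have hxT : q x ≤ -ε := hxT
      linarith
    have hw := C.weakT hK hKD hψ1 fun x hx hxK => by
      by_cases h1 : q x ≤ -ε
      · by_cases h2 : x.1 ^ 2 + x.2 ^ 2 ≤ R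
        · exact absurd ⟨subset_closure hx, h2, h1⟩ hxK
        · have : φ x = 0 := by
            apply hΦ0
            unfold rho2
            nlinarith [sq_nonneg (u x)]
          simp [hψ, this]
      · simp [hψ, spos_of_nonpos (y := -q x - ε) (by linarith)]
    have hd : ∀ x ∈ D, ∀ e, fderiv ℝ ψ x e = 2 * φ x * spos (-q x - ε) * fderiv ℝ φ x e
        - φ x ^ 2 * spos' (-q x - ε) * fderiv ℝ q x e := by
      intro x hx e
      have d1 := (C.phi_hasFDerivAt hx hΦ).differentiableAt.hasFDerivAt
      have d2 := (hasDerivAt_spos (-q x - ε)).comp_hasFDerivAt x ((C.qd hx).fun_neg.sub_const ε)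
      have := (d1.pow 2).fun_mul d2
      have e1 := this.fderiv
      have e2 : fderiv ℝ ψ x = _ := e1
      rw [e2]
      simp [hφ]
      ring
    have hz : ∀ x ∈ D, x ∉ {x : ℝ × ℝ | x ∈ closure D ∧ x.1 ^ 2 + x.2 ^ 2 ≤ R ∧ q x ∈ Iic (-ε)} →
        ∀ e, fderiv ℝ ψ x e = 0 := by
      intro x hx hxK e
      have : ψ =ᶠ[𝓝 x] fun _ => (0 : ℝ) := by
        filter_upwards [hK.isClosed.isOpen_compl.mem_nhds hxK, C.isOpen.mem_nhds hx] with y hy hyD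
        by_cases h1 : q y ≤ -ε
        · by_cases h2 : y.1 ^ 2 + y.2 ^ 2 ≤ R
          · exact absurd ⟨subset_closure hyD, h2, h1⟩ hy
          · have : φ y = 0 := by
              apply hΦ0
              unfold rho2
              nlinarith [sq_nonneg (u y)]
            simp [hψ, this]
        · simp [hψ, spos_of_nonpos (y := -q y - ε) (by linarith)]
      rw [this.fderiv_eq]; simp
    refine ⟨fun x => -Qf (p x) (q x) (dS q x) (dT q x) (dS ψ x) (dT ψ x), ?_, ?_, ?_⟩
    · refine (cs_integrable C.isOpen hK hKD ?_ ?_).neg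
      · unfold Qf dS dT
        have h1 := hcq (1, 0)
        have h2 := hcq (0, 1)
        have h3 := contDiffOn_fderiv_apply C.isOpen hψ1 (1, 0)
        have h4 := contDiffOn_fderiv_apply C.isOpen hψ1 (0, 1)
        refine ContinuousOn.div (by fun_prop) (by fun_prop) fun x _ => by positivity
      · intro x hx hxK
        simp [dS, dT, hz x hx hxK, Qf]
    · rw [integral_neg, hw]; linarith
    · intro x hx
      have hW := Wf_pos p q x
      have h1 := C.phi_Q hx hΦ
      show _ ≤ -Qf (p x) (q x) (dS q x) (dT q x) (dS ψ x) (dT ψ x) + _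
      rw [show dS ψ x = _ from hd x hx _, show dT ψ x = _ from hd x hx _]
      have ha := Qf_nonneg (p x) (q x) (dS q x) (dT q x)
      have hb := Qf_nonneg (p x) (q x) (dS φ x) (dT φ x)
      have hcs := Qf_cs (p x) (q x) (dS q x) (dT q x) (dS φ x) (dT φ x)
      have e1 : Qf (p x) (q x) (dS q x) (dT q x)
          (2 * φ x * spos (-q x - ε) * fderiv ℝ φ x (1, 0)
            - φ x ^ 2 * spos' (-q x - ε) * fderiv ℝ q x (1, 0))
          (2 * φ x * spos (-q x - ε) * fderiv ℝ φ x (0, 1)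
            - φ x ^ 2 * spos' (-q x - ε) * fderiv ℝ q x (0, 1)) =
          2 * (φ x * spos (-q x - ε) * Qf (p x) (q x) (dS q x) (dT q x) (dS φ x) (dT φ x)) -
          φ x ^ 2 * spos' (-q x - ε) * Qf (p x) (q x) (dS q x) (dT q x) (dS q x) (dT q x) := by
        unfold Qf dS dT; ring
      rw [e1]
      change Qf (p x) (q x) (dS φ x) (dT φ x) (dS φ x) (dT φ x) * Wf p q x ≤ _ at h1
      generalize Qf (p x) (q x) (dS q x) (dT q x) (dS φ x) (dT φ x) = c at *
      generalize Qf (p x) (q x) (dS q x) (dT q x) (dS q x) (dT q x) = a at *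
      generalize Qf (p x) (q x) (dS φ x) (dT φ x) (dS φ x) (dT φ x) = b at *
      change φ x ^ 2 * _ ≤ _
      by_cases hy : -q x - ε ≤ 0
      · have hr0 : 0 ≤ rho2 u x := by unfold rho2; positivity
        rw [spos_of_nonpos hy, spos'_of_nonpos hy]
        have : 0 ≤ 8 * (Wf p q x * deriv Φ (rho2 u x) ^ 2 * rho2 u x) := by positivity
        linarith
      · push Not at hy
        have h2 := amgm_aux (φ := φ x) (spos'_nonneg (-q x - ε)) (spos_sq_le _) ha hb hcs
        have hyW : (-q x - ε) ^ 2 ≤ Wf p q x ^ 2 := by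
          rw [Wf_sq]; nlinarith [sq_nonneg (p x)]
        have h3 : (-q x - ε) ^ 2 * b ≤ 4 * (Wf p q x * deriv Φ (rho2 u x) ^ 2 * rho2 u x) := by
          calc _ ≤ Wf p q x ^ 2 * b := mul_le_mul_of_nonneg_right hyW hb
            _ = Wf p q x * (b * Wf p q x) := by ring
            _ ≤ Wf p q x * (4 * deriv Φ (rho2 u x) ^ 2 * rho2 u x) :=
              mul_le_mul_of_nonneg_left h1 hW.le
            _ = _ := by ring
        linarith

end Core


/-! ### Part 9: the P-function -/

namespace Core

variable {D : Set (ℝ × ℝ)} {u p q : ℝ × ℝ → ℝ} {H : ℝ}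

/-- P-function -/
def Pf (u p q : ℝ × ℝ → ℝ) (H : ℝ) (x : ℝ × ℝ) : ℝ := H * u x - 1 / Wf p q x

/-- first component of `q∇p - p∇q` -/
def xi1 (p q : ℝ × ℝ → ℝ) (x : ℝ × ℝ) : ℝ := q x * dS p x - p x * dS q x
/-- second component of `q∇p - p∇q` -/
def xi2 (p q : ℝ × ℝ → ℝ) (x : ℝ × ℝ) : ℝ := q x * dT p x - p x * dT q x

lemma Pf_hasFDerivAt (C : Core D u p q H) {x} (hx : x ∈ D) :
    HasFDerivAt (Pf u p q H) (H • (p x • ContinuousLinearMap.fst ℝ ℝ ℝ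
      + q x • ContinuousLinearMap.snd ℝ ℝ ℝ) +
      (Wf p q x ^ 3)⁻¹ • (p x • fderiv ℝ p x + q x • fderiv ℝ q x)) x := by
  refine (((C.hud x hx).const_mul H).fun_sub (hasFDerivAt_invW (C.pd hx) (C.qd hx))).congr_fderiv ?_
  rw [sub_neg_eq_add]

lemma Pf_dS (C : Core D u p q H) {x} (hx : x ∈ D) : dS (Pf u p q H) x =
    ((1 + p x ^ 2) * xi2 p q x - p x * q x * xi1 p q x) / Wf p q x ^ 3 := by
  have hW := Wf_pos p q x
  have h1 := C.eq' hx
  have hc := C.cross x hx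
  rw [dS, (C.Pf_hasFDerivAt hx).fderiv, eq_div_iff (by positivity)]
  unfold xi1 xi2 dS dT at *
  simp only [add_apply, smul_apply, smul_eq_mul, ContinuousLinearMap.coe_fst',
    ContinuousLinearMap.coe_snd']
  rw [add_mul, mul_comm (_⁻¹), inv_mul_cancel_right₀ (by positivity)]
  rw [hc] at h1 ⊢
  linear_combination p x * h1

lemma Pf_dT (C : Core D u p q H) {x} (hx : x ∈ D) : dT (Pf u p q H) x =
    - (((1 + q x ^ 2) * xi1 p q x - p x * q x * xi2 p q x) / Wf p q x ^ 3) := by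
  have hW := Wf_pos p q x
  have h1 := C.eq' hx
  have hc := C.cross x hx
  rw [dT, (C.Pf_hasFDerivAt hx).fderiv, ← neg_div, eq_div_iff (by positivity)]
  unfold xi1 xi2 dS dT at *
  simp only [add_apply, smul_apply, smul_eq_mul, ContinuousLinearMap.coe_fst',
    ContinuousLinearMap.coe_snd']
  rw [add_mul, mul_comm (_⁻¹), inv_mul_cancel_right₀ (by positivity)]
  rw [hc] at h1 ⊢
  linear_combination q x * h1

lemma Pf_Q (C : Core D u p q H) {x} (hx : x ∈ D) (a b : ℝ) :
    dS (Pf u p q H) x * b - dT (Pf u p q H) x * a =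
      Qf (p x) (q x) (xi1 p q x) (xi2 p q x) a b := by
  rw [C.Pf_dS hx, C.Pf_dT hx, Qf]
  change _ = _ / Wf p q x ^ 3
  ring

lemma Pf_contDiffOn (C : Core D u p q H) : ContDiffOn ℝ 1 (Pf u p q H) D :=
  (contDiffOn_const.mul C.hu1).sub (contDiffOn_const.div (contDiffOn_Wf C.hp1 C.hq1)
    fun x _ => (Wf_pos p q x).ne')

lemma Pf_cont (C : Core D u p q H) : ContinuousOn (Pf u p q H) (closure D) :=
  (continuousOn_const.mul C.hu).sub (continuousOn_const.div C.cW fun x _ => (Wf_pos p q x).ne')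

lemma amgm2 {φ g N a b c : ℝ} (hN : 0 < N) (ha : 0 ≤ a)
    (hb : 0 ≤ b) (hc : c ^ 2 ≤ a * b) :
    -(φ ^ 2 * a / N / 2 + 2 * (g ^ 2 * N * b)) ≤ 2 * (φ * g * c) := by
  have h := amgm_aux (φ := φ) (s := -g) (s' := 1 / N) (y := g * √N) (a := a) (b := b) (c := c)
    (by positivity) (by
      rw [mul_pow, Real.sq_sqrt hN.le]; field_simp; exact le_refl _) ha hb hc
  rw [mul_pow, Real.sq_sqrt hN.le] at h
  have : φ ^ 2 * (1 / N) * a / 2 = φ ^ 2 * a / N / 2 := by ring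
  linarith

lemma delta_aux {p q δ : ℝ} (hq : 0 ≤ q) (hδ : 0 < δ) (a b : ℝ) :
    |δ * (q * a - p * b) / ((q + δ) ^ 2 + p ^ 2)| ≤ |a| + |b| := by
  have hN : 0 < (q + δ) ^ 2 + p ^ 2 := by positivity
  rw [abs_div, abs_of_pos hN, div_le_iff₀ hN, abs_mul, abs_of_pos hδ]
  have h1 : |q * a - p * b| ≤ q * |a| + |p| * |b| := by
    calc _ ≤ |q * a| + |p * b| := abs_sub _ _
      _ = _ := by rw [abs_mul, abs_mul, abs_of_nonneg hq]
  have h2 : δ * q ≤ (q + δ) ^ 2 + p ^ 2 := by nlinarith [sq_nonneg p]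
  have h3 : δ * |p| ≤ (q + δ) ^ 2 + p ^ 2 := by
    rw [← sq_abs p]; nlinarith [sq_nonneg (q + δ - |p|), abs_nonneg p]
  calc δ * |q * a - p * b| ≤ δ * (q * |a| + |p| * |b|) := mul_le_mul_of_nonneg_left h1 hδ.le
    _ = (δ * q) * |a| + (δ * |p|) * |b| := by ring
    _ ≤ ((q + δ) ^ 2 + p ^ 2) * |a| + ((q + δ) ^ 2 + p ^ 2) * |b| :=
      add_le_add (mul_le_mul_of_nonneg_right h2 (abs_nonneg _))
        (mul_le_mul_of_nonneg_right h3 (abs_nonneg _))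
    _ = _ := by ring

lemma delta_tendsto {p q : ℝ} (a b : ℝ) :
    Tendsto (fun n : ℕ => |(1 / ((n : ℝ) + 1)) * (q * a - p * b) /
      ((q + 1 / ((n : ℝ) + 1)) ^ 2 + p ^ 2)|) atTop (𝓝 0) := by
  have h0 : Tendsto (fun n : ℕ => 1 / ((n : ℝ) + 1)) atTop (𝓝 0) :=
    tendsto_one_div_add_atTop_nhds_zero_nat
  by_cases h : p = 0 ∧ q = 0
  · simp [h.1, h.2]
  · have hne : (q + 0) ^ 2 + p ^ 2 ≠ 0 := by
      intro h'
      exact h ⟨by nlinarith, by nlinarith⟩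
    have := (((h0.mul_const (q * a - p * b)).div (((h0.const_add q).pow 2).add_const (p ^ 2))
      hne)).abs
    simpa using this

end Core


/-! ### Part 10: constancy of the P-function -/

lemma kep'_zero {ε y : ℝ} (hε : 0 < ε) (h : |y| ≤ ε) : kep' ε y = 0 := by
  obtain ⟨h1, h2⟩ := abs_le.1 h
  have a1 : y / ε - 1 ≤ 0 := by rw [sub_nonpos, div_le_one hε]; exact h2
  have a2 : -y / ε - 1 ≤ 0 := by rw [sub_nonpos, div_le_one hε]; linarith
  rw [kep', spos'_of_nonpos a1, spos'_of_nonpos a2, add_zero]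

lemma kep'_pos {ε y : ℝ} (hε : 0 < ε) (h : ε < |y|) : 0 < kep' ε y := by
  rcases lt_abs.1 h with h | h
  · have : 0 < y / ε - 1 := by rw [sub_pos, one_lt_div hε]; exact h
    exact add_pos_of_pos_of_nonneg (spos'_pos this) (spos'_nonneg _)
  · have : 0 < -y / ε - 1 := by rw [sub_pos, one_lt_div hε]; exact h
    exact add_pos_of_nonneg_of_pos (spos'_nonneg _) (spos'_pos this)

lemma continuous_kep' (ε : ℝ) : Continuous (kep' ε) := by
  unfold kep'
  exact (continuous_spos'.comp (by fun_prop)).add (continuous_spos'.comp (by fun_prop))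

namespace Core

variable {D : Set (ℝ × ℝ)} {u p q : ℝ × ℝ → ℝ} {H : ℝ}

lemma continuousOn_Qf {P Q a b c d : ℝ × ℝ → ℝ} {D : Set (ℝ × ℝ)} (hP : ContinuousOn P D)
    (hQ : ContinuousOn Q D) (ha : ContinuousOn a D) (hb : ContinuousOn b D)
    (hc : ContinuousOn c D) (hd : ContinuousOn d D) :
    ContinuousOn (fun x => Qf (P x) (Q x) (a x) (b x) (c x) (d x)) D := by
  unfold Qf
  exact ContinuousOn.div (by fun_prop) (by fun_prop) fun x _ => by positivity

set_option maxHeartbeats 2000000 in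
lemma xi_zero (C : Core D u p q H) (hq : ∀ x ∈ D, 0 ≤ q x) {P₀ : ℝ}
    (hP : ∀ x ∈ frontier D, Pf u p q H x = P₀) {ε : ℝ} (hε : 0 < ε) :
    ∀ x ∈ D, kep' ε (Pf u p q H x - P₀) / (4 * Wf p q x ^ 2) *
      Qf (p x) (q x) (xi1 p q x) (xi2 p q x) (xi1 p q x) (xi2 p q x) = 0 := by
  have hcp : ∀ e, ContinuousOn (fun x => fderiv ℝ p x e) D := contDiffOn_fderiv_apply C.isOpen C.hp1
  have hcq : ∀ e, ContinuousOn (fun x => fderiv ℝ q x e) D := contDiffOn_fderiv_apply C.isOpen C.hq1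
  have hpc := C.hp.mono subset_closure
  have hqc := C.hq.mono subset_closure
  have hWc := C.cW.mono subset_closure
  have hPc := C.Pf_cont.mono subset_closure
  have hSp : ContinuousOn (dS p) D := hcp _
  have hTp : ContinuousOn (dT p) D := hcp _
  have hSq : ContinuousOn (dS q) D := hcq _
  have hTq : ContinuousOn (dT q) D := hcq _
  have hx1 : ContinuousOn (xi1 p q) D := (hqc.mul hSp).sub (hpc.mul hSq)
  have hx2 : ContinuousOn (xi2 p q) D := (hqc.mul hTp).sub (hpc.mul hTq)
  have hkc : ContinuousOn (fun x => kep' ε (Pf u p q H x - P₀)) D :=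
    (continuous_kep' ε).comp_continuousOn (hPc.sub continuousOn_const)
  refine C.conclude ?_ ?_ 128 ?_
  · exact (hkc.div (by fun_prop) fun x _ => by have := Wf_pos p q x; positivity).mul
      (continuousOn_Qf hpc hqc hx1 hx2 hx1 hx2)
  · intro x hx
    have := Wf_pos p q x
    exact mul_nonneg (div_nonneg (kep'_nonneg _ _) (by positivity)) (Qf_nonneg _ _ _ _)
  · intro Φ R hΦ hΦ0 ε' hε'
    set φ := fun y => Φ (rho2 u y) with hφ
    set k' := fun x => kep' ε (Pf u p q H x - P₀) with hk'
    set f := fun x => kep ε (Pf u p q H x - P₀) with hf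
    have hφ1 : ContDiffOn ℝ 1 φ D := C.phi_contDiffOn hΦ
    have hf1 : ContDiffOn ℝ 1 f D :=
      (contDiff_kep ε).comp_contDiffOn (C.Pf_contDiffOn.sub contDiffOn_const)
    set T : Set ℝ := {y | ε ≤ |y - P₀|} with hT
    have hTc : IsClosed T := isClosed_le continuous_const (by fun_prop)
    have hK := cpt (D := D) C.Pf_cont hTc R
    have hKD := C.cpt_sub (f := Pf u p q H) (T := T) (R := R) fun x hx hxT => by
      have hxT : ε ≤ |Pf u p q H x - P₀| := hxT
      rw [hP x hx, sub_self, abs_zero] at hxT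
      linarith
    set K := {x : ℝ × ℝ | x ∈ closure D ∧ x.1 ^ 2 + x.2 ^ 2 ≤ R ∧ Pf u p q H x ∈ T} with hKdef
    have hφz : ∀ x : ℝ × ℝ, R ≤ x.1 ^ 2 + x.2 ^ 2 → φ x = 0 := by
      intro x hx
      apply hΦ0
      unfold rho2
      nlinarith [sq_nonneg (u x)]
    -- off K : φ or k' vanish
    have hoff : ∀ x ∈ D, x ∉ K → k' x = 0 ∨ φ x = 0 := by
      intro x hx hxK
      by_cases h2 : x.1 ^ 2 + x.2 ^ 2 ≤ R
      · left
        refine kep'_zero hε ?_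
        by_contra h
        push Not at h
        exact hxK ⟨subset_closure hx, h2, h.le⟩
      · right
        exact hφz x (le_of_not_ge h2)
    have hoff2 : ∀ x ∈ D, x ∉ K → f =ᶠ[𝓝 x] (fun _ => 0) ∨ φ =ᶠ[𝓝 x] fun _ => 0 := by
      intro x hx hxK
      by_cases h2 : x.1 ^ 2 + x.2 ^ 2 ≤ R
      · left
        have h3 : |Pf u p q H x - P₀| < ε := by
          by_contra h
          push Not at h
          exact hxK ⟨subset_closure hx, h2, h⟩
        have hca : ContinuousAt (fun x => |Pf u p q H x - P₀|) x :=
          ((hPc.continuousAt (C.isOpen.mem_nhds hx)).sub continuousAt_const).abs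
        filter_upwards [hca.eventually (Iio_mem_nhds h3)] with y hy
        exact kep_zero hε (le_of_lt hy)
      · right
        push Not at h2
        have hca : Continuous (fun x : ℝ × ℝ => x.1 ^ 2 + x.2 ^ 2) := by fun_prop
        filter_upwards [hca.continuousAt.eventually (Ioi_mem_nhds h2)] with y hy
        exact hφz y (le_of_lt hy)
    -- the error terms
    set a := fun x => Qf (p x) (q x) (dS p x) (dT p x) (dS p x) (dT p x) with ha
    set b := fun x => Qf (p x) (q x) (dS q x) (dT q x) (dS p x) (dT p x) with hb
    have hac : ContinuousOn a D := continuousOn_Qf hpc hqc hSp hTp hSp hTp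
    have hbc : ContinuousOn b D := continuousOn_Qf hpc hqc hSq hTq hSp hTp
    have hφc : ContinuousOn φ D := hφ1.continuousOn
    set E := fun (δ : ℝ) x => k' x * φ x ^ 2 * |δ * (q x * a x - p x * b x) /
      ((q x + δ) ^ 2 + p x ^ 2)| with hE
    have hEc : ∀ δ, 0 < δ → ContinuousOn (E δ) D := by
      intro δ hδ
      refine (hkc.mul (hφc.pow 2)).mul (ContinuousOn.abs ?_)
      refine ContinuousOn.div (by fun_prop) (by fun_prop) fun x hx => ?_
      have := hq x hx
      positivity
    have hEi : ∀ δ, 0 < δ → IntegrableOn (E δ) D := by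
      intro δ hδ
      refine cs_integrable C.isOpen hK hKD (hEc δ hδ) fun x hx hxK => ?_
      rcases hoff x hx hxK with h | h <;> simp [hE, h]
    have hlim : Tendsto (fun n : ℕ => ∫ x in D, E (1 / ((n : ℝ) + 1)) x) atTop (𝓝 0) := by
      have := tendsto_integral_of_dominated_convergence (μ := volume.restrict D)
        (F := fun n : ℕ => E (1 / ((n : ℝ) + 1))) (f := fun _ => (0 : ℝ))
        (fun x => k' x * φ x ^ 2 * (|a x| + |b x|)) ?_ ?_ ?_ ?_
      · simpa using this
      · intro n
        exact (hEc _ (by positivity)).aestronglyMeasurable C.isOpen.measurableSet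
      · refine cs_integrable C.isOpen hK hKD
          ((hkc.mul (hφc.pow 2)).mul (hac.abs.add hbc.abs)) fun x hx hxK => ?_
        rcases hoff x hx hxK with h | h <;> simp [h]
      · intro n
        refine (ae_restrict_iff' C.isOpen.measurableSet).2 (Eventually.of_forall fun x hx => ?_)
        have hkn : 0 ≤ k' x := kep'_nonneg _ _
        rw [Real.norm_eq_abs, abs_of_nonneg (by positivity)]
        exact mul_le_mul_of_nonneg_left (delta_aux (hq x hx) (by positivity) _ _) (by positivity)
      · refine Eventually.of_forall fun x => ?_
        have := (delta_tendsto (p := p x) (q := q x) (a x) (b x)).const_mul (k' x * φ x ^ 2)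
        simpa using this
    obtain ⟨n, hn⟩ := (hlim.eventually (Iio_mem_nhds hε')).exists
    set δ : ℝ := 1 / ((n : ℝ) + 1) with hδ
    have hδ0 : 0 < δ := by positivity
    have hδ1 : δ ≤ 1 := by
      rw [hδ, div_le_one (by positivity)]; linarith [Nat.cast_nonneg (α := ℝ) n]
    set g := fun x => Real.arctan (p x / (q x + δ)) with hg
    have hg1 : ContDiffOn ℝ 1 g D := by
      refine Real.contDiff_arctan.comp_contDiffOn (C.hp1.div (C.hq1.add contDiffOn_const) ?_)
      intro x hx
      have := hq x hx
      positivity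
    set ψ := fun x => φ x ^ 2 * g x with hψ
    have hψ1 : ContDiffOn ℝ 1 ψ D := (hφ1.pow 2).mul hg1
    have hjac := jac_zero' C.isOpen hK hKD hf1 hψ1 fun x hx hxK => by
      rcases hoff2 x hx hxK with h | h
      · exact Or.inl h
      · right
        filter_upwards [h] with y hy
        simp [hψ, hy]
    have hfd : ∀ x ∈ D, ∀ e, fderiv ℝ f x e = k' x * fderiv ℝ (Pf u p q H) x e := by
      intro x hx e
      have d := (hasDerivAt_kep hε (Pf u p q H x - P₀)).comp_hasFDerivAt x
        ((C.Pf_hasFDerivAt hx).differentiableAt.hasFDerivAt.sub_const P₀)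
      have e1 : fderiv ℝ f x = _ := d.fderiv
      rw [e1]; rfl
    have hψd : ∀ x ∈ D, ∀ e, fderiv ℝ ψ x e = 2 * φ x * g x * fderiv ℝ φ x e + φ x ^ 2 *
        (((q x + δ) * fderiv ℝ p x e - p x * fderiv ℝ q x e) / ((q x + δ) ^ 2 + p x ^ 2)) := by
      intro x hx e
      have hqx := hq x hx
      have hqd : 0 < q x + δ := by positivity
      have d1 := (C.phi_hasFDerivAt hx hΦ).differentiableAt.hasFDerivAt
      have d2 := (hasFDerivAt_div (C.pd hx) ((C.qd hx).add_const δ) hqd.ne')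
      have d3 := (Real.hasDerivAt_arctan (p x / (q x + δ))).comp_hasFDerivAt x d2
      have e1 : fderiv ℝ ψ x = _ := ((d1.pow 2).fun_mul d3).fderiv
      rw [e1]
      simp [hφ, hg]
      field_simp
      ring
    have hJ : ∀ x ∈ D, dS f x * dT ψ x - dT f x * dS ψ x =
        k' x * (φ x ^ 2 * (Qf (p x) (q x) (xi1 p q x) (xi2 p q x) (xi1 p q x) (xi2 p q x) +
          δ * (q x * a x - p x * b x)) / ((q x + δ) ^ 2 + p x ^ 2) +
          2 * (φ x * g x * Qf (p x) (q x) (xi1 p q x) (xi2 p q x) (dS φ x) (dT φ x))) := by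
      intro x hx
      have h1 := C.Pf_Q hx (dS ψ x) (dT ψ x)
      rw [show dS f x = _ from hfd x hx _, show dT f x = _ from hfd x hx _]
      have h2 : k' x * fderiv ℝ (Pf u p q H) x (1, 0) * dT ψ x -
          k' x * fderiv ℝ (Pf u p q H) x (0, 1) * dS ψ x =
          k' x * Qf (p x) (q x) (xi1 p q x) (xi2 p q x) (dS ψ x) (dT ψ x) := by
        rw [← h1]; unfold dS dT; ring
      rw [h2]
      congr 1
      rw [show dS ψ x = _ from hψd x hx _, show dT ψ x = _ from hψd x hx _]
      have hqx := hq x hx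
      have hN : (q x + δ) ^ 2 + p x ^ 2 ≠ 0 := by positivity
      have hw : √(1 + p x ^ 2 + q x ^ 2) ≠ 0 := by positivity
      simp only [ha, hb]
      unfold Qf xi1 xi2 dS dT
      field_simp
      ring
    have hJi : IntegrableOn (fun x => dS f x * dT ψ x - dT f x * dS ψ x) D := by
      have c1 := contDiffOn_fderiv_apply C.isOpen hf1
      have c2 := contDiffOn_fderiv_apply C.isOpen hψ1
      refine cs_integrable C.isOpen hK hKD (((c1 _).mul (c2 _)).sub ((c1 _).mul (c2 _))) ?_
      intro x hx hxK
      rw [hJ x hx]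
      rcases hoff x hx hxK with h | h <;> simp [h]
    refine ⟨fun x => (dS f x * dT ψ x - dT f x * dS ψ x) + E δ x, hJi.add (hEi δ hδ0), ?_, ?_⟩
    · rw [integral_add hJi (hEi δ hδ0), hjac, zero_add]
      exact le_of_lt hn
    · intro x hx
      have hqx := hq x hx
      have hW := Wf_pos p q x
      have hk0 : 0 ≤ k' x := kep'_nonneg _ _
      have hk2 : k' x ≤ 2 := kep'_le _ _
      have hr0 : 0 ≤ rho2 u x := by unfold rho2; positivity
      have h1 : Qf (p x) (q x) (dS φ x) (dT φ x) (dS φ x) (dT φ x) * Wf p q x ≤ _ := C.phi_Q hx hΦ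
      show φ x ^ 2 * (k' x / _ * _) ≤ (dS f x * dT ψ x - dT f x * dS ψ x) + E δ x + _
      rw [hJ x hx]
      have hA := Qf_nonneg (p x) (q x) (xi1 p q x) (xi2 p q x)
      have hB := Qf_nonneg (p x) (q x) (dS φ x) (dT φ x)
      have hcs := Qf_cs (p x) (q x) (xi1 p q x) (xi2 p q x) (dS φ x) (dT φ x)
      generalize Qf (p x) (q x) (xi1 p q x) (xi2 p q x) (dS φ x) (dT φ x) = c at *
      generalize Qf (p x) (q x) (xi1 p q x) (xi2 p q x) (xi1 p q x) (xi2 p q x) = A at *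
      generalize Qf (p x) (q x) (dS φ x) (dT φ x) (dS φ x) (dT φ x) = B at *
      have hN : 0 < (q x + δ) ^ 2 + p x ^ 2 := by positivity
      have hNW : (q x + δ) ^ 2 + p x ^ 2 ≤ 2 * Wf p q x ^ 2 := by
        rw [Wf_sq]; nlinarith [sq_nonneg (q x - δ), sq_nonneg (p x)]
      have h2 := amgm2 (φ := φ x) (g := g x) hN hA hB hcs
      have hEx : E δ x = k' x * (φ x ^ 2 * |δ * (q x * a x - p x * b x) /
        ((q x + δ) ^ 2 + p x ^ 2)|) := by simp only [hE]; ring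
      rw [hEx]
      have h3 := neg_abs_le (δ * (q x * a x - p x * b x) / ((q x + δ) ^ 2 + p x ^ 2))
      have hg4 : g x ^ 2 ≤ 4 := by
        have g1 := Real.arctan_lt_pi_div_two (p x / (q x + δ))
        have g2 := Real.neg_pi_div_two_lt_arctan (p x / (q x + δ))
        have := Real.pi_lt_four
        change g x < _ at g1
        change _ < g x at g2
        nlinarith
      have h4 : φ x ^ 2 * A / (4 * Wf p q x ^ 2) ≤ φ x ^ 2 * A / ((q x + δ) ^ 2 + p x ^ 2) / 2 := by
        rw [div_div]
        apply div_le_div_of_nonneg_left (by positivity) (by positivity) (by linarith)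
      have h5 : φ x ^ 2 * (-(|δ * (q x * a x - p x * b x) / ((q x + δ) ^ 2 + p x ^ 2)|)) ≤
          φ x ^ 2 * (δ * (q x * a x - p x * b x) / ((q x + δ) ^ 2 + p x ^ 2)) :=
        mul_le_mul_of_nonneg_left h3 (by positivity)
      have h6 : g x ^ 2 * ((q x + δ) ^ 2 + p x ^ 2) * B ≤
          32 * (Wf p q x * deriv Φ (rho2 u x) ^ 2 * rho2 u x) := by
        calc _ ≤ 4 * (2 * Wf p q x ^ 2) * B := by
              apply mul_le_mul_of_nonneg_right _ hB
              exact mul_le_mul hg4 hNW hN.le (by norm_num)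
          _ = 8 * Wf p q x * (B * Wf p q x) := by ring
          _ ≤ 8 * Wf p q x * (4 * deriv Φ (rho2 u x) ^ 2 * rho2 u x) :=
            mul_le_mul_of_nonneg_left h1 (by positivity)
          _ = _ := by ring
      have h7 : φ x ^ 2 * (A + δ * (q x * a x - p x * b x)) / ((q x + δ) ^ 2 + p x ^ 2) =
          φ x ^ 2 * A / ((q x + δ) ^ 2 + p x ^ 2) +
          φ x ^ 2 * (δ * (q x * a x - p x * b x) / ((q x + δ) ^ 2 + p x ^ 2)) := by ring
      rw [h7]
      have h8 : φ x ^ 2 * (k' x / (4 * Wf p q x ^ 2) * A) =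
        k' x * (φ x ^ 2 * A / (4 * Wf p q x ^ 2)) := by ring
      rw [h8]
      set Y := Wf p q x * deriv Φ (rho2 u x) ^ 2 * rho2 u x with hY
      have hY0 : 0 ≤ Y := by positivity
      have h9 : k' x * (64 * Y) ≤ 128 * Y := by nlinarith
      have h10 : k' x * (φ x ^ 2 * A / (4 * Wf p q x ^ 2)) ≤ k' x *
        ((φ x ^ 2 * A / ((q x + δ) ^ 2 + p x ^ 2) +
          φ x ^ 2 * (δ * (q x * a x - p x * b x) / ((q x + δ) ^ 2 + p x ^ 2)) +
          2 * (φ x * g x * c)) + (φ x ^ 2 * |δ * (q x * a x - p x * b x) /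
        ((q x + δ) ^ 2 + p x ^ 2)|) + 64 * Y) := by
        apply mul_le_mul_of_nonneg_left _ hk0
        linarith
      refine h10.trans ?_
      rw [mul_add (k' x) (_ + _) (64 * Y), mul_add (k' x) (_ + _) (φ x ^ 2 * _)]
      gcongr

/-- The P-function is constant and `q∇p = p∇q`. -/
lemma P_const (C : Core D u p q H) (hq : ∀ x ∈ D, 0 ≤ q x) :
    (∃ P₀, ∀ x ∈ D, Pf u p q H x = P₀) ∧ ∀ x ∈ D, xi1 p q x = 0 ∧ xi2 p q x = 0 := by
  obtain ⟨k, hk⟩ := C.bdg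
  set P₀ := - (1 / √(1 + k)) with hP₀
  have hP : ∀ x ∈ frontier D, Pf u p q H x = P₀ := by
    intro x hx
    rw [Pf, C.bd x hx, Wf, add_assoc, hk x hx]; simp [hP₀]
  have hPall : ∀ x ∈ D, Pf u p q H x = P₀ := by
    by_contra hne
    push Not at hne
    obtain ⟨x₀, hx₀, hne⟩ := hne
    have hc := C.clopen C.Pf_contDiffOn (T := {P₀}ᶜ) isOpen_compl_singleton (fun x hx hxP => by
      have hxP : Pf u p q H x ≠ P₀ := hxP
      have h1 : 0 < |Pf u p q H x - P₀| := abs_pos.2 (sub_ne_zero.2 hxP)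
      have h2 := C.xi_zero hq hP (half_pos h1) x hx
      have h3 := kep'_pos (half_pos h1) (half_lt_self h1)
      have hW := Wf_pos p q x
      have h4 : 0 < kep' (|Pf u p q H x - P₀| / 2) (Pf u p q H x - P₀) / (4 * Wf p q x ^ 2) := by
        positivity
      obtain ⟨h5, h6⟩ := Qf_zero ((mul_eq_zero.1 h2).resolve_left h4.ne')
      have h7 := C.Pf_dS hx
      have h8 := C.Pf_dT hx
      rw [h5, h6] at h7 h8
      ext
      · simpa [dS] using h7
      · simpa [dT] using h8) hx₀ hne
    obtain ⟨z, hz⟩ := C.bdc.nonempty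
    have hcl : closure D ⊆ closure D ∩ Pf u p q H ⁻¹' {Pf u p q H x₀} := by
      apply closure_minimal
      · exact fun y hy => ⟨subset_closure hy, hc y hy⟩
      · exact C.Pf_cont.preimage_isClosed_of_isClosed isClosed_closure isClosed_singleton
    have : Pf u p q H z = Pf u p q H x₀ := (hcl (frontier_subset_closure hz)).2
    rw [hP z hz] at this
    exact hne this.symm
  refine ⟨⟨P₀, hPall⟩, fun x hx => ?_⟩
  have h0 : fderiv ℝ (Pf u p q H) x = 0 := by
    have : Pf u p q H =ᶠ[𝓝 x] fun _ => P₀ := by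
      filter_upwards [C.isOpen.mem_nhds hx] with y hy using hPall y hy
    rw [this.fderiv_eq]; simp
  have h1 := C.Pf_Q hx (xi1 p q x) (xi2 p q x)
  rw [dS, dT, h0] at h1
  apply Qf_zero (P := p x) (Q := q x)
  rw [← h1]; simp

end Core


/-! ### Part 11: endgame in coordinates -/

lemma ode_zero {f e f' e' : ℝ → ℝ} {H : ℝ} (hH : H ≠ 0)
    (hf : ∀ t, 0 ≤ t → HasDerivAt f (f' t) t) (he : ∀ t, 0 ≤ t → HasDerivAt e (e' t) t)
    (h0 : ∀ t, 0 ≤ t → 0 ≤ f t) (h1 : ∀ t, 0 ≤ t → f t ≤ 1)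
    (eq1 : ∀ t, 0 ≤ t → f t * f' t + e t * e' t = -H * f t)
    (eq2 : ∀ t, 0 ≤ t → e' t * f t = e t * f' t) : f 0 = 0 := by
  by_contra hne
  have hf0 : 0 < f 0 := lt_of_le_of_ne (h0 0 le_rfl) (Ne.symm hne)
  set m := e 0 / f 0 with hm
  set c := H / (1 + m ^ 2) with hc
  have hc0 : c ≠ 0 := div_ne_zero hH (by positivity)
  have A : ∀ T, (∀ t ∈ Ico 0 T, 0 < f t) → ∀ t ∈ Icc 0 T, f t = f 0 - c * t := by
    intro T hT
    have hem : ∀ t ∈ Ico 0 T, e t = m * f t := by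
      intro t ht
      have h2 := constant_of_has_deriv_right_zero (f := fun s => e s / f s) (a := 0) (b := t)
        (fun s hs => ((he s hs.1).continuousAt.div (hf s hs.1).continuousAt
          (hT s ⟨hs.1, hs.2.trans_lt ht.2⟩).ne').continuousWithinAt)
        (fun s hs => by
          have hp := hT s ⟨hs.1, hs.2.trans ht.2⟩
          have := (he s hs.1).fun_div (hf s hs.1) hp.ne'
          rw [eq2 s hs.1, sub_self, zero_div] at this
          exact this.hasDerivWithinAt) t ⟨ht.1, le_rfl⟩
      have hp := hT t ht
      have h3 : e t / f t = m := h2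
      rw [div_eq_iff hp.ne'] at h3
      exact h3
    intro t ht
    have h2 := constant_of_has_deriv_right_zero (f := fun s => f s + c * s) (a := 0) (b := T)
      (fun s hs => ((hf s hs.1).continuousAt.add
        (by fun_prop)).continuousWithinAt)
      (fun s hs => by
        have hp := hT s hs
        have h3 := (hf s hs.1).fun_add ((hasDerivAt_id s).const_mul c)
        have h4 : f' s + c * 1 = 0 := by
          have e1 := eq1 s hs.1
          have e2 := eq2 s hs.1
          rw [hem s hs] at e1 e2
          have e3 : e' s = m * f' s := by
            apply mul_right_cancel₀ hp.ne'; linarith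
          rw [e3] at e1
          have e4 : (1 + m ^ 2) * f' s = -H := by
            apply mul_right_cancel₀ hp.ne'; linarith
          rw [hc]
          field_simp
          linarith
        rw [h4] at h3
        exact h3.hasDerivWithinAt) t ht
    simp only [mul_zero, add_zero] at h2
    linarith
  by_cases hz : ∃ t, 0 ≤ t ∧ f t = 0
  · obtain ⟨t₁, ht₁, hft₁⟩ := hz
    set S := Ici (0 : ℝ) ∩ f ⁻¹' {0} with hS
    have hSc : IsClosed S := ContinuousOn.preimage_isClosed_of_isClosed
      (fun t ht => (hf t ht).continuousAt.continuousWithinAt) isClosed_Ici isClosed_singleton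
    have hbd : BddBelow S := ⟨0, fun t ht => ht.1⟩
    have hmem := hSc.csInf_mem ⟨t₁, ht₁, hft₁⟩ hbd
    set T := sInf S with hTdef
    obtain ⟨hT0, hfT⟩ := hmem
    have hT0 : 0 ≤ T := hT0
    have hfT : f T = 0 := hfT
    have hTpos : 0 < T := by
      rcases hT0.lt_or_eq with h | h
      · exact h
      · rw [← h] at hfT; linarith
    have hpos : ∀ t ∈ Ico 0 T, 0 < f t := by
      intro t ht
      rcases (h0 t ht.1).lt_or_eq with h | h
      · exact h
      · exact absurd (csInf_le hbd (show t ∈ S from ⟨ht.1, h.symm⟩)) (not_le.2 ht.2)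
    have hlin := A T hpos
    have hmin : IsLocalMin f T := by
      filter_upwards [Ioi_mem_nhds hTpos] with t ht
      rw [hfT]; exact h0 t (le_of_lt ht)
    have hd0 : f' T = 0 := hmin.hasDerivAt_eq_zero (hf T hT0)
    have hd := (hf T hT0).hasDerivWithinAt (s := Icc 0 T)
    have hd2 : HasDerivWithinAt f (-(c * 1)) (Icc 0 T) T := by
      have := ((hasDerivAt_id T).const_mul c).const_sub (f 0)
      exact this.hasDerivWithinAt.congr (fun t ht => hlin t ht) (hlin T ⟨hT0, le_rfl⟩)
    have huniq := (uniqueDiffOn_Icc hTpos T ⟨hT0, le_rfl⟩).eq_deriv _ hd hd2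
    rw [hd0] at huniq
    exact hc0 (by linarith)
  · push Not at hz
    have hpos : ∀ t, 0 ≤ t → 0 < f t := fun t ht => lt_of_le_of_ne (h0 t ht) (Ne.symm (hz t ht))
    have hT : 0 ≤ 2 / |c| := by positivity
    have h2 := A (2 / |c|) (fun t ht => hpos t ht.1) _ ⟨hT, le_rfl⟩
    have h3 := hpos _ hT
    have h4 := h1 _ hT
    have h5 := h1 0 le_rfl
    rcases lt_or_gt_of_ne hc0 with h | h
    · rw [abs_of_neg h] at h2 h3 h4
      have : c * (2 / -c) = -2 := by field_simp
      rw [this] at h2; linarith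
    · rw [abs_of_pos h] at h2 h3 h4
      have : c * (2 / c) = 2 := by field_simp
      rw [this] at h2; linarith

namespace Core

variable {D : Set (ℝ × ℝ)} {u p q : ℝ × ℝ → ℝ} {H : ℝ}

lemma const_of (C : Core D u p q H) {f : ℝ × ℝ → ℝ} (hf : ContDiffOn ℝ 1 f D)
    (h1 : ∀ x ∈ D, dS f x = 0) (h2 : ∀ x ∈ D, dT f x = 0) : ∃ c, ∀ x ∈ D, f x = c := by
  obtain ⟨x₀, hx₀⟩ := C.conn.nonempty
  refine ⟨f x₀, C.clopen hf isOpen_univ (fun x hx _ => ?_) hx₀ (mem_univ _)⟩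
  ext
  · simpa [dS] using h1 x hx
  · simpa [dT] using h2 x hx

lemma affine (C : Core D u p q 0) (hq : ∀ x ∈ D, 0 ≤ q x) :
    ∃ a b c, ∀ x ∈ D, u x = a * x.1 + b * x.2 + c := by
  obtain ⟨⟨P₀, hP⟩, hxi⟩ := C.P_const hq
  have hW : ∀ x ∈ D, p x ^ 2 + q x ^ 2 = 1 / P₀ ^ 2 - 1 := by
    intro x hx
    have h1 := hP x hx
    have h2 := Wf_sq p q x
    have h3 := Wf_pos p q x
    rw [Pf, zero_mul, zero_sub] at h1
    rw [← h1]; field_simp; linarith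
  have hd : ∀ x ∈ D, ∀ e, p x * fderiv ℝ p x e + q x * fderiv ℝ q x e = 0 := by
    intro x hx e
    have h1 := ((C.pd hx).pow 2).fun_add ((C.qd hx).pow 2)
    have h2 : (fun y => p y ^ 2 + q y ^ 2) =ᶠ[𝓝 x] fun _ => 1 / P₀ ^ 2 - 1 := by
      filter_upwards [C.isOpen.mem_nhds hx] with y hy using hW y hy
    have h3 := h1.fderiv
    rw [h2.fderiv_eq] at h3
    have h4 := congrArg (fun L => L e) h3
    simp at h4
    linarith
  have hpq : (∃ a, ∀ x ∈ D, p x = a) ∧ ∃ b, ∀ x ∈ D, q x = b := by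
    by_cases h0 : 1 / P₀ ^ 2 - 1 = 0
    · refine ⟨⟨0, fun x hx => ?_⟩, ⟨0, fun x hx => ?_⟩⟩ <;>
      · have := hW x hx
        rw [h0] at this
        nlinarith [sq_nonneg (p x), sq_nonneg (q x)]
    · have key : ∀ x ∈ D, dS p x = 0 ∧ dT p x = 0 ∧ dS q x = 0 ∧ dT q x = 0 := by
        intro x hx
        obtain ⟨h1, h2⟩ := hxi x hx
        have h3 := hd x hx (1, 0)
        have h4 := hd x hx (0, 1)
        have h5 := hW x hx
        unfold xi1 xi2 at *
        unfold dS dT at *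
        rw [← h5] at h0
        refine ⟨?_, ?_, ?_, ?_⟩ <;> apply mul_left_cancel₀ h0
        · linear_combination p x * h3 + q x * h1
        · linear_combination p x * h4 + q x * h2
        · linear_combination q x * h3 - p x * h1
        · linear_combination q x * h4 - p x * h2
      exact ⟨C.const_of C.hp1 (fun x hx => (key x hx).1) (fun x hx => (key x hx).2.1),
        C.const_of C.hq1 (fun x hx => (key x hx).2.2.1) (fun x hx => (key x hx).2.2.2)⟩
  obtain ⟨⟨a, ha⟩, ⟨b, hb⟩⟩ := hpq
  have hu1 := C.hu1
  have hdu : ∀ x ∈ D, HasFDerivAt (fun x : ℝ × ℝ => u x - (a * x.1 + b * x.2))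
      (0 : ℝ × ℝ →L[ℝ] ℝ) x := by
    intro x hx
    have h1 : HasFDerivAt (fun x : ℝ × ℝ => x.1) (ContinuousLinearMap.fst ℝ ℝ ℝ) x :=
      hasFDerivAt_fst
    have h2 : HasFDerivAt (fun x : ℝ × ℝ => x.2) (ContinuousLinearMap.snd ℝ ℝ ℝ) x :=
      hasFDerivAt_snd
    refine ((C.hud x hx).fun_sub ((h1.const_mul a).fun_add (h2.const_mul b))).congr_fderiv ?_
    rw [ha x hx, hb x hx, sub_self]
  obtain ⟨c, hc⟩ := C.const_of (f := fun x => u x - (a * x.1 + b * x.2)) (by fun_prop)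
    (fun x hx => by rw [dS, (hdu x hx).fderiv]; rfl) (fun x hx => by rw [dT, (hdu x hx).fderiv]; rfl)
  exact ⟨a, b, c, fun x hx => by have := hc x hx; linarith⟩

lemma F_derivs (C : Core D u p q H) (hq : ∀ x ∈ D, 0 ≤ q x) {x} (hx : x ∈ D) :
    let F1 := fun y => p y / Wf p q y
    let F2 := fun y => q y / Wf p q y
    F2 x * dT F2 x + F1 x * dT F1 x = -H * F2 x ∧ dT F1 x * F2 x = F1 x * dT F2 x := by
  intro F1 F2
  obtain ⟨⟨P₀, hP⟩, hxi⟩ := C.P_const hq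
  obtain ⟨-, h2⟩ := hxi x hx
  have hW := Wf_pos p q x
  have hW2 := Wf_sq p q x
  have h0 : fderiv ℝ (Pf u p q H) x = 0 := by
    have : Pf u p q H =ᶠ[𝓝 x] fun _ => P₀ := by
      filter_upwards [C.isOpen.mem_nhds hx] with y hy using hP y hy
    rw [this.fderiv_eq]; simp
  have h3 := (C.Pf_hasFDerivAt hx).fderiv
  rw [h0] at h3
  have h4 := congrArg (fun L => L ((0 : ℝ), (1 : ℝ))) h3
  simp only [add_apply, smul_apply, smul_eq_mul, ContinuousLinearMap.coe_fst',
    ContinuousLinearMap.coe_snd', zero_apply] at h4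
  have h5 : H * q x * Wf p q x ^ 3 + (p x * fderiv ℝ p x (0, 1) + q x * fderiv ℝ q x (0, 1)) = 0 := by
    field_simp at h4
    linarith
  simp only [F1, F2]
  unfold xi2 at h2
  unfold dT at *
  rw [fderiv_F1 (C.pd hx) (C.qd hx), fderiv_F2 (C.pd hx) (C.qd hx)]
  constructor
  · field_simp
    linear_combination h5
  · field_simp
    rw [← sub_eq_zero]
    linear_combination (1 + p x ^ 2 + q x ^ 2) * h2

lemma q_zero (C : Core D u p q H) (hH : H ≠ 0) (hq : ∀ x ∈ D, 0 ≤ q x) :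
    ∀ x ∈ D, q x = 0 := by
  intro x hx
  have hcurve : ∀ t : ℝ, HasDerivAt (fun s : ℝ => x + ((0 : ℝ), s)) ((0 : ℝ), (1 : ℝ)) t := by
    intro t
    exact ((hasDerivAt_const t (0 : ℝ)).prodMk (hasDerivAt_id t)).const_add x
  have key := ode_zero (f := fun t => q (x + (0, t)) / Wf p q (x + (0, t)))
    (e := fun t => p (x + (0, t)) / Wf p q (x + (0, t)))
    (f' := fun t => dT (fun y => q y / Wf p q y) (x + (0, t)))
    (e' := fun t => dT (fun y => p y / Wf p q y) (x + (0, t))) hH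
    (fun t ht => by
      have hxt := C.up x hx t ht
      have h1 := ((C.F2d.differentiableOn (by simp)).differentiableAt
        (C.isOpen.mem_nhds hxt)).hasFDerivAt
      exact h1.comp_hasDerivAt t (hcurve t))
    (fun t ht => by
      have hxt := C.up x hx t ht
      have h1 := ((C.F1d.differentiableOn (by simp)).differentiableAt
        (C.isOpen.mem_nhds hxt)).hasFDerivAt
      exact h1.comp_hasDerivAt t (hcurve t))
    (fun t ht => div_nonneg (hq _ (C.up x hx t ht)) (Wf_pos _ _ _).le)
    (fun t ht => by
      rw [div_le_one (Wf_pos _ _ _)]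
      have h1 := Wf_sq p q (x + (0, t))
      have h2 := Wf_pos p q (x + (0, t))
      nlinarith [sq_nonneg (p (x + (0, t)))])
    (fun t ht => (C.F_derivs hq (C.up x hx t ht)).1)
    (fun t ht => (C.F_derivs hq (C.up x hx t ht)).2)
  have h2 : x + ((0 : ℝ), (0 : ℝ)) = x := by ext <;> simp
  simp only [h2] at key
  exact (div_eq_zero_iff.1 key).resolve_right (Wf_pos p q x).ne'

lemma H_zero (C : Core D u p q H) (hq : ∀ x ∈ D, 0 ≤ q x) : H = 0 := by
  by_contra hH
  have hq0 := C.q_zero hH hq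
  have hdq : ∀ x ∈ D, fderiv ℝ q x = 0 := by
    intro x hx
    have : q =ᶠ[𝓝 x] fun _ => 0 := by
      filter_upwards [C.isOpen.mem_nhds hx] with y hy using hq0 y hy
    rw [this.fderiv_eq]; simp
  have hF1 := C.F1d
  obtain ⟨c, hc⟩ := C.const_of (f := fun x => p x / Wf p q x + H * x.1) (by fun_prop)
    (fun x hx => by
      have h1 := C.eq x hx
      have h2 : dT (fun y => q y / Wf p q y) x = 0 := by
        rw [dT, fderiv_F2 (C.pd hx) (C.qd hx), hdq x hx, hq0 x hx]; simp
      have d1 := ((C.F1d.differentiableOn (by simp)).differentiableAt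
        (C.isOpen.mem_nhds hx)).hasFDerivAt
      have d2 : HasFDerivAt (fun x : ℝ × ℝ => x.1) (ContinuousLinearMap.fst ℝ ℝ ℝ) x :=
        hasFDerivAt_fst
      rw [dS, (d1.fun_add (d2.const_mul H)).fderiv]
      rw [h2, dS] at h1
      simp only [add_apply, smul_apply, smul_eq_mul, ContinuousLinearMap.coe_fst']
      linarith)
    (fun x hx => by
      have h2 : dT (fun y => p y / Wf p q y) x = 0 := by
        have := C.cross x hx
        unfold dT dS at *
        rw [fderiv_F1 (C.pd hx) (C.qd hx), this, hdq x hx]; simp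
      have d1 := ((C.F1d.differentiableOn (by simp)).differentiableAt
        (C.isOpen.mem_nhds hx)).hasFDerivAt
      have d2 : HasFDerivAt (fun x : ℝ × ℝ => x.1) (ContinuousLinearMap.fst ℝ ℝ ℝ) x :=
        hasFDerivAt_fst
      rw [dT, (d1.fun_add (d2.const_mul H)).fderiv]
      rw [dT] at h2
      simp only [add_apply, smul_apply, smul_eq_mul, ContinuousLinearMap.coe_fst']
      linarith)
  -- boundary
  obtain ⟨k, hk⟩ := C.bdg
  have hfr : ∀ x ∈ frontier D, (c - H * x.1) ^ 2 = k / (1 + k) := by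
    intro x hx
    have hcl1 : closure D ⊆ closure D ∩ (fun x => p x / Wf p q x + H * x.1) ⁻¹' {c} := by
      apply closure_minimal
      · exact fun y hy => ⟨subset_closure hy, hc y hy⟩
      · refine ContinuousOn.preimage_isClosed_of_isClosed ?_ isClosed_closure isClosed_singleton
        exact (C.hp.div C.cW fun x _ => (Wf_pos p q x).ne').add (by fun_prop)
    have hcl2 : closure D ⊆ closure D ∩ q ⁻¹' {0} := by
      apply closure_minimal
      · exact fun y hy => ⟨subset_closure hy, hq0 y hy⟩
      · exact C.hq.preimage_isClosed_of_isClosed isClosed_closure isClosed_singleton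
    have h1 : p x / Wf p q x + H * x.1 = c := (hcl1 (frontier_subset_closure hx)).2
    have h2 : q x = 0 := (hcl2 (frontier_subset_closure hx)).2
    have h3 := hk x hx
    have h4 := Wf_sq p q x
    rw [← h1, add_sub_cancel_right, div_pow, h4, ← h3, add_assoc, h2]
    ring
  have hsc : ∀ x ∈ frontier D, ∀ y ∈ frontier D, ¬ x.1 < y.1 := by
    intro x hx y hy hlt
    have hpre : IsPreconnected (Prod.fst '' frontier D) :=
      C.bdc.isPreconnected.image _ continuous_fst.continuousOn
    have hsub := hpre.Icc_subset (mem_image_of_mem _ hx) (mem_image_of_mem _ hy)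
    obtain ⟨z, hz, hzm⟩ := hsub (show (x.1 + y.1) / 2 ∈ Icc x.1 y.1 from
      ⟨by linarith, by linarith⟩)
    have e1 := hfr x hx
    have e2 := hfr y hy
    have e3 := hfr z hz
    rw [hzm] at e3
    have h5 : H ^ 2 * (y.1 - x.1) ^ 2 = 0 := by
      nlinarith
    have h6 : 0 < H ^ 2 * (y.1 - x.1) ^ 2 := by
      have : 0 < y.1 - x.1 := by linarith
      positivity
    linarith
  obtain ⟨z, hz⟩ := C.bdc.nonempty
  have hline : ∀ x ∈ frontier D, x.1 = z.1 := fun x hx =>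
    le_antisymm (not_lt.1 (hsc z hz x hx)) (not_lt.1 (hsc x hx z hz))
  obtain ⟨w, hw⟩ := C.strip hH
  -- a half plane lies in D
  have half : ∀ U : Set (ℝ × ℝ), IsPreconnected U → (∀ x ∈ U, x.1 ≠ z.1) → (D ∩ U).Nonempty →
      U ⊆ D := by
    intro U hU hUz ⟨x, hxD, hxU⟩
    refine hU.subset_of_closure_inter_subset C.isOpen ⟨x, hxU, hxD⟩ ?_
    rintro y ⟨hy, hyU⟩
    by_contra hyD
    exact hUz y hyU (hline y (by rw [C.isOpen.frontier_eq]; exact ⟨hy, hyD⟩))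
  obtain ⟨x₀, hx₀, hne⟩ : ∃ x ∈ D, x.1 ≠ z.1 := by
    obtain ⟨x, hx⟩ := C.conn.nonempty
    by_contra hall
    push Not at hall
    have hca : Continuous (fun s : ℝ => x + (s, (0 : ℝ))) := by fun_prop
    have hmem : (fun s : ℝ => x + (s, (0 : ℝ))) ⁻¹' D ∈ 𝓝 (0 : ℝ) := by
      apply hca.continuousAt
      apply C.isOpen.mem_nhds
      have : x + ((0 : ℝ), (0 : ℝ)) = x := by ext <;> simp
      show x + ((0 : ℝ), (0 : ℝ)) ∈ D
      rw [this]; exact hx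
    obtain ⟨r, hr, hb⟩ := Metric.mem_nhds_iff.1 hmem
    have h1 := hall _ (hb (show r / 2 ∈ ball (0 : ℝ) r by
      rw [mem_ball_zero_iff, Real.norm_eq_abs, abs_of_pos (by linarith)]; linarith))
    have h2 := hall x hx
    simp at h1
    linarith
  have hwpos : 0 ≤ w := by have := hw x₀ hx₀ x₀ hx₀; linarith
  rcases lt_or_gt_of_ne hne with h | h
  · have hsub := half {x | x.1 < z.1} (convex_halfSpace_lt (f := Prod.fst)
      (LinearMap.fst ℝ ℝ ℝ).isLinear z.1).isPreconnected (fun x hx => ne_of_lt hx) ⟨x₀, hx₀, h⟩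
    have := hw (x₀.1 - w - 1, 0) (hsub (show x₀.1 - w - 1 < z.1 by linarith)) x₀ hx₀
    simp at this
    linarith
  · have hsub := half {x | z.1 < x.1} (convex_halfSpace_gt (f := Prod.fst)
      (LinearMap.fst ℝ ℝ ℝ).isLinear z.1).isPreconnected (fun x hx => ne_of_gt hx) ⟨x₀, hx₀, h⟩
    have := hw x₀ hx₀ (x₀.1 + w + 1, 0) (hsub (show z.1 < x₀.1 + w + 1 by linarith))
    simp at this
    linarith

lemma final_pos (C : Core D u p q H) (hq : ∀ x ∈ frontier D, 0 ≤ q x) :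
    H = 0 ∧ ∃ a b c, ∀ x ∈ D, u x = a * x.1 + b * x.2 + c := by
  have h1 := C.q_nonneg hq
  have h2 := C.H_zero h1
  subst h2
  exact ⟨rfl, C.affine h1⟩

lemma neg (C : Core D u p q H) : Core D (fun x => -u x) (fun x => -p x) (fun x => -q x) (-H) := by
  have hWn : Wf (fun x => -p x) (fun x => -q x) = Wf p q := by
    funext x; simp [Wf]
  refine ⟨C.isOpen, C.conn, C.hu.neg, C.hp.neg, C.hq.neg, ?_, C.hp1.neg, C.hq1.neg, ?_, ?_, ?_,
    C.bdc, ?_, C.up⟩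
  · intro x hx
    refine (C.hud x hx).fun_neg.congr_fderiv ?_
    ext <;> simp
  · intro x hx
    have := C.cross x hx
    unfold dT dS at *
    rw [fderiv_fun_neg, fderiv_fun_neg]
    simp [this]
  · intro x hx
    have := C.eq x hx
    rw [hWn]
    simp only [neg_div]
    unfold dT dS at *
    rw [fderiv_fun_neg, fderiv_fun_neg]
    simp only [neg_apply]
    linarith
  · intro x hx
    simp [C.bd x hx]
  · obtain ⟨k, hk⟩ := C.bdg
    exact ⟨k, fun x hx => by simpa using hk x hx⟩

lemma final (C : Core D u p q H)
    (hq : (∀ x ∈ frontier D, 0 ≤ q x) ∨ (∀ x ∈ frontier D, q x ≤ 0)) :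
    H = 0 ∧ ∃ a b c, ∀ x ∈ D, u x = a * x.1 + b * x.2 + c := by
  rcases hq with h | h
  · exact C.final_pos h
  · obtain ⟨h1, a, b, c, h2⟩ := C.neg.final_pos fun x hx => by
      have := h x hx
      linarith
    refine ⟨by linarith, -a, -b, -c, fun x hx => ?_⟩
    have := h2 x hx
    linarith

end Core


/-! ### Part 12: geometry of the domain -/

section geom

variable {E : Type*} [NormedAddCommGroup E] [InnerProductSpace ℝ E]

/-- the properties of the interior normal that we use -/
structure NormalTo (Ω : Set E) (η : E → E) : Prop where
  isOpen : IsOpen Ω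
  unit : ∀ z ∈ frontier Ω, ⟪η z, η z⟫ = 1
  inn : ∀ z ∈ frontier Ω, ∀ d, 0 < ⟪η z, d⟫ → ∀ᶠ s : ℝ in 𝓝[>] 0, z + s • d ∈ Ω
  out : ∀ z ∈ frontier Ω, ∀ d, ⟪η z, d⟫ < 0 → ∀ᶠ s : ℝ in 𝓝[>] 0, z + s • d ∉ Ω
  near : ∀ z ∈ frontier Ω, ∃ r > 0, ∀ y ∈ frontier Ω, dist y z < r → 0 < ⟪η y, η z⟫

/-- one dimensional sign lemma -/
lemma ev_neg_of_deriv {f : ℝ → ℝ} {f' : ℝ} (hf : HasDerivAt f f' 0) (h0 : f 0 = 0) (h : f' < 0) :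
    ∀ᶠ s : ℝ in 𝓝[>] 0, f s < 0 := by
  have h1 := hf.hasDerivWithinAt (s := Ioi 0)
  rw [hasDerivWithinAt_iff_tendsto_slope' (by simp)] at h1
  filter_upwards [h1.eventually (Iio_mem_nhds h), self_mem_nhdsWithin] with s hs hs0
  have hs0 : 0 < s := hs0
  have hs : slope f 0 s < 0 := hs
  rw [slope_def_field, h0, sub_zero, sub_zero] at hs
  by_contra hc
  push Not at hc
  have := div_nonneg hc hs0.le
  linarith

lemma tendsto_line (z d : E) : Tendsto (fun s : ℝ => z + s • d) (𝓝[>] 0) (𝓝 z) := by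
  have : Continuous fun s : ℝ => z + s • d := by fun_prop
  have h := this.tendsto 0
  simp only [zero_smul, add_zero] at h
  exact h.mono_left nhdsWithin_le_nhds

section chart

variable [CompleteSpace E] {Ω V : Set E} {g : E → ℝ} {z : E}

lemma chart_zero (hV : IsOpen V) (hg : ContinuousOn g V) (hΩ : IsOpen Ω)
    (h : Ω ∩ V = {x ∈ V | g x < 0}) (hz : z ∈ frontier Ω) (hzV : z ∈ V) : g z = 0 := by
  apply le_antisymm
  · by_contra hc
    push Not at hc
    have h1 : ∀ᶠ x in 𝓝 z, x ∈ V ∧ 0 < g x :=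
      (hV.eventually_mem hzV).and ((hg.continuousAt (hV.mem_nhds hzV)).eventually (Ioi_mem_nhds hc))
    obtain ⟨x, ⟨h2, h3⟩, h4⟩ := mem_closure_iff_nhds.1 (frontier_subset_closure hz) _ h1
    have : x ∈ {x ∈ V | g x < 0} := h ▸ ⟨h4, h2⟩
    linarith [this.2]
  · by_contra hc
    push Not at hc
    have : z ∈ Ω ∩ V := by rw [h]; exact ⟨hzV, hc⟩
    rw [hΩ.frontier_eq] at hz
    exact hz.2 this.1

lemma chart_deriv (hV : IsOpen V) (hg : DifferentiableAt ℝ g z) (d : E) :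
    HasDerivAt (fun s : ℝ => g (z + s • d)) ⟪gradient g z, d⟫ 0 := by
  have h1 : HasDerivAt (fun s : ℝ => z + s • d) d 0 := by
    simpa using ((hasDerivAt_id (0 : ℝ)).smul_const d).const_add z
  have h2 : HasFDerivAt g (fderiv ℝ g z) (z + (0 : ℝ) • d) := by simpa using hg.hasFDerivAt
  have := h2.comp_hasDerivAt 0 h1
  have e : fderiv ℝ g z d = ⟪gradient g z, d⟫ := by
    rw [gradient, InnerProductSpace.toDual_symm_apply]
  rw [← e]
  exact this

lemma chart_inn (hV : IsOpen V) (hg : DifferentiableAt ℝ g z) (h0 : g z = 0) (hzV : z ∈ V)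
    (h : Ω ∩ V = {x ∈ V | g x < 0}) {d : E} (hd : ⟪gradient g z, d⟫ < 0) :
    ∀ᶠ s : ℝ in 𝓝[>] 0, z + s • d ∈ Ω := by
  have h1 := ev_neg_of_deriv (chart_deriv hV hg d) (by simpa using h0) hd
  filter_upwards [h1, (tendsto_line z d).eventually (hV.mem_nhds hzV)] with s h2 h3
  have : z + s • d ∈ Ω ∩ V := by rw [h]; exact ⟨h3, h2⟩
  exact this.1

lemma chart_out (hV : IsOpen V) (hg : DifferentiableAt ℝ g z) (h0 : g z = 0) (hzV : z ∈ V)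
    (h : Ω ∩ V = {x ∈ V | g x < 0}) {d : E} (hd : 0 < ⟪gradient g z, d⟫) :
    ∀ᶠ s : ℝ in 𝓝[>] 0, z + s • d ∉ Ω := by
  have h1 := ev_neg_of_deriv (chart_deriv hV hg d).fun_neg (by simpa using h0) (neg_neg_of_pos hd)
  filter_upwards [h1, (tendsto_line z d).eventually (hV.mem_nhds hzV)] with s h2 h3 h4
  have : z + s • d ∈ {x ∈ V | g x < 0} := by rw [← h]; exact ⟨h4, h3⟩
  linarith [this.2]

lemma inner_strict {A A' n : E} (h : ∀ d, ⟪A, d⟫ < 0 → ⟪A', d⟫ ≤ 0) (hA' : A' ≠ 0)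
    (hn : 0 < ⟪A, n⟫) : 0 < ⟪A', n⟫ := by
  by_contra hc
  push Not at hc
  have hca : Continuous fun ε : ℝ => ⟪A, -n + ε • A'⟫ := by fun_prop
  have h1 : ∀ᶠ ε : ℝ in 𝓝[>] 0, ⟪A, -n + ε • A'⟫ < 0 := by
    refine (hca.tendsto 0).mono_left nhdsWithin_le_nhds |>.eventually (Iio_mem_nhds ?_)
    simpa using hn
  obtain ⟨ε, h2, h3⟩ := (h1.and self_mem_nhdsWithin).exists
  have h3 : 0 < ε := h3
  have h4 := h _ h2
  rw [inner_add_right, inner_neg_right, inner_smul_right] at h4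
  have h5 : 0 < ⟪A', A'⟫ := real_inner_self_pos.2 hA'
  have := mul_pos h3 h5
  linarith

lemma normalTo_of {η : E → E} (hΩ : IsOpen Ω) (hch : ∀ p ∈ frontier Ω, ∃ V : Set E, ∃ g : E → ℝ,
    IsOpen V ∧ p ∈ V ∧ ContDiffOn ℝ 2 g V ∧ (∀ x ∈ V, gradient g x ≠ 0) ∧
    Ω ∩ V = {x ∈ V | g x < 0} ∧ η p = -((‖gradient g p‖)⁻¹ • gradient g p)) : NormalTo Ω η := by
  have inn : ∀ z ∈ frontier Ω, ∀ d, 0 < ⟪η z, d⟫ → ∀ᶠ s : ℝ in 𝓝[>] 0, z + s • d ∈ Ω := by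
    intro z hz d hd
    obtain ⟨V, g, hV, hzV, hg, hne, h, he⟩ := hch z hz
    have hgd := (hg.differentiableOn (by simp)).differentiableAt (hV.mem_nhds hzV)
    refine chart_inn hV hgd (chart_zero hV hg.continuousOn hΩ h hz hzV) hzV h ?_
    rw [he, inner_neg_left, real_inner_smul_left] at hd
    have := norm_pos_iff.2 (hne z hzV)
    by_contra hc
    push Not at hc
    have : 0 ≤ (‖gradient g z‖)⁻¹ * ⟪gradient g z, d⟫ := by positivity
    linarith
  have out : ∀ z ∈ frontier Ω, ∀ d, ⟪η z, d⟫ < 0 → ∀ᶠ s : ℝ in 𝓝[>] 0, z + s • d ∉ Ω := by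
    intro z hz d hd
    obtain ⟨V, g, hV, hzV, hg, hne, h, he⟩ := hch z hz
    have hgd := (hg.differentiableOn (by simp)).differentiableAt (hV.mem_nhds hzV)
    refine chart_out hV hgd (chart_zero hV hg.continuousOn hΩ h hz hzV) hzV h ?_
    rw [he, inner_neg_left, real_inner_smul_left] at hd
    have := norm_pos_iff.2 (hne z hzV)
    by_contra hc
    push Not at hc
    have : (‖gradient g z‖)⁻¹ * ⟪gradient g z, d⟫ ≤ 0 :=
      mul_nonpos_of_nonneg_of_nonpos (by positivity) hc
    linarith
  have unit : ∀ z ∈ frontier Ω, ⟪η z, η z⟫ = 1 := by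
    intro z hz
    obtain ⟨V, g, hV, hzV, hg, hne, h, he⟩ := hch z hz
    have := norm_pos_iff.2 (hne z hzV)
    rw [real_inner_self_eq_norm_sq, he, norm_neg, norm_smul, norm_inv, norm_norm,
      inv_mul_cancel₀ this.ne', one_pow]
  refine ⟨hΩ, unit, inn, out, ?_⟩
  intro z hz
  obtain ⟨V, g, hV, hzV, hg, hne, h, he⟩ := hch z hz
  have hgc : ContinuousOn (gradient g) V := by
    have := hg.continuousOn_fderiv_of_isOpen hV (by simp)
    exact (InnerProductSpace.toDual ℝ E).symm.continuous.comp_continuousOn this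
  have hpos : ⟪gradient g z, η z⟫ < 0 := by
    have h1 := norm_pos_iff.2 (hne z hzV)
    rw [he, inner_neg_right, inner_smul_right, real_inner_self_eq_norm_sq]
    have : 0 < ‖gradient g z‖⁻¹ * ‖gradient g z‖ ^ 2 := by positivity
    linarith
  have hca : ContinuousAt (fun y => ⟪gradient g y, η z⟫) z :=
    ContinuousAt.inner (𝕜 := ℝ) (hgc.continuousAt (hV.mem_nhds hzV)) continuousAt_const
  obtain ⟨r, hr, hb⟩ := Metric.mem_nhds_iff.1
    (Filter.inter_mem (hV.mem_nhds hzV) (hca.eventually (Iio_mem_nhds hpos)))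
  refine ⟨r, hr, fun y hy hyr => ?_⟩
  obtain ⟨hyV, hyn⟩ := hb hyr
  have hyn : ⟪gradient g y, η z⟫ < 0 := hyn
  have hgd := (hg.differentiableOn (by simp)).differentiableAt (hV.mem_nhds hyV)
  have hη0 : η y ≠ 0 := by
    intro h0
    have := unit y hy
    simp [h0] at this
  refine inner_strict (A := -gradient g y) (n := η z) ?_ hη0 (by rw [inner_neg_left]; linarith)
  intro d hd
  rw [inner_neg_left] at hd
  by_contra hc
  push Not at hc
  have h1 := inn y hy d hc
  have h2 := chart_out hV hgd (chart_zero hV hg.continuousOn hΩ h hy hyV) hyV h (d := d) (by linarith)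
  obtain ⟨s, h3, h4⟩ := (h1.and h2).exists
  exact h4 h3

end chart

variable {Ω : Set E} {η : E → E}

/-- first exit from an open set along a segment -/
lemma first_exit (hΩ : IsOpen Ω) {x d : E} (hx : x ∈ Ω) {T : ℝ} (hT : 0 ≤ T) (hxT : x + T • d ∉ Ω) :
    ∃ b, 0 < b ∧ b ≤ T ∧ x + b • d ∈ frontier Ω ∧ ∀ s, 0 ≤ s → s < b → x + s • d ∈ Ω := by
  have hc : Continuous fun s : ℝ => x + s • d := by fun_prop
  set S := Ici (0 : ℝ) ∩ {s : ℝ | x + s • d ∉ Ω} with hS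
  have hSc : IsClosed S := isClosed_Ici.inter (hΩ.isClosed_compl.preimage hc)
  have hbd : BddBelow S := ⟨0, fun t ht => ht.1⟩
  have hmem := hSc.csInf_mem ⟨T, hT, hxT⟩ hbd
  set b := sInf S
  have hb0 : 0 ≤ b := hmem.1
  have hbΩ : x + b • d ∉ Ω := hmem.2
  have hbpos : 0 < b := by
    rcases hb0.lt_or_eq with h | h
    · exact h
    · rw [← h] at hbΩ; simp at hbΩ; exact absurd hx hbΩ
  have hin : ∀ s, 0 ≤ s → s < b → x + s • d ∈ Ω := by
    intro s hs hsb
    by_contra hn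
    exact absurd (csInf_le hbd (show s ∈ S from ⟨hs, hn⟩)) (not_le.2 hsb)
  refine ⟨b, hbpos, csInf_le hbd ⟨hT, hxT⟩, ?_, hin⟩
  rw [hΩ.frontier_eq]
  refine ⟨?_, hbΩ⟩
  have h1 : b ∈ closure (Ico 0 b) := by
    rw [closure_Ico hbpos.ne]; exact ⟨hb0, le_rfl⟩
  have h2 := hc.continuousAt.continuousWithinAt.mem_closure_image (s := Ico 0 b) h1
  refine closure_mono ?_ h2
  rintro _ ⟨s, hs, rfl⟩
  exact hin s hs.1 hs.2

/-- invariance under translation in the direction `v` -/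
lemma NormalTo.up (N : NormalTo Ω η) {v : E} (hv : ∀ z ∈ frontier Ω, 0 ≤ ⟪η z, v⟫) {x : E}
    (hx : x ∈ Ω) {t : ℝ} (ht : 0 ≤ t) : x + t • v ∈ Ω := by
  by_contra hn
  obtain ⟨b, hb0, -, hbf, hin⟩ := first_exit N.isOpen hx ht hn
  set y := x + b • v with hy
  obtain ⟨r, hr, hnear⟩ := N.near y hbf
  -- choose s₀
  set s₀ := min b (r / (2 * (‖v‖ + 1))) with hs₀
  have hs0 : 0 < s₀ := by have := norm_nonneg v; positivity
  have hsr : s₀ * (‖v‖ + 1) ≤ r / 2 := by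
    have h1 : s₀ ≤ r / (2 * (‖v‖ + 1)) := min_le_right _ _
    have := norm_nonneg v
    calc s₀ * (‖v‖ + 1) ≤ r / (2 * (‖v‖ + 1)) * (‖v‖ + 1) := by gcongr
      _ = r / 2 := by field_simp
  have hstart : y - s₀ • v ∈ Ω := by
    have := hin (b - s₀) (by linarith [min_le_left b (r / (2 * (‖v‖ + 1)))]) (by linarith)
    have e : y - s₀ • v = x + (b - s₀) • v := by rw [hy, sub_smul]; abel
    rw [e]; exact this
  have hca : Continuous fun l : ℝ => y - s₀ • v - (l * s₀) • η y := by fun_prop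
  have hev : ∀ᶠ l : ℝ in 𝓝[>] 0, y - s₀ • v - (l * s₀) • η y ∈ Ω := by
    refine ((hca.tendsto 0).mono_left nhdsWithin_le_nhds).eventually (N.isOpen.mem_nhds ?_)
    simpa using hstart
  obtain ⟨l, hlΩ, hl0, hl1⟩ := (hev.and (Ioo_mem_nhdsGT (show (0 : ℝ) < 1 by norm_num))).exists
  set w := v + l • η y with hw
  have hηn : ‖η y‖ = 1 := by
    have := N.unit y hbf
    rw [real_inner_self_eq_norm_sq] at this
    nlinarith [norm_nonneg (η y)]
  have hyf := hbf
  rw [N.isOpen.frontier_eq] at hyf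
  have hend : y - s₀ • v - (l * s₀) • η y + s₀ • w = y := by
    rw [hw, smul_add, smul_smul, mul_comm l s₀]; abel
  obtain ⟨c, hc0, hcs, hcf, hcin⟩ := first_exit N.isOpen hlΩ hs0.le (d := w)
    (by rw [hend]; exact hyf.2)
  set z := y - s₀ • v - (l * s₀) • η y + c • w with hz
  have hzy : z = y - (s₀ - c) • w := by
    have : z = (y - s₀ • v - (l * s₀) • η y + s₀ • w) - (s₀ - c) • w := by
      rw [hz, sub_smul]; abel
    rw [this, hend]
  have hwn : ‖w‖ ≤ ‖v‖ + 1 := by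
    calc ‖w‖ ≤ ‖v‖ + ‖l • η y‖ := norm_add_le _ _
      _ = ‖v‖ + l := by rw [norm_smul, hηn, Real.norm_of_nonneg hl0.le, mul_one]
      _ ≤ _ := by linarith
  have hdist : dist z y < r := by
    rw [hzy, dist_eq_norm, sub_sub_cancel_left, norm_neg, norm_smul,
      Real.norm_of_nonneg (by linarith)]
    calc (s₀ - c) * ‖w‖ ≤ s₀ * (‖v‖ + 1) := by
          apply mul_le_mul (by linarith) hwn (norm_nonneg _) hs0.le
      _ ≤ r / 2 := hsr
      _ < r := by linarith
  have h1 := hnear z hcf hdist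
  have h2 := hv z hcf
  have h3 : ⟪η z, -w⟫ < 0 := by
    rw [inner_neg_right, hw, inner_add_right, inner_smul_right]
    have := mul_pos hl0 h1
    linarith
  obtain ⟨s, h4, h5, h6⟩ := ((N.out z hcf _ h3).and (Ioo_mem_nhdsGT hc0)).exists
  apply h4
  have := hcin (c - s) (by linarith) (by linarith)
  have e : z + s • -w = y - s₀ • v - (l * s₀) • η y + (c - s) • w := by
    rw [hz, sub_smul, smul_neg]; abel
  rw [e]; exact this

/-- domains bounded by a hyperplane -/
lemma NormalTo.halfspace (N : NormalTo Ω η) (hne : Ω.Nonempty) {z : E} (hz : z ∈ frontier Ω) {e : E}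
    (he : ⟪e, e⟫ = 1) {c : ℝ} (hf : ∀ x ∈ frontier Ω, ⟪x, e⟫ = c) :
    Ω = {x | c < ⟪x, e⟫} ∨ Ω = {x | ⟪x, e⟫ < c} := by
  have half : ∀ U : Set E, IsPreconnected U → (∀ x ∈ U, ⟪x, e⟫ ≠ c) → (Ω ∩ U).Nonempty →
      U ⊆ Ω := by
    intro U hU hUz ⟨x, hxD, hxU⟩
    refine hU.subset_of_closure_inter_subset N.isOpen ⟨x, hxU, hxD⟩ ?_
    rintro y ⟨hy, hyU⟩
    by_contra hyD
    exact hUz y hyU (hf y (by rw [N.isOpen.frontier_eq]; exact ⟨hy, hyD⟩))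
  have hlin : IsLinearMap ℝ fun x : E => ⟪x, e⟫ :=
    ⟨fun x y => inner_add_left _ _ _, fun a x => by rw [inner_smul_left]; simp⟩
  have hP := half {x | c < ⟪x, e⟫} (convex_halfSpace_gt hlin c).isPreconnected
    (fun x hx => ne_of_gt hx)
  have hM := half {x | ⟪x, e⟫ < c} (convex_halfSpace_lt hlin c).isPreconnected
    (fun x hx => ne_of_lt hx)
  -- not both
  have hnb : ¬ ({x | c < ⟪x, e⟫} ⊆ Ω ∧ {x | ⟪x, e⟫ < c} ⊆ Ω) := by
    rintro ⟨h1, h2⟩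
    obtain ⟨d, hd1, hd2⟩ : ∃ d, ⟪η z, d⟫ < 0 ∧ ⟪d, e⟫ ≠ 0 := by
      have hu := N.unit z hz
      by_cases h : ⟪η z, e⟫ = 0
      · refine ⟨-η z + e, ?_, ?_⟩
        · rw [inner_add_right, inner_neg_right, hu, h]; norm_num
        · rw [inner_add_left, inner_neg_left, h, he]; norm_num
      · refine ⟨-η z, ?_, ?_⟩
        · rw [inner_neg_right, hu]; norm_num
        · rw [inner_neg_left]; simpa using h
    obtain ⟨s, h3, h4⟩ := ((N.out z hz d hd1).and self_mem_nhdsWithin).exists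
    have h4 : 0 < s := h4
    have h5 : ⟪z + s • d, e⟫ ≠ c := by
      rw [inner_add_left, inner_smul_left, hf z hz]
      simp [h4.ne', hd2]
    rcases lt_or_gt_of_ne h5 with h | h
    · exact h3 (h2 h)
    · exact h3 (h1 h)
  -- points of the hyperplane
  have hline : ∀ x ∈ Ω, ⟪x, e⟫ = c → (Ω ∩ {x | c < ⟪x, e⟫}).Nonempty ∧
      (Ω ∩ {x | ⟪x, e⟫ < c}).Nonempty := by
    intro x hx hxc
    constructor
    · obtain ⟨s, h1, h2⟩ := (((tendsto_line x e).eventually (N.isOpen.mem_nhds hx)).and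
        self_mem_nhdsWithin).exists
      have h2 : 0 < s := h2
      refine ⟨_, h1, ?_⟩
      show c < ⟪x + s • e, e⟫
      rw [inner_add_left, inner_smul_left, he, hxc]; simpa using h2
    · obtain ⟨s, h1, h2⟩ := (((tendsto_line x (-e)).eventually (N.isOpen.mem_nhds hx)).and
        self_mem_nhdsWithin).exists
      have h2 : 0 < s := h2
      refine ⟨_, h1, ?_⟩
      show ⟪x + s • -e, e⟫ < c
      rw [inner_add_left, inner_smul_left, inner_neg_left, he, hxc]; simpa using h2
  by_cases h1 : (Ω ∩ {x | c < ⟪x, e⟫}).Nonempty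
  · left
    refine Subset.antisymm (fun x hx => ?_) (hP h1)
    have h2 : ¬ (Ω ∩ {x | ⟪x, e⟫ < c}).Nonempty := fun h2 => hnb ⟨hP h1, hM h2⟩
    rcases lt_trichotomy ⟪x, e⟫ c with h | h | h
    · exact absurd ⟨x, hx, h⟩ h2
    · exact absurd (hline x hx h).2 h2
    · exact h
  · right
    have h2 : ∀ x ∈ Ω, ⟪x, e⟫ < c := by
      intro x hx
      rcases lt_trichotomy ⟪x, e⟫ c with h | h | h
      · exact h
      · exact absurd (hline x hx h).1 h1
      · exact absurd ⟨x, hx, h⟩ h1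
    obtain ⟨x, hx⟩ := hne
    exact Subset.antisymm h2 (hM ⟨x, hx, h2 x hx⟩)

/-- mean value theorem up to the boundary -/
lemma mvt_seg {u : E → ℝ} {Du : E → E} (hu : ContinuousOn u (closure Ω))
    (hd : ∀ x ∈ Ω, ∀ d, HasDerivAt (fun s : ℝ => u (x + s • d)) ⟪Du x, d⟫ 0)
    {x d : E} {T : ℝ} (hT : 0 < T) (h0 : x ∈ closure Ω) (h1 : x + T • d ∈ closure Ω)
    (hin : ∀ s, 0 < s → s < T → x + s • d ∈ Ω) :
    ∃ s, 0 < s ∧ s < T ∧ u (x + T • d) - u x = T * ⟪Du (x + s • d), d⟫ := by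
  have hc : Continuous fun s : ℝ => x + s • d := by fun_prop
  obtain ⟨s, hs, h⟩ := exists_hasDerivAt_eq_slope (fun s : ℝ => u (x + s • d))
    (fun s => ⟪Du (x + s • d), d⟫) hT
    (hu.comp hc.continuousOn (fun s hs => by
      rcases hs.1.lt_or_eq with h | h
      · rcases hs.2.lt_or_eq with h' | h'
        · exact subset_closure (hin s h h')
        · rw [h']; exact h1
      · rw [← h]; simpa using h0))
    (fun s hs => by
      have h2 := hd _ (hin s hs.1 hs.2) d
      have h3 : HasDerivAt (fun r : ℝ => r - s) 1 s := (hasDerivAt_id s).sub_const s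
      have h2' : HasDerivAt (fun r : ℝ => u (x + s • d + r • d)) ⟪Du (x + s • d), d⟫ (s - s) := by
        rwa [sub_self]
      have h4 := HasDerivAt.comp (h₂ := fun r : ℝ => u (x + s • d + r • d))
        (h := fun r : ℝ => r - s) s h2' h3
      rw [mul_one] at h4
      refine h4.congr_of_eventuallyEq (Eventually.of_forall fun r => ?_)
      simp only [Function.comp]
      congr 1
      rw [sub_smul]; abel)
  refine ⟨s, hs.1, hs.2, ?_⟩
  have h : ⟪Du (x + s • d), d⟫ = (u (x + T • d) - u (x + (0 : ℝ) • d)) / (T - 0) := h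
  rw [h, zero_smul, add_zero, sub_zero]
  field_simp

/-- The gradient is normal on the boundary. -/
lemma NormalTo.grad (N : NormalTo Ω η) {u : E → ℝ} {Du : E → E} (hu : ContinuousOn u (closure Ω))
    (hDu : ContinuousOn Du (closure Ω))
    (hd : ∀ x ∈ Ω, ∀ d, HasDerivAt (fun s : ℝ => u (x + s • d)) ⟪Du x, d⟫ 0)
    (hc : ∀ x ∈ frontier Ω, ∀ y ∈ frontier Ω, u x = u y) {z : E} (hz : z ∈ frontier Ω) :
    Du z = ⟪Du z, η z⟫ • η z := by
  have hu1 := N.unit z hz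
  have key : ∀ τ, ⟪η z, τ⟫ = 0 → ¬ 0 < ⟪Du z, τ⟫ := by
    intro τ hτ hpos
    -- choose μ
    obtain ⟨μ, hμ0, hm1, hm2⟩ : ∃ μ : ℝ, 0 < μ ∧ 0 < ⟪Du z, τ + μ • η z⟫ ∧
        0 < ⟪Du z, τ - μ • η z⟫ := by
      have c1 : Continuous fun μ : ℝ => ⟪Du z, τ + μ • η z⟫ := by fun_prop
      have c2 : Continuous fun μ : ℝ => ⟪Du z, τ - μ • η z⟫ := by fun_prop
      have e1 := ((c1.tendsto 0).mono_left (nhdsWithin_le_nhds (s := Ioi 0))).eventually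
        (Ioi_mem_nhds (by simpa using hpos))
      have e2 := ((c2.tendsto 0).mono_left (nhdsWithin_le_nhds (s := Ioi 0))).eventually
        (Ioi_mem_nhds (by simpa using hpos))
      obtain ⟨μ, h1, h2, h3⟩ := (e1.and (e2.and self_mem_nhdsWithin)).exists
      exact ⟨μ, h3, h1, h2⟩
    set d1 := τ + μ • η z with hd1
    set d2 := τ - μ • η z with hd2
    have hzc := frontier_subset_closure hz
    have n1 : ∀ᶠ y in 𝓝[closure Ω] z, 0 < ⟪Du y, d1⟫ :=
      (ContinuousWithinAt.inner (𝕜 := ℝ) (hDu z hzc) continuousWithinAt_const).eventually (Ioi_mem_nhds hm1)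
    have n2 : ∀ᶠ y in 𝓝[closure Ω] z, 0 < ⟪Du y, d2⟫ :=
      (ContinuousWithinAt.inner (𝕜 := ℝ) (hDu z hzc) continuousWithinAt_const).eventually (Ioi_mem_nhds hm2)
    obtain ⟨r, hr, hb⟩ := Metric.mem_nhdsWithin_iff.1 (n1.and n2)
    have i1 := N.inn z hz d1 (by
      rw [hd1, inner_add_right, inner_smul_right, hτ, hu1]; linarith)
    have i2 := N.out z hz (d1 + (2 : ℝ) • d2) (by
      rw [hd1, hd2, inner_add_right, inner_add_right, inner_smul_right, inner_smul_right,
        inner_sub_right, inner_smul_right, hτ, hu1]; linarith)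
    obtain ⟨a0, ha0, hA⟩ := mem_nhdsGT_iff_exists_Ioo_subset.1 i1
    have ha0 : 0 < a0 := ha0
    set M := ‖d1‖ + 2 * ‖d2‖ + 1 with hM
    have hMpos : 0 < M := by positivity
    have hsmall : ∀ᶠ a : ℝ in 𝓝[>] 0, a ∈ Ioo 0 (min a0 (r / M)) :=
      Ioo_mem_nhdsGT (by positivity)
    obtain ⟨a, hout, ha⟩ := (i2.and hsmall).exists
    have haa0 : a < a0 := ha.2.trans_le (min_le_left _ _)
    have haM : a * M < r := by
      rw [← lt_div_iff₀ hMpos]; exact ha.2.trans_le (min_le_right _ _)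
    have hin1 : ∀ s, 0 < s → s ≤ a → z + s • d1 ∈ Ω := fun s h1 h2 => hA ⟨h1, h2.trans_lt haa0⟩
    have hx1 := hin1 a ha.1 le_rfl
    have ha1 := ha.1
    obtain ⟨b, hb0, hb2, hbf, hbin⟩ := first_exit N.isOpen hx1 (d := d2) (T := 2 * a)
      (by linarith) (by
        have e : z + a • d1 + (2 * a) • d2 = z + a • (d1 + (2 : ℝ) • d2) := by
          module
        rw [e]; exact hout)
    obtain ⟨s1, hs1, hs1', e1⟩ := mvt_seg hu hd ha.1 hzc (subset_closure hx1)
      (fun s h1 h2 => hin1 s h1 h2.le)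
    obtain ⟨s2, hs2, hs2', e2⟩ := mvt_seg hu hd hb0 (subset_closure hx1)
      (frontier_subset_closure hbf) (fun s h1 h2 => hbin s h1.le h2)
    have p1 := (hb ⟨show z + s1 • d1 ∈ ball z r by
      rw [mem_ball, dist_eq_norm, add_sub_cancel_left, norm_smul, Real.norm_of_nonneg hs1.le]
      have : s1 * ‖d1‖ ≤ a * M := mul_le_mul hs1'.le (by
        have := norm_nonneg d2; linarith) (norm_nonneg _) ha1.le
      linarith, subset_closure (hin1 s1 hs1 hs1'.le)⟩).1
    have p2 := (hb ⟨show z + a • d1 + s2 • d2 ∈ ball z r by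
      rw [mem_ball, dist_eq_norm, add_assoc, add_sub_cancel_left]
      have h1 := norm_add_le (a • d1) (s2 • d2)
      rw [norm_smul, norm_smul, Real.norm_of_nonneg hs2.le, Real.norm_of_nonneg ha1.le] at h1
      have : s2 * ‖d2‖ ≤ 2 * a * ‖d2‖ := mul_le_mul_of_nonneg_right (by linarith) (norm_nonneg _)
      have : a * M = a * ‖d1‖ + 2 * a * ‖d2‖ + a := by rw [hM]; ring
      linarith, subset_closure (hbin s2 hs2.le hs2')⟩).2
    have e3 := hc _ hbf _ hz
    have q1 : 0 < a * ⟪Du (z + s1 • d1), d1⟫ := mul_pos ha1 p1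
    have q2 : 0 < b * ⟪Du (z + a • d1 + s2 • d2), d2⟫ := mul_pos hb0 p2
    linarith
  have key0 : ∀ τ, ⟪η z, τ⟫ = 0 → ⟪Du z, τ⟫ = 0 := by
    intro τ hτ
    have h1 := key τ hτ
    have h2 := key (-τ) (by rw [inner_neg_right, hτ, neg_zero])
    rw [inner_neg_right] at h2
    linarith
  set τ := Du z - ⟪Du z, η z⟫ • η z with hτ
  have h1 : ⟪η z, τ⟫ = 0 := by
    rw [hτ, inner_sub_right, inner_smul_right, hu1, real_inner_comm]; ring
  have h2 := key0 τ h1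
  have h3 : ⟪τ, τ⟫ = 0 := by
    nth_rewrite 1 [hτ]
    rw [inner_sub_left, h2, inner_smul_left, h1]; simp
  have h4 : τ = 0 := inner_self_eq_zero.1 h3
  rw [hτ, sub_eq_zero] at h4
  exact h4

end geom


/-! ### Part 13: transfer to coordinates -/

section transfer

abbrev E2 := EuclideanSpace ℝ (Fin 2)

lemma inner_E2 (x y : E2) : ⟪x, y⟫ = x 0 * y 0 + x 1 * y 1 := by
  simp [PiLp.inner_apply, Fin.sum_univ_two]; ring

/-- rotation by a right angle -/
def rotE (v : E2) : E2 := !₂[-(v 1), v 0]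

lemma rotE_zero (v : E2) : rotE v 0 = -(v 1) := by simp [rotE]
lemma rotE_one (v : E2) : rotE v 1 = v 0 := by simp [rotE]

lemma unit_E2 {v : E2} (hv : ‖v‖ = 1) : v 0 * v 0 + v 1 * v 1 = 1 := by
  rw [← inner_E2, real_inner_self_eq_norm_sq, hv, one_pow]

lemma decomp_E2 {v : E2} (hv : ‖v‖ = 1) (x : E2) : ⟪x, rotE v⟫ • rotE v + ⟪x, v⟫ • v = x := by
  have h := unit_E2 hv
  ext i
  fin_cases i
  · simp only [inner_E2, rotE_zero, rotE_one, PiLp.add_apply, PiLp.smul_apply, smul_eq_mul,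
      Fin.zero_eta]
    linear_combination (x 0) * h
  · simp only [inner_E2, rotE_zero, rotE_one, PiLp.add_apply, PiLp.smul_apply, smul_eq_mul,
      Fin.mk_one]
    linear_combination (x 1) * h

lemma norm_E2 {v : E2} (hv : ‖v‖ = 1) (x : E2) : ‖x‖ ^ 2 = ⟪x, rotE v⟫ ^ 2 + ⟪x, v⟫ ^ 2 := by
  have h := unit_E2 hv
  rw [← real_inner_self_eq_norm_sq]
  simp only [inner_E2, rotE_zero, rotE_one]
  linear_combination (-(x 0)^2 - (x 1)^2) * h

/-- coordinates adapted to `v` -/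
def iotaE (v : E2) (hv : ‖v‖ = 1) : (ℝ × ℝ) ≃L[ℝ] E2 :=
  ContinuousLinearEquiv.equivOfInverse
    ((ContinuousLinearMap.fst ℝ ℝ ℝ).smulRight (rotE v) +
      (ContinuousLinearMap.snd ℝ ℝ ℝ).smulRight v)
    ((innerSL ℝ (rotE v)).prod (innerSL ℝ v))
    (by
      have h := unit_E2 hv
      rintro ⟨s, t⟩
      ext
      · simp [inner_E2, rotE_zero, rotE_one]
        linear_combination s * h
      · simp [inner_E2, rotE_zero, rotE_one]
        linear_combination t * h)
    (by
      intro x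
      have := decomp_E2 hv x
      simpa [real_inner_comm] using this)

lemma iotaE_apply (v : E2) (hv : ‖v‖ = 1) (x : ℝ × ℝ) :
    iotaE v hv x = x.1 • rotE v + x.2 • v := by
  simp [iotaE]

lemma iotaE_symm (v : E2) (hv : ‖v‖ = 1) (x : E2) :
    (iotaE v hv).symm x = (⟪x, rotE v⟫, ⟪x, v⟫) := by
  rw [ContinuousLinearEquiv.symm_apply_eq, iotaE_apply]
  exact (decomp_E2 hv x).symm

lemma trace_E2 {v : E2} (hv : ‖v‖ = 1) (L : E2 →L[ℝ] E2) :
    ⟪L (rotE v), rotE v⟫ + ⟪L v, v⟫ =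
      ∑ i : Fin 2, ⟪L (EuclideanSpace.single i (1 : ℝ)), EuclideanSpace.single i (1 : ℝ)⟫ := by
  have h := unit_E2 hv
  have hx : ∀ x : E2, x = x 0 • EuclideanSpace.single (0 : Fin 2) (1 : ℝ) +
      x 1 • EuclideanSpace.single (1 : Fin 2) (1 : ℝ) := by
    intro x
    ext i
    fin_cases i <;> simp
  have key : ∀ x : E2, ⟪L x, x⟫ =
      ⟪L (x 0 • EuclideanSpace.single (0 : Fin 2) (1 : ℝ) +
        x 1 • EuclideanSpace.single (1 : Fin 2) (1 : ℝ)),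
        x 0 • EuclideanSpace.single (0 : Fin 2) (1 : ℝ) +
        x 1 • EuclideanSpace.single (1 : Fin 2) (1 : ℝ)⟫ := by
    intro x
    rw [← hx x]
  rw [key (rotE v), key v, Fin.sum_univ_two]
  simp only [map_add, map_smul]
  simp only [inner_add_left, inner_add_right, real_inner_smul_left, real_inner_smul_right,
    rotE_zero, rotE_one]
  set A := ⟪L (EuclideanSpace.single (0 : Fin 2) (1 : ℝ)), EuclideanSpace.single (0 : Fin 2) (1 : ℝ)⟫
  set B := ⟪L (EuclideanSpace.single (1 : Fin 2) (1 : ℝ)), EuclideanSpace.single (1 : Fin 2) (1 : ℝ)⟫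
  linear_combination (A + B) * h

lemma hasFDerivAt_coord {G : E2 → E2} {L : E2 →L[ℝ] E2} (ι : (ℝ × ℝ) ≃L[ℝ] E2) {x : ℝ × ℝ}
    (hG : HasFDerivAt G L (ι x)) (a : E2) {f : ℝ × ℝ → ℝ}
    (hf : f =ᶠ[𝓝 x] fun y => ⟪G (ι y), a⟫) (e : ℝ × ℝ) : fderiv ℝ f x e = ⟪L (ι e), a⟫ := by
  have h1 : HasFDerivAt (fun y => G (ι y)) (L.comp (ι : (ℝ × ℝ) →L[ℝ] E2)) x :=
    hG.comp x ι.hasFDerivAt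
  have h2 := (innerSL ℝ a).hasFDerivAt.comp x h1
  have h3 : HasFDerivAt f ((innerSL ℝ a).comp (L.comp (ι : (ℝ × ℝ) →L[ℝ] E2))) x := by
    refine h2.congr_of_eventuallyEq (hf.trans (Eventually.of_forall fun y => ?_))
    simp [real_inner_comm]
  rw [h3.fderiv]
  simp [real_inner_comm]

lemma gradient_contDiffOn {Ω : Set E2} {u : E2 → ℝ} (hΩ : IsOpen Ω) (hu : ContDiffOn ℝ 2 u Ω) :
    ContDiffOn ℝ 1 (gradient u) Ω :=
  (InnerProductSpace.toDual ℝ E2).symm.contDiff.comp_contDiffOn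
    (hu.fderiv_of_isOpen hΩ (by norm_num))

lemma symm_hess {Ω : Set E2} {u : E2 → ℝ} (hΩ : IsOpen Ω) (hu : ContDiffOn ℝ 2 u Ω) {x : E2}
    (hx : x ∈ Ω) (a b : E2) :
    ⟪fderiv ℝ (gradient u) x a, b⟫ = ⟪fderiv ℝ (gradient u) x b, a⟫ := by
  have hc : ContDiffAt ℝ 2 u x := hu.contDiffAt (hΩ.mem_nhds hx)
  have hs := hc.isSymmSndFDerivAt (by simp)
  have hd : DifferentiableAt ℝ (fderiv ℝ u) x :=
    (hc.fderiv_right (m := 1) (by norm_num)).differentiableAt (by simp)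
  have key : ∀ a b : E2, ⟪fderiv ℝ (gradient u) x a, b⟫ = fderiv ℝ (fderiv ℝ u) x a b := by
    intro a b
    have hg : DifferentiableAt ℝ (gradient u) x :=
      ((gradient_contDiffOn hΩ hu).contDiffAt (hΩ.mem_nhds hx)).differentiableAt (by simp)
    have h1 := (innerSL ℝ b).hasFDerivAt.comp x hg.hasFDerivAt
    have h2 := hd.hasFDerivAt.clm_apply (hasFDerivAt_const b x)
    have e : (fun y => fderiv ℝ u y b) = (innerSL ℝ b) ∘ gradient u := by
      funext y
      have : ⟪gradient u y, b⟫ = fderiv ℝ u y b := InnerProductSpace.toDual_symm_apply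
      show _ = ⟪b, gradient u y⟫
      rw [real_inner_comm, this]
    rw [e] at h2
    have h3 := congrArg (fun T : E2 →L[ℝ] ℝ => T a) (h1.unique h2)
    have h3 : ⟪b, fderiv ℝ (gradient u) x a⟫ = _ := h3
    rw [real_inner_comm, h3]
    simp
  rw [key, key]
  exact hs a b

end transfer


/-! ### Part 14: conclusion -/

section conclusion

lemma main_affine {Ω : Set E2} {η : E2 → E2} (N : NormalTo Ω η) (conn : IsConnected Ω) {u : E2 → ℝ}
    (hu2 : ContDiffOn ℝ 2 u Ω) (hucl : ContinuousOn u (closure Ω)) {Du : E2 → E2}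
    (hDu : ∀ x ∈ Ω, Du x = gradient u x) (hDuc : ContinuousOn Du (closure Ω)) {H₀ : ℝ}
    (heq : ∀ x ∈ Ω, ∑ i : Fin 2,
      ⟪(fderiv ℝ (fun y => (Real.sqrt (1 + ‖gradient u y‖ ^ 2))⁻¹ • gradient u y) x)
        (EuclideanSpace.single i (1 : ℝ)), EuclideanSpace.single i (1 : ℝ)⟫ + H₀ = 0)
    (hb : ∀ p ∈ frontier Ω, ∀ q ∈ frontier Ω, u q = u p ∧ ⟪Du q, η q⟫ = ⟪Du p, η p⟫)
    (hfc : IsConnected (frontier Ω)) {v : E2} (hv : ‖v‖ = 1)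
    (hpos : ∀ p ∈ frontier Ω, 0 ≤ ⟪η p, v⟫) :
    H₀ = 0 ∧ ∃ A : E2, ∃ β : ℝ, ∀ x ∈ Ω, u x = ⟪x, A⟫ + β := by
  obtain ⟨z₀, hz₀⟩ := hfc.nonempty
  set ι := iotaE v hv with hι
  set w := rotE v with hw
  set D : Set (ℝ × ℝ) := ι ⁻¹' Ω with hD
  have hDo : IsOpen D := N.isOpen.preimage ι.continuous
  have hcl : closure D = ι ⁻¹' closure Ω := (ι.toHomeomorph.preimage_closure Ω).symm
  have hfr : frontier D = ι ⁻¹' frontier Ω := (ι.toHomeomorph.preimage_frontier Ω).symm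
  have himg : ∀ S : Set E2, ι ⁻¹' S = ι.symm '' S := fun S => by
    rw [ContinuousLinearEquiv.image_symm_eq_preimage]
  have hι10 : ι (1, 0) = w := by rw [hι, iotaE_apply]; simp [hw]
  have hι01 : ι (0, 1) = v := by rw [hι, iotaE_apply]; simp
  have mcl : MapsTo ι (closure D) (closure Ω) := fun x hx => by rw [hcl] at hx; exact hx
  have mD : MapsTo ι D Ω := fun x hx => hx
  -- gradient
  have hgrad1 := gradient_contDiffOn N.isOpen hu2
  have hgd : ∀ x ∈ Ω, HasFDerivAt (gradient u) (fderiv ℝ (gradient u) x) x := fun x hx =>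
    ((hgrad1.contDiffAt (N.isOpen.mem_nhds hx)).differentiableAt (by simp)).hasFDerivAt
  have hud : ∀ x ∈ Ω, HasFDerivAt u (fderiv ℝ u x) x := fun x hx =>
    ((hu2.contDiffAt (N.isOpen.mem_nhds hx)).differentiableAt (by simp)).hasFDerivAt
  have hgr : ∀ x ∈ Ω, ∀ d, fderiv ℝ u x d = ⟪Du x, d⟫ := by
    intro x hx d
    rw [hDu x hx, gradient, InnerProductSpace.toDual_symm_apply]
  have hline : ∀ x ∈ Ω, ∀ d, HasDerivAt (fun s : ℝ => u (x + s • d)) ⟪Du x, d⟫ 0 := by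
    intro x hx d
    rw [hDu x hx]
    exact chart_deriv N.isOpen (hud x hx).differentiableAt d
  have hnorm : ∀ z ∈ frontier Ω, Du z = ⟪Du z₀, η z₀⟫ • η z := by
    intro z hz
    have := N.grad hucl hDuc hline (fun x hx y hy => (hb y hy x hx).1) hz
    rw [(hb z₀ hz₀ z hz).2] at this
    exact this
  set κ := ⟪Du z₀, η z₀⟫ with hκ
  set p : ℝ × ℝ → ℝ := fun y => ⟪Du (ι y), w⟫ with hp
  set q : ℝ × ℝ → ℝ := fun y => ⟪Du (ι y), v⟫ with hq
  have hDι : ContinuousOn (fun y => Du (ι y)) (closure D) := hDuc.comp ι.continuous.continuousOn mcl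
  have hsum : ∀ y, p y ^ 2 + q y ^ 2 = ‖Du (ι y)‖ ^ 2 := fun y => (norm_E2 hv (Du (ι y))).symm
  have evp : ∀ x ∈ D, ∀ a, (fun y => ⟪Du (ι y), a⟫) =ᶠ[𝓝 x] fun y => ⟪gradient u (ι y), a⟫ := by
    intro x hx a
    filter_upwards [hDo.mem_nhds hx] with y hy
    rw [hDu _ (mD hy)]
  have hC1 : ∀ a, ContDiffOn ℝ 1 (fun y => ⟪Du (ι y), a⟫) D := by
    intro a
    have h1 : ContDiffOn ℝ 1 (fun y => gradient u (ι y)) D :=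
      hgrad1.comp ι.contDiff.contDiffOn mD
    refine (h1.inner ℝ (contDiffOn_const (c := a))).congr fun y hy => ?_
    rw [hDu _ (mD hy)]
  -- the vector field
  set X : E2 → E2 := fun y => (Real.sqrt (1 + ‖gradient u y‖ ^ 2))⁻¹ • gradient u y with hX
  have hXd : ∀ x ∈ Ω, HasFDerivAt X (fderiv ℝ X x) x := by
    intro x hx
    have h1 := (hgd x hx).differentiableAt
    have h2 : DifferentiableAt ℝ (fun y => 1 + ‖gradient u y‖ ^ 2) x :=
      (h1.norm_sq ℝ).const_add 1
    have h3 : 1 + ‖gradient u x‖ ^ 2 ≠ 0 := by positivity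
    have h4 := (h2.sqrt h3).fun_inv (by positivity)
    exact (h4.fun_smul h1).hasFDerivAt
  have hXe : ∀ x ∈ D, ∀ a, (fun y => ⟪Du (ι y), a⟫ / Wf p q y) =ᶠ[𝓝 x] fun y => ⟪X (ι y), a⟫ := by
    intro x hx a
    filter_upwards [hDo.mem_nhds hx] with y hy
    have e : Wf p q y = Real.sqrt (1 + ‖gradient u (ι y)‖ ^ 2) := by
      rw [Wf, add_assoc, hsum, hDu _ (mD hy)]
    rw [e, hDu _ (mD hy), hX]
    show _ = ⟪(Real.sqrt (1 + ‖gradient u (ι y)‖ ^ 2))⁻¹ • gradient u (ι y), a⟫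
    rw [real_inner_smul_left, div_eq_inv_mul]
  have C : Core D (fun y => u (ι y) - u z₀) p q H₀ := by
    refine ⟨hDo, ?_, ?_, ?_, ?_, ?_, hC1 w, hC1 v, ?_, ?_, ?_, ?_, ?_, ?_⟩
    · rw [hD, himg]; exact conn.image _ ι.symm.continuous.continuousOn
    · exact (hucl.comp ι.continuous.continuousOn mcl).sub continuousOn_const
    · exact hDι.inner continuousOn_const
    · exact hDι.inner continuousOn_const
    · intro x hx
      have h1 := ((hud _ (mD hx)).comp x ι.hasFDerivAt).sub_const (u z₀)
      refine h1.congr_fderiv ?_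
      ext
      · simp only [ContinuousLinearMap.comp_apply, ContinuousLinearMap.inl_apply,
          ContinuousLinearEquiv.coe_coe, hι10, hgr _ (mD hx)]
        simp [hp]
      · simp only [ContinuousLinearMap.comp_apply, ContinuousLinearMap.inr_apply,
          ContinuousLinearEquiv.coe_coe, hι01, hgr _ (mD hx)]
        simp [hq]
    · intro x hx
      rw [dT, dS, hasFDerivAt_coord ι (hgd _ (mD hx)) w (evp x hx w),
        hasFDerivAt_coord ι (hgd _ (mD hx)) v (evp x hx v), hι10, hι01]
      exact symm_hess N.isOpen hu2 (mD hx) v w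
    · intro x hx
      rw [dT, dS, hasFDerivAt_coord ι (hXd _ (mD hx)) w (hXe x hx w),
        hasFDerivAt_coord ι (hXd _ (mD hx)) v (hXe x hx v), hι10, hι01, hw, trace_E2 hv]
      have := heq _ (mD hx)
      linarith
    · intro x hx
      rw [hfr] at hx
      rw [(hb z₀ hz₀ _ hx).1, sub_self]
    · rw [hfr, himg]; exact hfc.image _ ι.symm.continuous.continuousOn
    · refine ⟨κ ^ 2, fun x hx => ?_⟩
      rw [hfr] at hx
      rw [hsum, hnorm _ hx, ← real_inner_self_eq_norm_sq, real_inner_smul_left,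
        real_inner_smul_right, N.unit _ hx]
      ring
    · intro x hx t ht
      show ι (x + (0, t)) ∈ Ω
      have e : ((0 : ℝ), t) = t • ((0 : ℝ), (1 : ℝ)) := by ext <;> simp
      rw [e, map_add, map_smul, hι01]
      exact N.up hpos (mD hx) ht
  have hqs : (∀ x ∈ frontier D, 0 ≤ q x) ∨ (∀ x ∈ frontier D, q x ≤ 0) := by
    have hqe : ∀ x ∈ frontier D, q x = κ * ⟪η (ι x), v⟫ := by
      intro x hx
      rw [hfr] at hx
      show ⟪Du (ι x), v⟫ = _
      rw [hnorm _ hx, real_inner_smul_left]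
    have hp' : ∀ x ∈ frontier D, 0 ≤ ⟪η (ι x), v⟫ := fun x hx => by
      rw [hfr] at hx; exact hpos _ hx
    rcases le_total 0 κ with h | h
    · left; intro x hx; rw [hqe x hx]; exact mul_nonneg h (hp' x hx)
    · right; intro x hx; rw [hqe x hx]; exact mul_nonpos_of_nonpos_of_nonneg h (hp' x hx)
  obtain ⟨hH, a, b, c, hlin⟩ := C.final hqs
  refine ⟨hH, a • w + b • v, c + u z₀, fun x hx => ?_⟩
  have h1 := hlin (ι.symm x) (by show ι (ι.symm x) ∈ Ω; rw [ι.apply_symm_apply]; exact hx)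
  have e : ι.symm x = (⟪x, w⟫, ⟪x, v⟫) := iotaE_symm v hv x
  have h1 : u (ι (ι.symm x)) - u z₀ = a * (ι.symm x).1 + b * (ι.symm x).2 + c := h1
  rw [ι.apply_symm_apply, e] at h1
  rw [inner_add_right, real_inner_smul_right, real_inner_smul_right]
  linarith

lemma main_halfplane {Ω : Set E2} {η : E2 → E2} (N : NormalTo Ω η) (hne : Ω.Nonempty) {u : E2 → ℝ}
    (hucl : ContinuousOn u (closure Ω)) (hnc : ¬ ∃ c : ℝ, ∀ x ∈ Ω, u x = c)
    (hb : ∀ p ∈ frontier Ω, ∀ q ∈ frontier Ω, u q = u p) {z : E2} (hz : z ∈ frontier Ω)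
    {A : E2} {β : ℝ} (hA : ∀ x ∈ Ω, u x = ⟪x, A⟫ + β) :
    ∃ e : E2, ‖e‖ = 1 ∧ ∃ c α β : ℝ, α ≠ 0 ∧
      Ω = {x | c < ⟪x, e⟫} ∧ ∀ x ∈ Ω, u x = α * ⟪x, e⟫ + β := by
  have hA0 : A ≠ 0 := by
    rintro rfl
    exact hnc ⟨β, fun x hx => by rw [hA x hx, inner_zero_right, zero_add]⟩
  have hn : 0 < ‖A‖ := norm_pos_iff.2 hA0
  have hcl : EqOn u (fun x => ⟪x, A⟫ + β) (closure Ω) := by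
    have hc : Continuous fun x : E2 => ⟪x, A⟫ + β := by fun_prop
    exact EqOn.of_subset_closure hA hucl hc.continuousOn subset_closure le_rfl
  set e := ‖A‖⁻¹ • A with he
  have hAe : ∀ x : E2, ⟪x, A⟫ = ‖A‖ * ⟪x, e⟫ := by
    intro x
    rw [he, real_inner_smul_right]; field_simp
  have hen : ‖e‖ = 1 := by
    rw [he, norm_smul, norm_inv, norm_norm, inv_mul_cancel₀ hn.ne']
  have hee : ⟪e, e⟫ = 1 := by rw [real_inner_self_eq_norm_sq, hen, one_pow]
  have hf : ∀ x ∈ frontier Ω, ⟪x, e⟫ = ⟪z, e⟫ := by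
    intro x hx
    have h1 : u x = ⟪x, A⟫ + β := hcl (frontier_subset_closure hx)
    have h2 : u z = ⟪z, A⟫ + β := hcl (frontier_subset_closure hz)
    rw [hb z hz x hx, h2, hAe, hAe] at h1
    have : ‖A‖ * ⟪x, e⟫ = ‖A‖ * ⟪z, e⟫ := by linarith
    exact mul_left_cancel₀ hn.ne' this
  rcases N.halfspace hne hz hee hf with h | h
  · exact ⟨e, hen, ⟪z, e⟫, ‖A‖, β, hn.ne', h, fun x hx => by rw [hA x hx, hAe]⟩
  · refine ⟨-e, by rw [norm_neg, hen], -⟪z, e⟫, -‖A‖, β, neg_ne_zero.2 hn.ne', ?_, fun x hx => ?_⟩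
    · rw [h]; ext x
      simp only [mem_setOf_eq, inner_neg_right, neg_lt_neg_iff]
    · rw [hA x hx, hAe, inner_neg_right, neg_mul_neg]

end conclusion


/-- Theorem 1.2(i) of the paper: a capillary CMC graph over a planar `C²` domain with
connected, mildly `v`-transverse boundary is a half-plane over a half-plane. -/
theorem capillary_cmc_halfplane
    (Ω : Set (EuclideanSpace ℝ (Fin 2)))
    (η : EuclideanSpace ℝ (Fin 2) → EuclideanSpace ℝ (Fin 2))
    (hΩ : IsCkDomainWithNormal 2 Ω η)
    (u : EuclideanSpace ℝ (Fin 2) → ℝ)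
    (hu2 : ContDiffOn ℝ 2 u Ω) (hucl : ContinuousOn u (closure Ω))
    (Du : EuclideanSpace ℝ (Fin 2) → EuclideanSpace ℝ (Fin 2))
    (hDu : ∀ x ∈ Ω, Du x = gradient u x) (hDuc : ContinuousOn Du (closure Ω))
    (hD2u : ∃ H : EuclideanSpace ℝ (Fin 2) →
        EuclideanSpace ℝ (Fin 2) →L[ℝ] EuclideanSpace ℝ (Fin 2),
      ContinuousOn H (closure Ω) ∧ ∀ x ∈ Ω, H x = fderiv ℝ (gradient u) x)
    (hnc : ¬ ∃ c : ℝ, ∀ x ∈ Ω, u x = c)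
    (H₀ : ℝ) (heq : ∀ x ∈ Ω, meanCurv u x + H₀ = 0)
    (hbc : ∀ p ∈ frontier Ω, ∀ q ∈ connectedComponentIn (frontier Ω) p,
      u q = u p ∧ ⟪Du q, η q⟫ = ⟪Du p, η p⟫)
    (hbdd : BddBelow (u '' Ω))
    (hfc : IsConnected (frontier Ω))
    (v : EuclideanSpace ℝ (Fin 2)) (hv : ‖v‖ = 1)
    (hsign : (∀ p ∈ frontier Ω, 0 ≤ ⟪η p, v⟫) ∨ (∀ p ∈ frontier Ω, ⟪η p, v⟫ ≤ 0)) :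
    H₀ = 0 ∧ ∃ e : EuclideanSpace ℝ (Fin 2), ‖e‖ = 1 ∧ ∃ c α β : ℝ, α ≠ 0 ∧
      Ω = {x | c < ⟪x, e⟫} ∧ ∀ x ∈ Ω, u x = α * ⟪x, e⟫ + β := by
  obtain ⟨hne, hop, hcon, hch⟩ := hΩ
  have N : NormalTo Ω η := normalTo_of hop hch
  have hb : ∀ p ∈ frontier Ω, ∀ q ∈ frontier Ω, u q = u p ∧ ⟪Du q, η q⟫ = ⟪Du p, η p⟫ :=
    fun p hp q hq => hbc p hp q (hfc.isPreconnected.subset_connectedComponentIn hp le_rfl hq)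
  obtain ⟨z, hz⟩ := hfc.nonempty
  have key : H₀ = 0 ∧ ∃ A : EuclideanSpace ℝ (Fin 2), ∃ β : ℝ, ∀ x ∈ Ω, u x = ⟪x, A⟫ + β := by
    rcases hsign with h | h
    · exact main_affine N hcon hu2 hucl hDu hDuc heq hb hfc hv h
    · refine main_affine N hcon hu2 hucl hDu hDuc heq hb hfc (v := -v) (by rw [norm_neg, hv]) ?_
      intro p hp
      rw [inner_neg_right]
      linarith [h p hp]
  obtain ⟨h0, A, β, hA⟩ := key
  exact ⟨h0, main_halfplane N hne hucl hnc (fun p hp q hq => (hb p hp q hq).1) hz hA⟩
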